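/- Let n ≥ 3 and let Γ ⊂ ℝⁿ satisfy condition (C) with λ* = (1,−1,…,−1) ∉ closure(Γ) and −λ* = (−1,1,…,1) ∈ Γ. Let B be the open unit ball of ℝⁿ and let u be a positive continuous viscosity solution of λ(A^u) ∈ ∂Γ in B∖{0} satisfying u(x) = o(|x|^{2−n}) as x → 0. Then u can be extended to a positive locally Lipschitz function on B which is a viscosity solution of λ(A^u) ∈ ∂Γ in B. -/

import Mathlib

open Filter Topology MeasureTheory Metric Set
open scoped BigOperators ENNReal NNReal

noncomputable section

/-- `ℝⁿ` with the Euclidean norm. -/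
abbrev Euc (n : ℕ) := EuclideanSpace ℝ (Fin n)

/-- The positive cone `Γₙ = {λ : λᵢ > 0 ∀ i}`. -/
def GammaN (n : ℕ) : Set (Fin n → ℝ) := {lam | ∀ i, 0 < lam i}

/-- Condition (C): `Γ ⊊ ℝⁿ` is a nonempty open symmetric cone with vertex at the origin
satisfying `Γ + Γₙ ⊆ Γ`. -/
def CondC {n : ℕ} (Γ : Set (Fin n → ℝ)) : Prop :=
  Γ.Nonempty ∧ Γ ≠ Set.univ ∧ IsOpen Γ ∧
    (∀ σ : Equiv.Perm (Fin n), ∀ lam ∈ Γ, lam ∘ σ ∈ Γ) ∧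
    (∀ lam ∈ Γ, ∀ t : ℝ, 0 < t → t • lam ∈ Γ) ∧
    (∀ lam ∈ Γ, ∀ mu ∈ GammaN n, lam + mu ∈ Γ)

/-- `λ* = (1, -1, …, -1)`. -/
def lamStar (n : ℕ) : Fin n → ℝ := fun i => if i.val = 0 then 1 else -1

/-- Partial derivative `∂ᵢ v (x)`. -/
def pgrad {n : ℕ} (v : Euc n → ℝ) (x : Euc n) (i : Fin n) : ℝ :=
  fderiv ℝ v x (EuclideanSpace.single i 1)

/-- Second partial derivative `∂ᵢ∂ⱼ v (x)`. -/
def phess {n : ℕ} (v : Euc n → ℝ) (x : Euc n) (i j : Fin n) : ℝ :=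
  fderiv ℝ (fun y => fderiv ℝ v y (EuclideanSpace.single j 1)) x (EuclideanSpace.single i 1)

/-- The Möbius Hessian
`A[v](x) = e^{-2v(x)} (-∇²v + ∇v ⊗ ∇v - ½ |∇v|² I)` as a matrix. -/
def mobius {n : ℕ} (v : Euc n → ℝ) (x : Euc n) : Matrix (Fin n) (Fin n) ℝ :=
  Real.exp (-2 * v x) • Matrix.of fun i j =>
    - phess v x i j + pgrad v x i * pgrad v x j
      - (1 / 2) * (∑ k, (pgrad v x k) ^ 2) * (if i = j then (1 : ℝ) else 0)

/-- The (unordered, permutation-invariant) eigenvalue tuple of the symmetric matrix `M`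
belongs to the (permutation-invariant) set `S`. -/
def EigIn {n : ℕ} (M : Matrix (Fin n) (Fin n) ℝ) (S : Set (Fin n → ℝ)) : Prop :=
  ∃ hM : M.IsHermitian, hM.eigenvalues ∈ S

/-- Viscosity supersolution of `λ(A[v]) ∈ ∂Γ` in `Ω`, i.e. `λ(A[v]) ∈ closure Γ`
in the viscosity sense (for a real-valued `v`). -/
def Supersol {n : ℕ} (Γ : Set (Fin n → ℝ)) (Ω : Set (Euc n)) (v : Euc n → ℝ) : Prop :=
  ∀ x₀ ∈ Ω, ∀ φ : Euc n → ℝ, ContDiff ℝ 2 φ → φ x₀ = v x₀ →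
    (∀ᶠ x in 𝓝[Ω] x₀, φ x ≤ v x) → EigIn (mobius φ x₀) (closure Γ)

/-- Viscosity subsolution of `λ(A[v]) ∈ ∂Γ` in `Ω`, i.e. `λ(A[v]) ∈ ℝⁿ ∖ Γ`
in the viscosity sense (for a real-valued `v`). -/
def Subsol {n : ℕ} (Γ : Set (Fin n → ℝ)) (Ω : Set (Euc n)) (v : Euc n → ℝ) : Prop :=
  ∀ x₀ ∈ Ω, ∀ φ : Euc n → ℝ, ContDiff ℝ 2 φ → φ x₀ = v x₀ →
    (∀ᶠ x in 𝓝[Ω] x₀, v x ≤ φ x) → EigIn (mobius φ x₀) Γᶜ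


/-- The conformal Hessian `A^u(x)` of a positive function `u`, for `n ≥ 3`:
`A^u = -(2/(n-2)) u^{-(n+2)/(n-2)} ∇²u + (2n/(n-2)²) u^{-2n/(n-2)} ∇u⊗∇u
       - (2/(n-2)²) u^{-2n/(n-2)} |∇u|² I`. -/
def confHess {n : ℕ} (u : Euc n → ℝ) (x : Euc n) : Matrix (Fin n) (Fin n) ℝ :=
  Matrix.of fun i j =>
    -(2 / ((n : ℝ) - 2)) * (u x) ^ (-(((n : ℝ) + 2) / ((n : ℝ) - 2))) * phess u x i j
    + (2 * (n : ℝ) / ((n : ℝ) - 2) ^ 2) * (u x) ^ (-(2 * (n : ℝ) / ((n : ℝ) - 2))) *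
        pgrad u x i * pgrad u x j
    - (2 / ((n : ℝ) - 2) ^ 2) * (u x) ^ (-(2 * (n : ℝ) / ((n : ℝ) - 2))) *
        (∑ k, (pgrad u x k) ^ 2) * (if i = j then (1 : ℝ) else 0)

/-- Viscosity supersolution property of `λ(A^u) ∈ ∂Γ` for a positive `u`,
tested with positive `C²` functions. -/
def SupersolU {n : ℕ} (Γ : Set (Fin n → ℝ)) (Ω : Set (Euc n)) (u : Euc n → ℝ) : Prop :=
  ∀ x₀ ∈ Ω, ∀ φ : Euc n → ℝ, ContDiff ℝ 2 φ → (∀ x, 0 < φ x) → φ x₀ = u x₀ →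
    (∀ᶠ x in 𝓝[Ω] x₀, φ x ≤ u x) → EigIn (confHess φ x₀) (closure Γ)

/-- Viscosity subsolution property of `λ(A^u) ∈ ∂Γ` for a positive `u`,
tested with positive `C²` functions. -/
def SubsolU {n : ℕ} (Γ : Set (Fin n → ℝ)) (Ω : Set (Euc n)) (u : Euc n → ℝ) : Prop :=
  ∀ x₀ ∈ Ω, ∀ φ : Euc n → ℝ, ContDiff ℝ 2 φ → (∀ x, 0 < φ x) → φ x₀ = u x₀ →
    (∀ᶠ x in 𝓝[Ω] x₀, u x ≤ φ x) → EigIn (confHess φ x₀) Γᶜ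


section Helpers
open scoped InnerProductSpace

/-- Coordinate-free version of `EigIn`. -/
def EigL {n : ℕ} (T : Euc n →L[ℝ] Euc n) (S : Set (Fin n → ℝ)) : Prop :=
  ∃ b : OrthonormalBasis (Fin n) ℝ (Euc n), ∃ d ∈ S, ∀ i, T (b i) = d i • b i

theorem inner_diag {n : ℕ} {T : Euc n →L[ℝ] Euc n} {b : OrthonormalBasis (Fin n) ℝ (Euc n)}
    {d : Fin n → ℝ} (h : ∀ i, T (b i) = d i • b i) (x : Euc n) :
    ⟪T x, x⟫_ℝ = ∑ i, d i * ⟪b i, x⟫_ℝ ^ 2 := by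
  have hx : T x = ∑ i, ⟪b i, x⟫_ℝ • (d i • b i) := by
    conv_lhs => rw [← b.sum_repr' x]
    simp [map_sum, h]
  rw [hx, sum_inner]
  refine Finset.sum_congr rfl fun i _ => ?_
  rw [inner_smul_left, inner_smul_left]
  simp; ring

theorem norm_sq_diag {n : ℕ} (b : OrthonormalBasis (Fin n) ℝ (Euc n)) (x : Euc n) :
    ‖x‖ ^ 2 = ∑ i, ⟪b i, x⟫_ℝ ^ 2 := by
  rw [← b.sum_sq_norm_inner_right x]
  simp

/-- Sorted eigenvalues are monotone in the operator. -/
theorem eig_le_sorted {n : ℕ} {T T' : Euc n →L[ℝ] Euc n}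
    {b b' : OrthonormalBasis (Fin n) ℝ (Euc n)} {d d' : Fin n → ℝ}
    (h : ∀ i, T (b i) = d i • b i) (h' : ∀ i, T' (b' i) = d' i • b' i)
    (hle : ∀ x, ⟪T x, x⟫_ℝ ≤ ⟪T' x, x⟫_ℝ) (k : Fin n) :
    d (Tuple.sort d k) ≤ d' (Tuple.sort d' k) := by
  set c := b.reindex (Tuple.sort d).symm with hc
  set c' := b'.reindex (Tuple.sort d').symm with hc'
  have e : ∀ i, T (c i) = (d ∘ Tuple.sort d) i • c i := by intro i; simp [hc, h]
  have e' : ∀ i, T' (c' i) = (d' ∘ Tuple.sort d') i • c' i := by intro i; simp [hc', h']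
  have m := Tuple.monotone_sort d
  have m' := Tuple.monotone_sort d'
  change (d ∘ Tuple.sort d) k ≤ (d' ∘ Tuple.sort d') k
  generalize d ∘ Tuple.sort d = D at *
  generalize d' ∘ Tuple.sort d' = D' at *
  let L : Euc n →ₗ[ℝ] (Fin n → ℝ) :=
    LinearMap.pi fun i => if i < k then (innerSL ℝ (c i)).toLinearMap
      else if k < i then (innerSL ℝ (c' i)).toLinearMap else 0
  have hns : ¬ Function.Surjective L := by
    intro hs
    obtain ⟨x, hx⟩ := hs (Pi.single k 1)
    have := congrFun hx k
    simp [L] at this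
  have hni : ¬ Function.Injective L := by
    intro hi
    apply hns
    exact (LinearMap.injective_iff_surjective_of_finrank_eq_finrank (by simp)).1 hi
  have hk : ∃ x, L x = 0 ∧ x ≠ 0 := by
    by_contra hcon
    push Not at hcon
    exact hni ((injective_iff_map_eq_zero L).2 hcon)
  obtain ⟨x, hx0, hxne⟩ := hk
  have h1 : ∀ i, i < k → ⟪c i, x⟫_ℝ = 0 := by
    intro i hi
    have := congrFun hx0 i
    simpa [L, hi] using this
  have h2 : ∀ i, k < i → ⟪c' i, x⟫_ℝ = 0 := by
    intro i hi
    have := congrFun hx0 i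
    simpa [L, hi, not_lt.2 hi.le] using this
  have a1 : D k * ‖x‖ ^ 2 ≤ ⟪T x, x⟫_ℝ := by
    rw [inner_diag e, norm_sq_diag c, Finset.mul_sum]
    refine Finset.sum_le_sum fun i _ => ?_
    rcases lt_or_ge i k with hi | hi
    · simp [h1 i hi]
    · exact mul_le_mul_of_nonneg_right (m hi) (sq_nonneg _)
  have a2 : ⟪T' x, x⟫_ℝ ≤ D' k * ‖x‖ ^ 2 := by
    rw [inner_diag e', norm_sq_diag c', Finset.mul_sum]
    refine Finset.sum_le_sum fun i _ => ?_
    rcases lt_or_ge k i with hi | hi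
    · simp [h2 i hi]
    · exact mul_le_mul_of_nonneg_right (m' hi) (sq_nonneg _)
  have : 0 < ‖x‖ ^ 2 := by positivity
  exact le_of_mul_le_mul_right (a1.trans ((hle x).trans a2)) this

theorem eig_le {n : ℕ} {T T' : Euc n →L[ℝ] Euc n}
    {b b' : OrthonormalBasis (Fin n) ℝ (Euc n)} {d d' : Fin n → ℝ}
    (h : ∀ i, T (b i) = d i • b i) (h' : ∀ i, T' (b' i) = d' i • b' i)
    (hle : ∀ x, ⟪T x, x⟫_ℝ ≤ ⟪T' x, x⟫_ℝ) :
    ∃ σ : Equiv.Perm (Fin n), ∀ i, (d ∘ σ) i ≤ d' i := by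
  refine ⟨(Tuple.sort d').symm.trans (Tuple.sort d), fun i => ?_⟩
  have := eig_le_sorted h h' hle ((Tuple.sort d').symm i)
  simpa using this

theorem eig_unique {n : ℕ} {T : Euc n →L[ℝ] Euc n}
    {b b' : OrthonormalBasis (Fin n) ℝ (Euc n)} {d d' : Fin n → ℝ}
    (h : ∀ i, T (b i) = d i • b i) (h' : ∀ i, T (b' i) = d' i • b' i) :
    ∃ σ : Equiv.Perm (Fin n), d ∘ σ = d' := by
  refine ⟨(Tuple.sort d').symm.trans (Tuple.sort d), ?_⟩
  funext i
  have h1 := eig_le_sorted h h' (fun x => le_rfl) ((Tuple.sort d').symm i)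
  have h2 := eig_le_sorted h' h (fun x => le_rfl) ((Tuple.sort d').symm i)
  apply le_antisymm
  · simpa using h1
  · simpa using h2

def SymmSet {n : ℕ} (S : Set (Fin n → ℝ)) : Prop :=
  ∀ σ : Equiv.Perm (Fin n), ∀ lam ∈ S, lam ∘ σ ∈ S

def SymT {n : ℕ} (T : Euc n →L[ℝ] Euc n) : Prop := ∀ x y, ⟪T x, y⟫_ℝ = ⟪x, T y⟫_ℝ

theorem SymT.exists_eig {n : ℕ} {T : Euc n →L[ℝ] Euc n} (hT : SymT T) :
    ∃ b : OrthonormalBasis (Fin n) ℝ (Euc n), ∃ d : Fin n → ℝ, ∀ i, T (b i) = d i • b i := by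
  have hs : (T : Euc n →ₗ[ℝ] Euc n).IsSymmetric := fun x y => hT x y
  refine ⟨hs.eigenvectorBasis (by simp), hs.eigenvalues (by simp), fun i => ?_⟩
  have := hs.apply_eigenvectorBasis (n := n) (by simp) i
  exact this

theorem EigL.mono {n : ℕ} {T T' : Euc n →L[ℝ] Euc n} {S S' : Set (Fin n → ℝ)}
    (hS : SymmSet S) (hT' : SymT T') (hle : ∀ x, ⟪T x, x⟫_ℝ ≤ ⟪T' x, x⟫_ℝ)
    (hup : ∀ d ∈ S, ∀ d', (∀ i, d i ≤ d' i) → d' ∈ S') (h : EigL T S) : EigL T' S' := by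
  obtain ⟨b, d, hd, hb⟩ := h
  obtain ⟨b', d', hb'⟩ := hT'.exists_eig
  obtain ⟨σ, hσ⟩ := eig_le hb hb' hle
  exact ⟨b', d', hup _ (hS σ d hd) d' hσ, hb'⟩

theorem EigL.not_compl {n : ℕ} {T : Euc n →L[ℝ] Euc n} {S : Set (Fin n → ℝ)}
    (hS : SymmSet S) (h : EigL T S) : ¬ EigL T Sᶜ := by
  rintro ⟨b', d', hd', hb'⟩
  obtain ⟨b, d, hd, hb⟩ := h
  obtain ⟨σ, hσ⟩ := eig_unique hb hb'
  exact hd' (hσ ▸ hS σ d hd)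

theorem EigL.compl_of_not {n : ℕ} {T : Euc n →L[ℝ] Euc n} {S : Set (Fin n → ℝ)}
    (hT : SymT T) (h : ¬ EigL T S) : EigL T Sᶜ := by
  obtain ⟨b, d, hb⟩ := hT.exists_eig
  exact ⟨b, d, fun hd => h ⟨b, d, hd, hb⟩, hb⟩

theorem eigIn_iff {n : ℕ} {M : Matrix (Fin n) (Fin n) ℝ} {S : Set (Fin n → ℝ)}
    (hS : SymmSet S) (hM : M.IsHermitian) :
    EigIn M S ↔ EigL (Matrix.toEuclideanCLM (𝕜 := ℝ) M) S := by
  have key : ∀ i, Matrix.toEuclideanCLM (𝕜 := ℝ) M (hM.eigenvectorBasis i)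
      = hM.eigenvalues i • hM.eigenvectorBasis i := by
    intro i
    have := hM.mulVec_eigenvectorBasis i
    ext j
    have := congrFun this j
    simpa [Matrix.ofLp_toEuclideanCLM] using this
  constructor
  · rintro ⟨_, h⟩
    exact ⟨hM.eigenvectorBasis, hM.eigenvalues, h, key⟩
  · rintro ⟨b, d, hd, hb⟩
    obtain ⟨σ, hσ⟩ := eig_unique hb key
    exact ⟨hM, hσ ▸ hS σ d hd⟩

/-! ### Facts about the cone -/

theorem CondC.symmSet {n : ℕ} {Γ : Set (Fin n → ℝ)} (h : CondC Γ) : SymmSet Γ := h.2.2.2.1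

theorem SymmSet.compl {n : ℕ} {S : Set (Fin n → ℝ)} (h : SymmSet S) : SymmSet Sᶜ := by
  intro σ d hd hc
  apply hd
  have := h σ⁻¹ _ hc
  convert this using 1
  funext i; simp

theorem SymmSet.closure {n : ℕ} {S : Set (Fin n → ℝ)} (h : SymmSet S) : SymmSet (closure S) := by
  intro σ d hd
  have hc : Continuous (fun d : Fin n → ℝ => d ∘ σ) := by
    refine continuous_pi fun i => continuous_apply (σ i)
  exact map_mem_closure (f := fun d : Fin n → ℝ => d ∘ σ) hc hd (fun x hx => h σ x hx)

theorem CondC.closure_add {n : ℕ} {Γ : Set (Fin n → ℝ)} (h : CondC Γ) {d d' : Fin n → ℝ}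
    (hd : d ∈ closure Γ) (hlt : ∀ i, d i < d' i) : d' ∈ Γ := by
  have ho : {e : Fin n → ℝ | ∀ i, e i < d' i} ∈ 𝓝 d := by
    have : IsOpen {e : Fin n → ℝ | ∀ i, e i < d' i} := by
      simp only [ofPred_forall]
      exact isOpen_iInter_of_finite fun i => isOpen_lt (continuous_apply i) continuous_const
    exact this.mem_nhds hlt
  obtain ⟨e, he, heΓ⟩ := mem_closure_iff_nhds.1 hd _ ho
  have := h.2.2.2.2.2 e heΓ (d' - e) (fun i => by simpa using he i)
  simpa using this

theorem CondC.add_nonneg {n : ℕ} {Γ : Set (Fin n → ℝ)} (h : CondC Γ) {d d' : Fin n → ℝ}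
    (hd : d ∈ Γ) (hle : ∀ i, d i ≤ d' i) : d' ∈ Γ := by
  have hc : Continuous (fun t : ℝ => fun i => d i - t) := by fun_prop
  have : ∀ᶠ t in 𝓝 (0 : ℝ), (fun i => d i - t) ∈ Γ := by
    apply hc.continuousAt.eventually_mem
    simpa using h.2.2.1.mem_nhds hd
  obtain ⟨t, ht, htΓ⟩ := ((this.filter_mono nhdsWithin_le_nhds).and
    (self_mem_nhdsWithin : Ioi (0 : ℝ) ∈ 𝓝[>] 0)).exists
  exact h.closure_add (subset_closure ht) fun i => by
    have : (0 : ℝ) < t := htΓ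
    linarith [hle i]

theorem CondC.closure_add_nonneg {n : ℕ} {Γ : Set (Fin n → ℝ)} (h : CondC Γ) {d d' : Fin n → ℝ}
    (hd : d ∈ closure Γ) (hle : ∀ i, d i ≤ d' i) : d' ∈ closure Γ := by
  have hc : Continuous (fun t : ℝ => fun i => d' i + t) := by fun_prop
  have h0 : Tendsto (fun t : ℝ => fun i => d' i + t) (𝓝[>] 0) (𝓝 d') := by
    have := (hc.tendsto 0).mono_left (nhdsWithin_le_nhds (s := Ioi 0))
    simpa using this
  refine mem_closure_of_tendsto h0 ?_
  filter_upwards [self_mem_nhdsWithin] with t ht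
  exact h.closure_add hd fun i => by
    have : (0 : ℝ) < t := ht
    linarith [hle i]

theorem CondC.closure_smul {n : ℕ} {Γ : Set (Fin n → ℝ)} (h : CondC Γ) {d : Fin n → ℝ}
    (hd : d ∈ closure Γ) {t : ℝ} (ht : 0 < t) : t • d ∈ closure Γ :=
  map_mem_closure (continuous_const_smul t) hd (fun x hx => h.2.2.2.2.1 x hx t ht)

theorem EigL.smul {n : ℕ} {T : Euc n →L[ℝ] Euc n} {S : Set (Fin n → ℝ)} {t : ℝ}
    (hS : ∀ d ∈ S, t • d ∈ S) (h : EigL T S) : EigL (t • T) S := by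
  obtain ⟨b, d, hd, hb⟩ := h
  exact ⟨b, t • d, hS d hd, fun i => by simp [hb, smul_smul]⟩

theorem CondC.compl_smul {n : ℕ} {Γ : Set (Fin n → ℝ)} (h : CondC Γ) {d : Fin n → ℝ}
    (hd : d ∈ Γᶜ) {t : ℝ} (ht : 0 < t) : t • d ∈ Γᶜ := by
  intro hc
  apply hd
  have := h.2.2.2.2.1 _ hc t⁻¹ (inv_pos.2 ht)
  simpa [smul_smul, ht.ne'] using this

theorem EigL.smul_closure {n : ℕ} {Γ : Set (Fin n → ℝ)} (hΓ : CondC Γ) {T : Euc n →L[ℝ] Euc n}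
    {t : ℝ} (ht : 0 < t) (h : EigL T (closure Γ)) : EigL (t • T) (closure Γ) :=
  h.smul fun _ hd => hΓ.closure_smul hd ht

theorem EigL.smul_compl {n : ℕ} {Γ : Set (Fin n → ℝ)} (hΓ : CondC Γ) {T : Euc n →L[ℝ] Euc n}
    {t : ℝ} (ht : 0 < t) (h : EigL T Γᶜ) : EigL (t • T) Γᶜ :=
  h.smul fun _ hd => hΓ.compl_smul hd ht

/-- monotonicity in the closure. -/
theorem EigL.mono_closure {n : ℕ} {Γ : Set (Fin n → ℝ)} (hΓ : CondC Γ) {T T' : Euc n →L[ℝ] Euc n}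
    (hT' : SymT T') (hle : ∀ x, ⟪T x, x⟫_ℝ ≤ ⟪T' x, x⟫_ℝ) (h : EigL T (closure Γ)) :
    EigL T' (closure Γ) :=
  h.mono hΓ.symmSet.closure hT' hle fun _ hd _ hdd => hΓ.closure_add_nonneg hd hdd

theorem EigL.mono_open {n : ℕ} {Γ : Set (Fin n → ℝ)} (hΓ : CondC Γ) {T T' : Euc n →L[ℝ] Euc n}
    (hT' : SymT T') (hle : ∀ x, ⟪T x, x⟫_ℝ ≤ ⟪T' x, x⟫_ℝ) (h : EigL T Γ) :
    EigL T' Γ :=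
  h.mono hΓ.symmSet hT' hle fun _ hd _ hdd => hΓ.add_nonneg hd hdd

theorem EigL.add_id {n : ℕ} {T : Euc n →L[ℝ] Euc n} {S S' : Set (Fin n → ℝ)} {t : ℝ}
    (hS : ∀ d ∈ S, (fun i => d i + t) ∈ S') (h : EigL T S) :
    EigL (T + t • ContinuousLinearMap.id ℝ (Euc n)) S' := by
  obtain ⟨b, d, hd, hb⟩ := h
  exact ⟨b, fun i => d i + t, hS d hd, fun i => by simp [hb, add_smul]⟩

theorem SymT.add {n : ℕ} {T T' : Euc n →L[ℝ] Euc n} (h : SymT T) (h' : SymT T') :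
    SymT (T + T') := fun x y => by
  simp [inner_add_left, inner_add_right, h x y, h' x y]

theorem SymT.smul {n : ℕ} {T : Euc n →L[ℝ] Euc n} (h : SymT T) (t : ℝ) : SymT (t • T) :=
  fun x y => by simp [inner_smul_left, inner_smul_right, h x y]

theorem SymT.id {n : ℕ} : SymT (ContinuousLinearMap.id ℝ (Euc n)) := fun x y => by simp

theorem SymT.neg {n : ℕ} {T : Euc n →L[ℝ] Euc n} (h : SymT T) : SymT (-T) :=
  fun x y => by simp [h x y]

theorem SymT.sub {n : ℕ} {T T' : Euc n →L[ℝ] Euc n} (h : SymT T) (h' : SymT T') :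
    SymT (T - T') := by rw [sub_eq_add_neg]; exact h.add h'.neg

/-- If `T'` lies strictly above `T ∈ closure Γ`, then `T' ∈ Γ`. -/
theorem EigL.mono_strict {n : ℕ} {Γ : Set (Fin n → ℝ)} (hΓ : CondC Γ) {T T' : Euc n →L[ℝ] Euc n}
    (hT' : SymT T') {t : ℝ} (ht : 0 < t)
    (hle : ∀ x, ⟪T x, x⟫_ℝ + t * ‖x‖ ^ 2 ≤ ⟪T' x, x⟫_ℝ)
    (h : EigL T (closure Γ)) : EigL T' Γ := by
  have h1 : EigL (T + t • ContinuousLinearMap.id ℝ (Euc n)) Γ :=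
    h.add_id fun d hd => hΓ.closure_add hd fun i => by linarith
  refine h1.mono_open hΓ hT' fun x => ?_
  have := hle x
  simpa [inner_add_left, inner_smul_left] using this

theorem EigL.closed_closure {n : ℕ} {Γ : Set (Fin n → ℝ)} (hΓ : CondC Γ) {T : Euc n →L[ℝ] Euc n}
    (hT : SymT T)
    (h : ∀ t : ℝ, 0 < t → EigL (T + t • ContinuousLinearMap.id ℝ (Euc n)) (closure Γ)) :
    EigL T (closure Γ) := by
  obtain ⟨b, d, hb⟩ := hT.exists_eig
  refine ⟨b, d, ?_, hb⟩
  have h1 : ∀ t > (0 : ℝ), (fun i => d i + t) ∈ closure Γ := by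
    intro t ht
    obtain ⟨b', d', hd', hb'⟩ := h t ht
    have hb2 : ∀ i, (T + t • ContinuousLinearMap.id ℝ (Euc n)) (b i) = (d i + t) • b i :=
      fun i => by simp [hb, add_smul]
    obtain ⟨σ, hσ⟩ := eig_unique hb' (d' := fun i => d i + t) hb2
    exact hσ ▸ hΓ.symmSet.closure σ d' hd'
  have hc : Continuous (fun t : ℝ => fun i => d i + t) := by fun_prop
  have h0 : Tendsto (fun t : ℝ => fun i => d i + t) (𝓝[>] 0) (𝓝 d) := by
    have := (hc.tendsto 0).mono_left (nhdsWithin_le_nhds (s := Ioi 0))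
    simpa using this
  refine isClosed_closure.mem_of_tendsto h0 ?_
  filter_upwards [self_mem_nhdsWithin] with t ht using h1 t ht

theorem EigL.closed_compl {n : ℕ} {Γ : Set (Fin n → ℝ)} (hΓ : CondC Γ) {T : Euc n →L[ℝ] Euc n}
    (hT : SymT T)
    (h : ∀ t : ℝ, 0 < t → EigL (T - t • ContinuousLinearMap.id ℝ (Euc n)) Γᶜ) :
    EigL T Γᶜ := by
  obtain ⟨b, d, hb⟩ := hT.exists_eig
  refine ⟨b, d, ?_, hb⟩
  have h1 : ∀ t > (0 : ℝ), (fun i => d i - t) ∈ Γᶜ := by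
    intro t ht
    obtain ⟨b', d', hd', hb'⟩ := h t ht
    have hb2 : ∀ i, (T - t • ContinuousLinearMap.id ℝ (Euc n)) (b i) = (d i - t) • b i :=
      fun i => by simp [hb, sub_smul]
    obtain ⟨σ, hσ⟩ := eig_unique hb' (d' := fun i => d i - t) hb2
    exact hσ ▸ hΓ.symmSet.compl σ d' hd'
  have hc : Continuous (fun t : ℝ => fun i => d i - t) := by fun_prop
  have h0 : Tendsto (fun t : ℝ => fun i => d i - t) (𝓝[>] 0) (𝓝 d) := by
    have := (hc.tendsto 0).mono_left (nhdsWithin_le_nhds (s := Ioi 0))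
    simpa using this
  refine hΓ.2.2.1.isClosed_compl.mem_of_tendsto h0 ?_
  filter_upwards [self_mem_nhdsWithin] with t ht using h1 t ht

/-- rank one operator `p ⊗ p`. -/
def rk {n : ℕ} (p : Euc n) : Euc n →L[ℝ] Euc n := (innerSL ℝ p).smulRight p

@[simp] theorem rk_apply {n : ℕ} (p x : Euc n) : rk p x = ⟪p, x⟫_ℝ • p := by
  simp [rk]

theorem SymT.rk {n : ℕ} (p : Euc n) : SymT (rk p) := fun x y => by
  simp [inner_smul_left, inner_smul_right, real_inner_comm]; ring

/-- Eigenvalues of `α I + β θ⊗θ`. -/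
theorem eigL_rk {n : ℕ} (hn : 0 < n) {θ : Euc n} (hθ : ‖θ‖ = 1) (α β : ℝ) {S : Set (Fin n → ℝ)}
    (hS : (fun i : Fin n => if i.val = 0 then α + β else α) ∈ S) :
    EigL (α • ContinuousLinearMap.id ℝ (Euc n) + β • rk θ) S := by
  have : Orthonormal ℝ (({⟨0, hn⟩} : Set (Fin n)).domRestrict (fun _ : Fin n => θ)) := by
    constructor
    · intro i; exact hθ
    · intro i j hij; exact absurd (Subsingleton.elim i j) hij
  obtain ⟨b, hb⟩ := this.exists_orthonormalBasis_extension_of_card_eq (by simp)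
  have hb0 : b ⟨0, hn⟩ = θ := hb _ (by simp)
  refine ⟨b, _, hS, fun i => ?_⟩
  by_cases hi : i.val = 0
  · have : i = ⟨0, hn⟩ := Fin.ext hi
    subst this
    simp [hb0, hθ, add_smul]
  · have h0 : ⟪θ, b i⟫_ℝ = 0 := by
      rw [← hb0]
      refine b.orthonormal.2 ?_
      intro hc; apply hi; rw [← hc]
    simp [hi, h0]

/-- conjugation by an involutive isometry. -/
theorem EigL.conj {n : ℕ} {T : Euc n →L[ℝ] Euc n} {S : Set (Fin n → ℝ)}
    (R : Euc n ≃ₗᵢ[ℝ] Euc n) {T' : Euc n →L[ℝ] Euc n} (hT' : ∀ x, T' (R x) = R (T x))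
    (h : EigL T S) : EigL T' S := by
  obtain ⟨b, d, hd, hb⟩ := h
  exact ⟨b.map R, d, hd, fun i => by simp [hT', hb]⟩

/-! ### Alexandrov's theorem -/

def HasSub {n : ℕ} (f : Euc n → ℝ) (z s : Euc n) : Prop := ∀ y, f z + ⟪s, y - z⟫_ℝ ≤ f y

theorem HasSub.mono {n : ℕ} {f : Euc n → ℝ} {z s z' s' : Euc n} (h : HasSub f z s)
    (h' : HasSub f z' s') : 0 ≤ ⟪s' - s, z' - z⟫_ℝ := by
  have h1 := h z'
  have h2 := h' z
  have e : ⟪s', z - z'⟫_ℝ = - ⟪s', z' - z⟫_ℝ := by rw [← inner_neg_right, neg_sub]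
  rw [inner_sub_left]; linarith

theorem hasSub_lipschitz {n : ℕ} {f : Euc n → ℝ} {M : ℝ≥0}
    (h : ∀ z, ∃ s, ‖s‖ ≤ M ∧ HasSub f z s) : LipschitzWith M f := by
  refine LipschitzWith.of_le_add_mul M fun x y => ?_
  obtain ⟨s, hs, hf⟩ := h x
  have := hf y
  have h1 : -⟪s, y - x⟫_ℝ ≤ M * dist x y := by
    have h2 := abs_real_inner_le_norm s (y - x)
    rw [dist_comm, dist_eq_norm]
    calc _ ≤ |⟪s, y - x⟫_ℝ| := neg_le_abs _
      _ ≤ _ := h2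
      _ ≤ _ := by gcongr
  linarith

/-- almost-telescoping lemma -/
theorem chain_le {g : ℝ → ℝ} {A C : ℝ} (hC : 0 ≤ C)
    (h : ∀ a b, 0 ≤ a → a ≤ b → b ≤ 1 → |g b - g a| ≤ A * (b - a) + C * (b - a) ^ 2) :
    |g 1 - g 0| ≤ A := by
  have key : ∀ N : ℕ, |g 1 - g 0| ≤ A + C * (1 / ((N : ℝ) + 1)) := by
    intro N
    have hN : (0 : ℝ) < (N : ℝ) + 1 := by positivity
    have hs : ∑ i ∈ Finset.range (N + 1),
        (g (((i + 1 : ℕ) : ℝ) / (N + 1)) - g ((i : ℝ) / (N + 1))) = g 1 - g 0 := by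
      rw [Finset.sum_range_sub (fun i : ℕ => g ((i : ℝ) / (N + 1)))]
      push_cast
      rw [div_self hN.ne', zero_div]
    rw [← hs]
    refine (Finset.abs_sum_le_sum_abs _ _).trans ?_
    have : ∀ i ∈ Finset.range (N + 1),
        |g (((i + 1 : ℕ) : ℝ) / (N + 1)) - g ((i : ℝ) / (N + 1))|
          ≤ A * (1 / ((N : ℝ) + 1)) + C * (1 / ((N : ℝ) + 1)) ^ 2 := by
      intro i hi
      have hi' : ((i : ℝ) + 1) ≤ N + 1 := by
        have := Finset.mem_range.1 hi
        exact_mod_cast this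
      have := h ((i : ℝ) / (N + 1)) (((i + 1 : ℕ) : ℝ) / (N + 1)) (by positivity)
        (by gcongr; simp) (by rw [div_le_one hN]; push_cast; exact hi')
      have e : ((i + 1 : ℕ) : ℝ) / (N + 1) - (i : ℝ) / (N + 1) = 1 / ((N : ℝ) + 1) := by
        push_cast; ring
      rwa [e] at this
    refine (Finset.sum_le_sum this).trans (le_of_eq ?_)
    simp only [Finset.sum_const, Finset.card_range, nsmul_eq_mul]
    push_cast
    field_simp
  have ht : Tendsto (fun N : ℕ => A + C * (1 / ((N : ℝ) + 1))) atTop (𝓝 (A + C * 0)) :=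
    (tendsto_one_div_add_atTop_nhds_zero_nat.const_mul C).const_add A
  have := ge_of_tendsto' ht key
  simpa using this

theorem sel_continuousAt {n : ℕ} {f : Euc n → ℝ} {sel : Euc n → Euc n}
    (hsel : ∀ z, HasSub f z (sel z)) {z : Euc n} (hz : DifferentiableAt ℝ f z) :
    (∀ s, HasSub f z s → s = sel z) ∧ ContinuousAt sel z := by
  obtain ⟨f', hf'⟩ := hz
  set g := (InnerProductSpace.toDual ℝ (Euc n)).symm f' with hg
  have hgi : ∀ v, f' v = ⟪g, v⟫_ℝ := fun v => by simp [hg]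
  have hO := hf'.isLittleO
  have key : ∀ η > 0, ∃ r > 0, ∀ z', ‖z' - z‖ < r → z' ≠ z → ∀ s', HasSub f z' s' →
      HasSub f z g → ‖s' - g‖ ≤ 2 * η := by
    intro η hη
    obtain ⟨r, hr, hb⟩ := Metric.eventually_nhds_iff.1 (hO.def hη)
    refine ⟨r / 2, by positivity, fun z' hz' hne s' hs' hg' => ?_⟩
    by_cases hv : s' - g = 0
    · rw [hv]; simp; positivity
    set v := s' - g with hvd
    have hvn : 0 < ‖v‖ := norm_pos_iff.2 hv
    set t := ‖z' - z‖ with ht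
    have htp : 0 < t := norm_pos_iff.2 (sub_ne_zero.2 hne)
    set y := z' + (t / ‖v‖) • v with hy
    have hyz : ‖y - z'‖ = t := by
      simp [hy, norm_smul, abs_of_pos htp, hvn.ne']
    have hyz2 : ‖y - z‖ ≤ 2 * t := by
      calc ‖y - z‖ = ‖(y - z') + (z' - z)‖ := by congr 1; abel
        _ ≤ _ := norm_add_le _ _
        _ = 2 * t := by rw [hyz]; ring
    have h1 := hs' y
    have h2 := hb (y := y) (by rw [dist_eq_norm]; linarith)
    have h3 := hg' z'
    rw [hgi, Real.norm_eq_abs] at h2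
    have h2' := (abs_le.1 h2).2
    have h4 : ⟪v, y - z'⟫_ℝ = t * ‖v‖ := by
      simp only [hy, add_sub_cancel_left, inner_smul_right, real_inner_self_eq_norm_sq]
      field_simp
    have h5 : ⟪v, y - z'⟫_ℝ = ⟪s', y - z'⟫_ℝ - ⟪g, y - z⟫_ℝ + ⟪g, z' - z⟫_ℝ := by
      rw [hvd, inner_sub_left]
      have : y - z' = (y - z) - (z' - z) := by abel
      rw [this, inner_sub_right g]; ring
    have h6 : η * ‖y - z‖ ≤ η * (2 * t) := by gcongr
    have : t * ‖v‖ ≤ t * (2 * η) := by nlinarith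
    exact le_of_mul_le_mul_left this htp
  have uniq : ∀ s, HasSub f z s → s = g := by
    intro s hs
    by_contra hne
    have hv : 0 < ‖s - g‖ := norm_pos_iff.2 (sub_ne_zero.2 hne)
    obtain ⟨r, hr, hb⟩ := Metric.eventually_nhds_iff.1 (hO.def (half_pos hv))
    have hvv : s - g ≠ 0 := norm_pos_iff.1 hv
    set y := z + (r / 2 / ‖s - g‖) • (s - g) with hy
    have hyz : ‖y - z‖ = r / 2 := by
      simp [hy, norm_smul, abs_of_pos hr, hv.ne']
    have h2 := hb (y := y) (by rw [dist_eq_norm]; linarith)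
    rw [hgi, Real.norm_eq_abs] at h2
    have h2' := (abs_le.1 h2).2
    have h1 := hs y
    have h4 : ⟪s - g, y - z⟫_ℝ = r / 2 * ‖s - g‖ := by
      simp only [hy, add_sub_cancel_left, inner_smul_right, real_inner_self_eq_norm_sq]
      field_simp
    rw [inner_sub_left] at h4
    rw [hyz] at h2'
    nlinarith
  have hgz : sel z = g := uniq _ (hsel z)
  refine ⟨fun s hs => (uniq s hs).trans hgz.symm, ?_⟩
  rw [Metric.continuousAt_iff]
  intro ε hε
  obtain ⟨r, hr, hb⟩ := key (ε / 4) (by positivity)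
  refine ⟨r, hr, fun {z'} hz' => ?_⟩
  by_cases hne : z' = z
  · rw [hne]; simpa
  have := hb z' (by rwa [← dist_eq_norm]) hne (sel z') (hsel z') (hgz ▸ hsel z)
  rw [hgz, dist_eq_norm]
  linarith

theorem expansion_of_sel {n : ℕ} {f : Euc n → ℝ} {sel : Euc n → Euc n}
    (hsel : ∀ z, HasSub f z (sel z)) {z : Euc n} {H : Euc n →L[ℝ] Euc n}
    (hH : HasFDerivAt sel H z) {η : ℝ} (hη : 0 < η) :
    ∀ᶠ y in 𝓝 z, |f y - f z - ⟪sel z, y - z⟫_ℝ - 1 / 2 * ⟪H (y - z), y - z⟫_ℝ|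
      ≤ η * ‖y - z‖ ^ 2 := by
  obtain ⟨r, hr, hb⟩ := Metric.eventually_nhds_iff.1 (hH.isLittleO.def hη)
  refine Metric.eventually_nhds_iff.2 ⟨r, hr, fun y hy => ?_⟩
  set v := y - z with hv
  have hvr : ‖v‖ < r := by rwa [hv, ← dist_eq_norm]
  set g : ℝ → ℝ := fun t => f (z + t • v) - t * ⟪sel z, v⟫_ℝ - t ^ 2 / 2 * ⟪H v, v⟫_ℝ with hg
  have hxe : ∀ t : ℝ, 0 ≤ t → t ≤ 1 →
      |⟪sel (z + t • v), v⟫_ℝ - ⟪sel z, v⟫_ℝ - t * ⟪H v, v⟫_ℝ| ≤ η * ‖v‖ ^ 2 := by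
    intro t h0 h1
    have hn : ‖t • v‖ ≤ ‖v‖ := by
      rw [norm_smul, Real.norm_eq_abs, abs_of_nonneg h0]
      nlinarith [norm_nonneg v]
    have := hb (y := z + t • v) (by rw [dist_eq_norm]; simp only [add_sub_cancel_left]; linarith)
    simp only [add_sub_cancel_left, map_smul] at this
    have e : ⟪sel (z + t • v), v⟫_ℝ - ⟪sel z, v⟫_ℝ - t * ⟪H v, v⟫_ℝ
        = ⟪sel (z + t • v) - sel z - t • H v, v⟫_ℝ := by
      rw [inner_sub_left, inner_sub_left, real_inner_smul_left]
    rw [e]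
    calc _ ≤ _ := abs_real_inner_le_norm _ _
      _ ≤ (η * ‖v‖) * ‖v‖ := by gcongr; exact this.trans (by gcongr)
      _ = _ := by ring
  have hch := chain_le (g := g) (A := η * ‖v‖ ^ 2) (C := |⟪H v, v⟫_ℝ|) (abs_nonneg _) (by
    intro a b h0 hab h1
    have ha := hxe a h0 (hab.trans h1)
    have hb' := hxe b (h0.trans hab) h1
    have s1 := hsel (z + a • v) (z + b • v)
    have s2 := hsel (z + b • v) (z + a • v)
    have e1 : z + b • v - (z + a • v) = (b - a) • v := by rw [sub_smul]; abel
    have e2 : z + a • v - (z + b • v) = (a - b) • v := by rw [sub_smul]; abel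
    rw [e1, inner_smul_right] at s1
    rw [e2, inner_smul_right] at s2
    simp only [hg]
    have hba : 0 ≤ b - a := by linarith
    have n1 := neg_abs_le ⟪H v, v⟫_ℝ
    have n2 := le_abs_self ⟪H v, v⟫_ℝ
    rw [abs_le] at ha hb' ⊢
    have q1 := mul_le_mul_of_nonneg_left ha.1 hba
    have q2 := mul_le_mul_of_nonneg_left hb'.2 hba
    have q3 := mul_le_mul_of_nonneg_left n1 (sq_nonneg (b - a))
    have q4 := mul_le_mul_of_nonneg_left n2 (sq_nonneg (b - a))
    have q5 := mul_nonneg (sq_nonneg (b - a)) (abs_nonneg ⟪H v, v⟫_ℝ)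
    constructor <;> nlinarith)
  have : g 1 - g 0 = f y - f z - ⟪sel z, v⟫_ℝ - 1 / 2 * ⟪H v, v⟫_ℝ := by
    simp [hg, hv]; ring
  rwa [this] at hch

abbrev hm (n : ℕ) : Measure (Euc n) := Measure.hausdorffMeasure (Module.finrank ℝ (Euc n) : ℝ)

theorem null_image {n : ℕ} {P : Euc n → Euc n} {s : Set (Euc n)} {K : ℝ≥0}
    (hP : LipschitzOnWith K P s) (hs : hm n s = 0) : hm n (P '' s) = 0 := by
  have := hP.hausdorffMeasure_image_le (d := (Module.finrank ℝ (Euc n) : ℝ)) (by positivity)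
  rw [show Measure.hausdorffMeasure (Module.finrank ℝ (Euc n) : ℝ) s = 0 from hs, mul_zero] at this
  exact le_antisymm this zero_le

theorem alexandrov {n : ℕ} {f : Euc n → ℝ} {M : ℝ≥0}
    (h : ∀ z, ∃ s, ‖s‖ ≤ M ∧ HasSub f z s) :
    ∀ᵐ z ∂(hm n), ∃ H : Euc n →L[ℝ] Euc n, ∀ s, HasSub f z s → ∀ η > 0,
      ∀ᶠ y in 𝓝 z, |f y - f z - ⟪s, y - z⟫_ℝ - 1 / 2 * ⟪H (y - z), y - z⟫_ℝ|
        ≤ η * ‖y - z‖ ^ 2 := by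
  choose sel hM hsel using h
  have hlip := hasSub_lipschitz (f := f) (M := M) fun z => ⟨sel z, hM z, hsel z⟩
  set φ : Euc n → Euc n := fun z => z + sel z with hφ
  have hexp : ∀ z z', ‖z' - z‖ ≤ ‖φ z' - φ z‖ := by
    intro z z'
    have := (hsel z).mono (hsel z')
    have e : φ z' - φ z = (z' - z) + (sel z' - sel z) := by simp [hφ]; abel
    rw [e]
    apply le_of_sq_le_sq _ (norm_nonneg _)
    rw [norm_add_sq_real, real_inner_comm]
    nlinarith [sq_nonneg ‖sel z' - sel z‖]
  have hinj : Function.Injective φ := by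
    intro a b hab
    have := hexp a b
    rw [hab, sub_self, norm_zero] at this
    exact (sub_eq_zero.1 (norm_le_zero_iff.1 this)).symm
  set P := Function.invFun φ with hP
  have hPφ : ∀ z, P (φ z) = z := Function.leftInverse_invFun hinj
  set Y := range φ with hY
  have hPl : LipschitzOnWith 1 P Y := by
    refine LipschitzOnWith.of_dist_le_mul ?_
    rintro _ ⟨a, rfl⟩ _ ⟨b, rfl⟩
    rw [hPφ, hPφ, dist_eq_norm, dist_eq_norm]
    simpa using hexp b a
  set N1 := {y ∈ Y | ¬ DifferentiableWithinAt ℝ P Y y} with hN1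
  set N2 := {y ∈ Y | DifferentiableWithinAt ℝ P Y y ∧ (fderivWithin ℝ P Y y).det = 0} with hN2
  have b1 : hm n (P '' N1) = 0 := by
    refine null_image (hPl.mono (sep_subset _ _)) ?_
    have := hPl.ae_differentiableWithinAt_of_mem (μ := hm n)
    rw [ae_iff] at this
    convert this using 2
    ext y; simp [hN1]
  have b2 : hm n (P '' N2) = 0 := by
    refine addHaar_image_eq_zero_of_det_fderivWithin_eq_zero (hm n)
      (f' := fun y => fderivWithin ℝ P Y y) ?_ ?_
    · intro y hy
      exact (hy.2.1.hasFDerivWithinAt).mono (sep_subset _ _)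
    · intro y hy; exact hy.2.2
  have b3 : ∀ᵐ z ∂(hm n), DifferentiableAt ℝ f z := hlip.ae_differentiableAt
  have b1' : ∀ᵐ z ∂(hm n), z ∉ P '' N1 := measure_eq_zero_iff_ae_notMem.1 b1
  have b2' : ∀ᵐ z ∂(hm n), z ∉ P '' N2 := measure_eq_zero_iff_ae_notMem.1 b2
  filter_upwards [b1', b2', b3] with z h1 h2 h3
  obtain ⟨huniq, hcont⟩ := sel_continuousAt hsel h3
  have hd : DifferentiableWithinAt ℝ P Y (φ z) := by
    by_contra hc
    exact h1 ⟨φ z, ⟨⟨z, rfl⟩, hc⟩, hPφ z⟩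
  have hdet : (fderivWithin ℝ P Y (φ z)).det ≠ 0 := by
    intro hc
    exact h2 ⟨φ z, ⟨⟨z, rfl⟩, hd, hc⟩, hPφ z⟩
  set L := (fderivWithin ℝ P Y (φ z)).toContinuousLinearEquivOfDetNeZero hdet with hL
  have hPL : HasFDerivWithinAt P (L : Euc n →L[ℝ] Euc n) Y (φ z) := by
    rw [hL, ContinuousLinearMap.coe_toContinuousLinearEquivOfDetNeZero]
    exact hd.hasFDerivWithinAt
  have hφc : ContinuousAt φ z := continuousAt_id.add hcont
  have hφd : HasFDerivWithinAt φ (L.symm : Euc n →L[ℝ] Euc n) univ z := by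
    refine HasFDerivWithinAt.of_local_left_inverse (f := P) (g := φ) (t := Y) (s := univ) ?_ hPL
      (mem_univ _) ?_
    · rw [nhdsWithin_univ]
      exact tendsto_nhdsWithin_iff.2 ⟨hφc, Eventually.of_forall fun z => ⟨z, rfl⟩⟩
    · exact Eventually.of_forall hPφ
  rw [hasFDerivWithinAt_univ] at hφd
  have hsd : HasFDerivAt sel ((L.symm : Euc n →L[ℝ] Euc n) - ContinuousLinearMap.id ℝ (Euc n)) z := by
    have := hφd.sub (hasFDerivAt_id z)
    refine this.congr_of_eventuallyEq (Eventually.of_forall fun y => ?_)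
    simp [hφ]
  refine ⟨(L.symm : Euc n →L[ℝ] Euc n) - ContinuousLinearMap.id ℝ (Euc n), fun s hs η hη => ?_⟩
  rw [huniq s hs]
  exact expansion_of_sel hsel hsd hη

/-! ### Jensen's lemma and doubling of variables -/

def Expan {n : ℕ} (f : Euc n → ℝ) (z : Euc n) (H : Euc n →L[ℝ] Euc n) : Prop :=
  ∀ s, HasSub f z s → ∀ η > 0,
      ∀ᶠ y in 𝓝 z, |f y - f z - ⟪s, y - z⟫_ℝ - 1 / 2 * ⟪H (y - z), y - z⟫_ℝ|
        ≤ η * ‖y - z‖ ^ 2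

theorem eq_zero_of_quad {n : ℕ} {q : Euc n} {C : ℝ} (hC : 0 < C)
    (h : ∀ w : Euc n, ⟪q, w⟫_ℝ ≤ C * ‖w‖ ^ 2) : q = 0 := by
  have := h ((1 / (2 * C)) • q)
  rw [inner_smul_right, real_inner_self_eq_norm_sq, norm_smul, Real.norm_eq_abs,
    abs_of_pos (by positivity), mul_pow] at this
  have e : C * ((1 / (2 * C)) ^ 2 * ‖q‖ ^ 2) = (1 / (4 * C)) * ‖q‖ ^ 2 := by field_simp; ring
  have e2 : 1 / (2 * C) * ‖q‖ ^ 2 = 2 * ((1 / (4 * C)) * ‖q‖ ^ 2) := by field_simp; ring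
  have h3 : (1 / (4 * C)) * ‖q‖ ^ 2 ≤ 0 := by linarith
  have h4 : ‖q‖ ^ 2 ≤ 0 := by
    by_contra hc
    push Not at hc
    have : 0 < (1 / (4 * C)) * ‖q‖ ^ 2 := by positivity
    linarith
  have : ‖q‖ = 0 := by nlinarith [norm_nonneg q]
  exact norm_eq_zero.1 this

theorem jensen {n : ℕ} {f h : Euc n → ℝ} {M : ℝ≥0} {C η : ℝ} (hC : 0 < C) (hη : 0 < η)
    (hf : ∀ z, ∃ s, ‖s‖ ≤ M ∧ HasSub f z s) (hh : ∀ z, ∃ s, ‖s‖ ≤ M ∧ HasSub h z s) :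
    ∃ z p : Euc n, ∃ Hf Hh : Euc n →L[ℝ] Euc n, ‖p‖ ≤ η ∧
      (∀ y, f y + h y - C * ‖y‖ ^ 2 - ⟪p, y⟫_ℝ ≤ f z + h z - C * ‖z‖ ^ 2 - ⟪p, z⟫_ℝ) ∧
      (∀ s s', HasSub f z s → HasSub h z s' → s + s' - (2 * C) • z = p) ∧
      Expan f z Hf ∧ Expan h z Hh ∧ ∀ v, ⟪Hf v, v⟫_ℝ + ⟪Hh v, v⟫_ℝ ≤ 2 * C * ‖v‖ ^ 2 := by
  have hA := alexandrov hf
  have hB := alexandrov hh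
  have lf := hasSub_lipschitz hf
  have lh := hasSub_lipschitz hh
  choose sf hsfM hsf using hf
  choose sh hshM hsh using hh
  set K : Set (Euc n) := {z | ∃ p : Euc n, ‖p‖ ≤ η ∧
      ∀ y, f y + h y - C * ‖y‖ ^ 2 - ⟪p, y⟫_ℝ ≤ f z + h z - C * ‖z‖ ^ 2 - ⟪p, z⟫_ℝ} with hK
  -- expansions of the square
  have sq : ∀ y z : Euc n, ‖y‖ ^ 2 = ‖z‖ ^ 2 + 2 * ⟪z, y - z⟫_ℝ + ‖y - z‖ ^ 2 := by
    intro y z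
    have := norm_add_sq_real z (y - z)
    rwa [add_sub_cancel] at this
  have low : ∀ z s s', HasSub f z s → HasSub h z s' → ∀ y,
      f z + h z - C * ‖z‖ ^ 2 + ⟪s + s' - (2 * C) • z, y - z⟫_ℝ - C * ‖y - z‖ ^ 2
        ≤ f y + h y - C * ‖y‖ ^ 2 := by
    intro z s s' hs hs' y
    have h1 := hs y
    have h2 := hs' y
    rw [inner_sub_left, inner_add_left, real_inner_smul_left, sq y z]
    nlinarith
  have peq : ∀ z p, (∀ y, f y + h y - C * ‖y‖ ^ 2 - ⟪p, y⟫_ℝ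
      ≤ f z + h z - C * ‖z‖ ^ 2 - ⟪p, z⟫_ℝ) → ∀ s s', HasSub f z s → HasSub h z s' →
      s + s' - (2 * C) • z = p := by
    intro z p hp s s' hs hs'
    rw [← sub_eq_zero]
    refine eq_zero_of_quad hC fun w => ?_
    have h1 := low z s s' hs hs' (z + w)
    have h2 := hp (z + w)
    rw [add_sub_cancel_left] at h1
    rw [inner_add_right] at h2
    rw [inner_sub_left]
    linarith
  set F : Euc n → Euc n := fun z => sf z + sh z - (2 * C) • z with hF
  have hFK : ∀ z p, (∀ y, f y + h y - C * ‖y‖ ^ 2 - ⟪p, y⟫_ℝ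
      ≤ f z + h z - C * ‖z‖ ^ 2 - ⟪p, z⟫_ℝ) → F z = p := fun z p hp =>
    peq z p hp _ _ (hsf z) (hsh z)
  have hlip : LipschitzOnWith (Real.toNNReal (4 * C)) F K := by
    refine LipschitzOnWith.of_dist_le_mul ?_
    rintro z ⟨p, hp, hmax⟩ z' ⟨p', hp', hmax'⟩
    rw [hFK z p hmax, hFK z' p' hmax', dist_eq_norm, dist_eq_norm,
      Real.coe_toNNReal _ (by positivity)]
    by_cases hpp : p - p' = 0
    · rw [hpp]; simp; positivity
    have hq : 0 < ‖p - p'‖ := norm_pos_iff.2 hpp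
    set t := ‖z - z'‖ with ht
    by_cases ht0 : t = 0
    · exfalso; apply hpp
      have : z = z' := by rw [ht, norm_eq_zero, sub_eq_zero] at ht0; exact ht0
      rw [← hFK z p hmax, ← hFK z' p' hmax', this, sub_self]
    have htp : 0 < t := lt_of_le_of_ne (norm_nonneg _) (Ne.symm ht0)
    set w := (t / ‖p - p'‖) • (p - p') with hw
    have hwn : ‖w‖ = t := by simp [hw, norm_smul, abs_of_pos htp, hq.ne']
    have h1 := low z _ _ (hsf z) (hsh z) (z' + w)
    rw [show sf z + sh z - (2 * C) • z = p from hFK z p hmax] at h1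
    have h2 := hmax' (z' + w)
    have h3 := hmax z'
    have h4 : ‖z' + w - z‖ ≤ 2 * t := by
      calc ‖z' + w - z‖ = ‖w - (z - z')‖ := by congr 1; abel
        _ ≤ _ := norm_sub_le _ _
        _ = 2 * t := by rw [hwn]; ring
    have h5 : ‖z' + w - z‖ ^ 2 ≤ (2 * t) ^ 2 := by gcongr
    have h6 : ⟪p - p', w⟫_ℝ = t * ‖p - p'‖ := by
      simp only [hw, inner_smul_right, real_inner_self_eq_norm_sq]
      field_simp
    rw [inner_sub_left] at h6
    rw [inner_sub_right, inner_add_right] at h1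
    rw [inner_add_right] at h2
    have : t * ‖p - p'‖ ≤ t * (4 * C * t) := by nlinarith
    exact le_of_mul_le_mul_left this htp
  have himg : closedBall (0 : Euc n) η ⊆ F '' K := by
    intro p hp
    have hpn : ‖p‖ ≤ η := by simpa using hp
    set G : Euc n → ℝ := fun y => f y + h y - C * ‖y‖ ^ 2 - ⟪p, y⟫_ℝ with hG
    have hGc : Continuous G := by
      have := lf.continuous
      have := lh.continuous
      fun_prop
    set R := (2 * M + η) / C with hR
    have hR0 : 0 ≤ R := by positivity
    obtain ⟨z, hz, hmax⟩ := (isCompact_closedBall (0 : Euc n) R).exists_isMaxOn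
      ⟨0, by simpa using hR0⟩ hGc.continuousOn
    have hall : ∀ y, G y ≤ G z := by
      intro y
      by_cases hy : y ∈ closedBall (0 : Euc n) R
      · exact hmax hy
      have hyR : R < ‖y‖ := by simpa using hy
      have h0 : G 0 ≤ G z := hmax (by simpa using hR0)
      refine le_trans ?_ h0
      have a1 := lf.dist_le_mul y 0
      have a2 := lh.dist_le_mul y 0
      rw [Real.dist_eq, dist_zero_right] at a1 a2
      have a3 := (abs_le.1 a1).2
      have a4 := (abs_le.1 a2).2
      have a5 := (abs_le.1 (abs_real_inner_le_norm p y)).1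
      have a6 : ‖p‖ * ‖y‖ ≤ η * ‖y‖ := by gcongr
      have a7 : (2 * M + η) ≤ C * ‖y‖ := by
        have := (div_lt_iff₀ hC).1 hyR; linarith
      have a8 : (2 * M + η) * ‖y‖ ≤ C * ‖y‖ * ‖y‖ := by gcongr
      simp only [hG, norm_zero, inner_zero_right]
      nlinarith
    exact ⟨z, ⟨p, hpn, hall⟩, hFK z p hall⟩
  have hpos : hm n K ≠ 0 := by
    intro hc
    have h1 := null_image hlip hc
    have h2 := measure_mono_null himg h1
    exact (measure_closedBall_pos (hm n) (0 : Euc n) hη).ne' h2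
  obtain ⟨z, hzK, ⟨Hf, h1⟩, ⟨Hh, h2⟩⟩ : ∃ z ∈ K, (∃ H, Expan f z H) ∧ (∃ H, Expan h z H) := by
    by_contra hcon
    push Not at hcon
    apply hpos
    have hAB := hA.and hB
    rw [ae_iff] at hAB
    refine measure_mono_null ?_ hAB
    intro z hz hz'
    exact hcon z hz hz'.1 hz'.2.choose hz'.2.choose_spec
  obtain ⟨p, hp, hmax⟩ := hzK
  refine ⟨z, p, Hf, Hh, hp, hmax, peq z p hmax, h1, h2, fun v => ?_⟩
  by_cases hv : v = 0
  · simp [hv]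
  have hvp : 0 < ‖v‖ := norm_pos_iff.2 hv
  refine le_of_forall_pos_le_add fun ε hε => ?_
  set η' := ε / (4 * ‖v‖ ^ 2) with hη'
  have hη'p : 0 < η' := by positivity
  have e1 := h1 (sf z) (hsf z) η' hη'p
  have e2 := h2 (sh z) (hsh z) η' hη'p
  have hc : Tendsto (fun t : ℝ => z + t • v) (𝓝[>] 0) (𝓝 z) := by
    have : Continuous (fun t : ℝ => z + t • v) := by fun_prop
    have := (this.tendsto 0).mono_left (nhdsWithin_le_nhds (s := Ioi 0))
    simpa using this
  obtain ⟨t, ⟨ht1, ht2⟩, ht0⟩ := (((hc.eventually e1).and (hc.eventually e2)).and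
    (self_mem_nhdsWithin : Ioi (0 : ℝ) ∈ 𝓝[>] 0)).exists
  have ht : (0 : ℝ) < t := ht0
  have hm' := hmax (z + t • v)
  have hpz := peq z p hmax _ _ (hsf z) (hsh z)
  rw [sq (z + t • v) z, ← hpz] at hm'
  rw [add_sub_cancel_left] at ht1 ht2 hm'
  simp only [inner_sub_left, inner_add_left, inner_add_right, real_inner_smul_left,
    inner_smul_right, map_smul, norm_smul, Real.norm_eq_abs, abs_of_pos ht, mul_pow] at ht1 ht2 hm'
  have b1 := (abs_le.1 ht1).1
  have b2 := (abs_le.1 ht2).1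
  have hev : η' * ‖v‖ ^ 2 = ε / 4 := by rw [hη']; field_simp
  have hfin : t ^ 2 * (⟪Hf v, v⟫_ℝ + ⟪Hh v, v⟫_ℝ) ≤ t ^ 2 * (2 * C * ‖v‖ ^ 2 + ε) := by
    have e3 : η' * (t ^ 2 * ‖v‖ ^ 2) = t ^ 2 * (ε / 4) := by rw [← hev]; ring
    rw [e3] at b1 b2
    rw [real_inner_comm v z] at *
    nlinarith
  exact le_of_mul_le_mul_left hfin (by positivity)

theorem doubling {n : ℕ} {D : Set (Euc n)} (hD : IsCompact D) (hne : D.Nonempty)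
    {a b : Euc n → ℝ} (ha : UpperSemicontinuousOn a D) (hb : UpperSemicontinuousOn b D)
    {N η : ℝ} (hN : 0 < N) (hη : 0 < η) :
    ∃ x ∈ D, ∃ y ∈ D, ∃ z : Euc n, ∃ Xa Xb : Euc n →L[ℝ] Euc n, SymT Xa ∧ SymT Xb ∧
      (∀ t ∈ D, a t + b t - η * ‖t - z‖
        ≤ a x + b y - N / 2 * (‖x - z‖ ^ 2 + ‖y - z‖ ^ 2)) ∧
      ‖N • (x - z) + N • (y - z)‖ ≤ η ∧
      (∀ v, ⟪Xa v, v⟫_ℝ + ⟪Xb v, v⟫_ℝ ≤ 0) ∧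
      (∀ τ > 0, ∀ᶠ x' in 𝓝[D] x, a x' ≤ a x + ⟪N • (x - z), x' - x⟫_ℝ
        + 1 / 2 * ⟪Xa (x' - x), x' - x⟫_ℝ + τ * ‖x' - x‖ ^ 2) ∧
      (∀ τ > 0, ∀ᶠ y' in 𝓝[D] y, b y' ≤ b y + ⟪N • (y - z), y' - y⟫_ℝ
        + 1 / 2 * ⟪Xb (y' - y), y' - y⟫_ℝ + τ * ‖y' - y‖ ^ 2) := by
  -- the max function
  have mk : ∀ c : Euc n → ℝ, UpperSemicontinuousOn c D → ∃ X : Euc n → Euc n,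
      (∀ z, X z ∈ D) ∧ ∀ z, ∀ x ∈ D, c x - N / 2 * ‖x‖ ^ 2 + N * ⟪x, z⟫_ℝ
        ≤ c (X z) - N / 2 * ‖X z‖ ^ 2 + N * ⟪X z, z⟫_ℝ := by
    intro c hc
    have : ∀ z, ∃ x0 ∈ D, ∀ x ∈ D, c x - N / 2 * ‖x‖ ^ 2 + N * ⟪x, z⟫_ℝ
        ≤ c x0 - N / 2 * ‖x0‖ ^ 2 + N * ⟪x0, z⟫_ℝ := by
      intro z
      have hco : Continuous (fun x : Euc n => - (N / 2 * ‖x‖ ^ 2) + N * ⟪x, z⟫_ℝ) := by fun_prop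
      have hu : UpperSemicontinuousOn
          (fun x => c x + (- (N / 2 * ‖x‖ ^ 2) + N * ⟪x, z⟫_ℝ)) D :=
        hc.add hco.continuousOn.upperSemicontinuousOn
      obtain ⟨x0, hx0, hm⟩ := hu.exists_isMaxOn hne hD
      refine ⟨x0, hx0, fun x hx => ?_⟩
      have := hm hx
      simp only [mem_setOf_eq] at this
      linarith
    choose X h1 h2 using this
    exact ⟨X, h1, h2⟩
  obtain ⟨R, hR⟩ := hD.isBounded.exists_norm_le
  have hR0 : 0 ≤ R := (norm_nonneg _).trans (hR _ hne.some_mem)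
  have mk2 : ∀ (c : Euc n → ℝ) (X : Euc n → Euc n), (∀ z, ∀ x ∈ D,
      c x - N / 2 * ‖x‖ ^ 2 + N * ⟪x, z⟫_ℝ
        ≤ c (X z) - N / 2 * ‖X z‖ ^ 2 + N * ⟪X z, z⟫_ℝ) → (∀ z, X z ∈ D) →
      ∀ z, HasSub (fun z => c (X z) - N / 2 * ‖X z‖ ^ 2 + N * ⟪X z, z⟫_ℝ) z (N • X z) := by
    intro c X h1 h2 z y
    have := h1 y (X z) (h2 z)
    simp only [real_inner_smul_left, inner_sub_right]
    linarith
  obtain ⟨A, hAD, hA⟩ := mk a ha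
  obtain ⟨B, hBD, hB⟩ := mk b hb
  have sA := mk2 a A hA hAD
  have sB := mk2 b B hB hBD
  set f : Euc n → ℝ := fun z => a (A z) - N / 2 * ‖A z‖ ^ 2 + N * ⟪A z, z⟫_ℝ with hf
  set h : Euc n → ℝ := fun z => b (B z) - N / 2 * ‖B z‖ ^ 2 + N * ⟪B z, z⟫_ℝ with hh
  have bd : ∀ x ∈ D, ‖N • x‖ ≤ (Real.toNNReal (N * R) : ℝ) := by
    intro x hx
    rw [Real.coe_toNNReal _ (by positivity), norm_smul, Real.norm_eq_abs, abs_of_pos hN]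
    gcongr; exact hR x hx
  obtain ⟨z, p, Hf, Hh, hp, hmax, hpe, ef, eh, hH⟩ := jensen (f := f) (h := h) hN hη
    (fun z => ⟨_, bd _ (hAD z), sA z⟩) (fun z => ⟨_, bd _ (hBD z), sB z⟩)
  have hpe' := hpe _ _ (sA z) (sB z)
  -- symmetrization
  have symm : ∀ H : Euc n →L[ℝ] Euc n, ∃ X : Euc n →L[ℝ] Euc n, SymT X ∧
      ∀ v, ⟪X v, v⟫_ℝ = ⟪H v, v⟫_ℝ - N * ‖v‖ ^ 2 := by
    intro H
    refine ⟨(1 / 2 : ℝ) • (H + ContinuousLinearMap.adjoint H)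
      - N • ContinuousLinearMap.id ℝ (Euc n), ?_, fun v => ?_⟩
    · refine SymT.sub (SymT.smul ?_ _) (SymT.id.smul _)
      intro x y
      simp only [ContinuousLinearMap.add_apply, inner_add_left, inner_add_right,
        ContinuousLinearMap.adjoint_inner_left, ContinuousLinearMap.adjoint_inner_right]
      ring
    · simp only [ContinuousLinearMap.sub_apply, ContinuousLinearMap.smul_apply,
        ContinuousLinearMap.add_apply, inner_sub_left, inner_add_left, real_inner_smul_left,
        ContinuousLinearMap.adjoint_inner_left, ContinuousLinearMap.id_apply,
        real_inner_self_eq_norm_sq, real_inner_comm (H v) v]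
      ring
  obtain ⟨Xa, hXa, hXa'⟩ := symm Hf
  obtain ⟨Xb, hXb, hXb'⟩ := symm Hh
  have touch : ∀ (c : Euc n → ℝ) (X : Euc n → Euc n), (∀ z, ∀ x ∈ D,
      c x - N / 2 * ‖x‖ ^ 2 + N * ⟪x, z⟫_ℝ
        ≤ c (X z) - N / 2 * ‖X z‖ ^ 2 + N * ⟪X z, z⟫_ℝ) →
      HasSub (fun z => c (X z) - N / 2 * ‖X z‖ ^ 2 + N * ⟪X z, z⟫_ℝ) z (N • X z) →
      ∀ H Y : Euc n →L[ℝ] Euc n,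
      Expan (fun z => c (X z) - N / 2 * ‖X z‖ ^ 2 + N * ⟪X z, z⟫_ℝ) z H →
      (∀ v, ⟪Y v, v⟫_ℝ = ⟪H v, v⟫_ℝ - N * ‖v‖ ^ 2) →
      ∀ τ > 0, ∀ᶠ x' in 𝓝[D] (X z), c x' ≤ c (X z) + ⟪N • (X z - z), x' - X z⟫_ℝ
        + 1 / 2 * ⟪Y (x' - X z), x' - X z⟫_ℝ + τ * ‖x' - X z‖ ^ 2 := by
    intro c X hX sX H Y hE hY τ hτ
    have e := hE _ sX τ hτ
    have hc : Tendsto (fun x' : Euc n => z + (x' - X z)) (𝓝[D] (X z)) (𝓝 z) := by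
      have : Continuous (fun x' : Euc n => z + (x' - X z)) := by fun_prop
      have := (this.tendsto (X z)).mono_left (nhdsWithin_le_nhds (s := D))
      simpa using this
    filter_upwards [hc.eventually e, self_mem_nhdsWithin] with x' h1 h2
    have h3 := hX (z + (x' - X z)) x' h2
    rw [add_sub_cancel_left] at h1
    have h4 := (abs_le.1 h1).2
    rw [hY]
    set v := x' - X z with hv
    have hx' : x' = X z + v := by rw [hv]; abel
    have h5 : ‖x'‖ ^ 2 = ‖X z‖ ^ 2 + 2 * ⟪X z, v⟫_ℝ + ‖v‖ ^ 2 := by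
      rw [hx']; exact norm_add_sq_real _ _
    have h6 : ⟪x', z + v⟫_ℝ = ⟪X z, z⟫_ℝ + ⟪X z, v⟫_ℝ + ⟪z, v⟫_ℝ + ‖v‖ ^ 2 := by
      rw [hx', inner_add_left, inner_add_right, inner_add_right, real_inner_self_eq_norm_sq,
        real_inner_comm z v]
      ring
    rw [h5, h6] at h3
    simp only [real_inner_smul_left, inner_sub_left] at h4 ⊢
    nlinarith
  refine ⟨A z, hAD z, B z, hBD z, z, Xa, Xb, hXa, hXb, ?_, ?_, ?_, ?_, ?_⟩
  · intro t ht
    have h1 := hmax t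
    have h2 := hA t t ht
    have h3 := hB t t ht
    have h4 := norm_sub_sq_real (A z) z
    have h5 := norm_sub_sq_real (B z) z
    have h6 : ⟪p, t - z⟫_ℝ ≤ η * ‖t - z‖ := by
      refine (real_inner_le_norm _ _).trans ?_
      gcongr
    rw [inner_sub_right] at h6
    rw [real_inner_self_eq_norm_sq] at h2 h3
    rw [h4, h5]
    simp only [hf, hh] at h1
    nlinarith
  · have : N • (A z - z) + N • (B z - z) = p := by
      rw [← hpe', smul_sub, smul_sub, two_mul, add_smul]; abel
    rw [this]; exact hp
  · intro v
    rw [hXa', hXb']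
    linarith [hH v]
  · exact touch a A hA (sA z) Hf Xa ef hXa'
  · exact touch b B hB (sB z) Hh Xb eh hXb'

/-! ### Second order calculus -/

/-- `ψ` is differentiable near `x` with gradient field differentiable at `x`. -/
def C2At {n : ℕ} (ψ : Euc n → ℝ) (x p : Euc n) (X : Euc n →L[ℝ] Euc n) : Prop :=
  ∃ G : Euc n → Euc n, (∀ᶠ y in 𝓝 x, HasFDerivAt ψ (innerSL ℝ (G y)) y) ∧ G x = p ∧
    HasFDerivAt G X x

def Jet {n : ℕ} (m : Euc n → ℝ) (x p : Euc n) (X : Euc n →L[ℝ] Euc n) : Prop :=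
  ∀ τ > 0, ∀ᶠ y in 𝓝 x, m y ≤ m x + ⟪p, y - x⟫_ℝ + 1 / 2 * ⟪X (y - x), y - x⟫_ℝ
    + τ * ‖y - x‖ ^ 2

def Vis {n : ℕ} (Pr : Euc n → (Euc n →L[ℝ] Euc n) → Prop) (Ω : Set (Euc n)) (m : Euc n → ℝ) :
    Prop := ∀ x ∈ Ω, ∀ p X, SymT X → Jet m x p X → Pr p X

def Bop {n : ℕ} (p : Euc n) (X : Euc n →L[ℝ] Euc n) : Euc n →L[ℝ] Euc n :=
  X + rk p - (1 / 2 * ‖p‖ ^ 2) • ContinuousLinearMap.id ℝ (Euc n)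

def Psup {n : ℕ} (Γ : Set (Fin n → ℝ)) (p : Euc n) (X : Euc n →L[ℝ] Euc n) : Prop :=
  EigL (Bop p X) (closure Γ)

def Psub {n : ℕ} (Γ : Set (Fin n → ℝ)) (p : Euc n) (X : Euc n →L[ℝ] Euc n) : Prop :=
  EigL (Bop p (-X)) Γᶜ

theorem Bop_symT {n : ℕ} {p : Euc n} {X : Euc n →L[ℝ] Euc n} (hX : SymT X) : SymT (Bop p X) :=
  (hX.add (SymT.rk p)).sub (SymT.id.smul _)

theorem Bop_inner {n : ℕ} (p : Euc n) (X : Euc n →L[ℝ] Euc n) (v : Euc n) :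
    ⟪Bop p X v, v⟫_ℝ = ⟪X v, v⟫_ℝ + ⟪p, v⟫_ℝ ^ 2 - 1 / 2 * ‖p‖ ^ 2 * ‖v‖ ^ 2 := by
  simp [Bop, inner_sub_left, inner_add_left, real_inner_smul_left, real_inner_self_eq_norm_sq]
  ring

theorem C2At.peano {n : ℕ} {ψ : Euc n → ℝ} {x p : Euc n} {X : Euc n →L[ℝ] Euc n}
    (h : C2At ψ x p X) (hX : SymT X) {η : ℝ} (hη : 0 < η) :
    ∀ᶠ y in 𝓝 x, |ψ y - ψ x - ⟪p, y - x⟫_ℝ - 1 / 2 * ⟪X (y - x), y - x⟫_ℝ|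
      ≤ η * ‖y - x‖ ^ 2 := by
  obtain ⟨G, hG, hGx, hGd⟩ := h
  have h1 := hGd.isLittleO.def hη
  obtain ⟨r, hr, hb⟩ := Metric.eventually_nhds_iff.1 (hG.and h1)
  refine Metric.eventually_nhds_iff.2 ⟨r, hr, fun y hy => ?_⟩
  set R : Euc n → ℝ := fun y => ψ y - ⟪p, y - x⟫_ℝ - 1 / 2 * ⟪X (y - x), y - x⟫_ℝ with hR
  have hd : ∀ y' ∈ closedBall x ‖y - x‖,
      HasFDerivWithinAt R (innerSL ℝ (G y' - p - X (y' - x))) (closedBall x ‖y - x‖) y' := by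
    intro y' hy'
    have hy'r : dist y' x < r := by
      rw [mem_closedBall] at hy'
      rw [dist_eq_norm] at hy
      linarith
    refine HasFDerivAt.hasFDerivWithinAt ?_
    have e1 := (hb hy'r).1
    have e0 : HasFDerivAt (fun y : Euc n => y - x) (ContinuousLinearMap.id ℝ (Euc n)) y' :=
      (hasFDerivAt_id y').sub_const x
    have e2 : HasFDerivAt (fun y : Euc n => ⟪p, y - x⟫_ℝ) (innerSL ℝ p) y' := by
      have := (innerSL ℝ p).hasFDerivAt.comp y' e0
      rw [ContinuousLinearMap.comp_id] at this
      exact this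
    have e3 : HasFDerivAt (fun y : Euc n => X (y - x)) X y' := by
      have := X.hasFDerivAt.comp y' e0
      rw [ContinuousLinearMap.comp_id] at this
      exact this
    have e4 := e3.inner ℝ e0
    have e5 := (e1.sub e2).sub (e4.const_mul (1 / 2))
    refine e5.congr_fderiv ?_
    ext v
    simp only [innerSL_apply_apply, sub_apply, smul_apply, ContinuousLinearMap.comp_apply,
      ContinuousLinearMap.prod_apply, fderivInnerCLM_apply, ContinuousLinearMap.id_apply,
      inner_sub_left, smul_eq_mul]
    rw [hX v (y' - x), real_inner_comm (X (y' - x)) v]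
    ring
  have hbd : ∀ y' ∈ closedBall x ‖y - x‖, ‖innerSL ℝ (G y' - p - X (y' - x))‖
      ≤ η * ‖y - x‖ := by
    intro y' hy'
    rw [mem_closedBall, dist_eq_norm] at hy'
    rw [innerSL_apply_norm]
    have := (hb (y := y') (by rw [dist_eq_norm] at hy ⊢; linarith)).2
    rw [hGx] at this
    exact this.trans (by gcongr)
  have hm := (convex_closedBall x ‖y - x‖).norm_image_sub_le_of_norm_hasFDerivWithin_le hd hbd
    (mem_closedBall_self (norm_nonneg _)) (by rw [mem_closedBall, dist_eq_norm] : y ∈ _)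
  have e : R y - R x = ψ y - ψ x - ⟪p, y - x⟫_ℝ - 1 / 2 * ⟪X (y - x), y - x⟫_ℝ := by
    simp [hR]; ring
  rw [e, Real.norm_eq_abs] at hm
  exact hm.trans (le_of_eq (by ring))

theorem Jet.of_touch {n : ℕ} {m ψ : Euc n → ℝ} {x p : Euc n} {X : Euc n →L[ℝ] Euc n}
    (h : C2At ψ x p X) (hX : SymT X) (hx : ψ x = m x) (hle : ∀ᶠ y in 𝓝 x, m y ≤ ψ y) :
    Jet m x p X := by
  intro τ hτ
  filter_upwards [h.peano hX hτ, hle] with y h1 h2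
  have := (abs_le.1 h1).2
  rw [← hx]
  linarith

/-- the quadratic test function -/
def quad {n : ℕ} (a : ℝ) (x p : Euc n) (X : Euc n →L[ℝ] Euc n) (y : Euc n) : ℝ :=
  a + ⟪p, y - x⟫_ℝ + 1 / 2 * ⟪X (y - x), y - x⟫_ℝ

theorem quad_hasFDerivAt {n : ℕ} (a : ℝ) (x p : Euc n) {X : Euc n →L[ℝ] Euc n} (hX : SymT X)
    (y : Euc n) : HasFDerivAt (quad a x p X) (innerSL ℝ (p + X (y - x))) y := by
  have e0 : HasFDerivAt (fun y : Euc n => y - x) (ContinuousLinearMap.id ℝ (Euc n)) y :=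
    (hasFDerivAt_id y).sub_const x
  have e2 : HasFDerivAt (fun y : Euc n => ⟪p, y - x⟫_ℝ) (innerSL ℝ p) y := by
    have := (innerSL ℝ p).hasFDerivAt.comp y e0
    rw [ContinuousLinearMap.comp_id] at this
    exact this
  have e3 : HasFDerivAt (fun y : Euc n => X (y - x)) X y := by
    have := X.hasFDerivAt.comp y e0
    rw [ContinuousLinearMap.comp_id] at this
    exact this
  have e4 := e3.inner ℝ e0
  have e5 := (e2.const_add a).add (e4.const_mul (1 / 2))
  refine e5.congr_fderiv ?_
  ext v
  simp only [innerSL_apply_apply, add_apply, smul_apply, ContinuousLinearMap.comp_apply,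
    ContinuousLinearMap.prod_apply, fderivInnerCLM_apply, ContinuousLinearMap.id_apply,
    inner_add_left, smul_eq_mul]
  rw [hX v (y - x), real_inner_comm (X (y - x)) v]
  ring

theorem quad_C2At {n : ℕ} (a : ℝ) (x p : Euc n) {X : Euc n →L[ℝ] Euc n} (hX : SymT X)
    (y : Euc n) : C2At (quad a x p X) y (p + X (y - x)) X := by
  refine ⟨fun y => p + X (y - x), Eventually.of_forall fun y => quad_hasFDerivAt a x p hX y, rfl, ?_⟩
  have e0 : HasFDerivAt (fun y : Euc n => y - x) (ContinuousLinearMap.id ℝ (Euc n)) y :=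
    (hasFDerivAt_id y).sub_const x
  simpa using (X.hasFDerivAt.comp y e0).const_add p

theorem quad_self {n : ℕ} (a : ℝ) (x p : Euc n) (X : Euc n →L[ℝ] Euc n) : quad a x p X x = a := by
  simp [quad]

theorem quad_contDiff {n : ℕ} (a : ℝ) (x p : Euc n) (X : Euc n →L[ℝ] Euc n) :
    ContDiff ℝ 2 (quad a x p X) := by
  unfold quad
  have h0 : ContDiff ℝ 2 (fun y : Euc n => y - x) := contDiff_id.sub contDiff_const
  have h1 : ContDiff ℝ 2 (fun y : Euc n => X (y - x)) := X.contDiff.comp h0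
  exact (contDiff_const.add (contDiff_const.inner ℝ h0)).add (contDiff_const.mul (h1.inner ℝ h0))

theorem Jet.le_quad {n : ℕ} {m : Euc n → ℝ} {x p : Euc n} {X : Euc n →L[ℝ] Euc n}
    (h : Jet m x p X) {τ : ℝ} (hτ : 0 < τ) :
    ∀ᶠ y in 𝓝 x, m y ≤ quad (m x) x p (X + τ • ContinuousLinearMap.id ℝ (Euc n)) y := by
  filter_upwards [h (τ / 2) (half_pos hτ)] with y hy
  refine hy.trans (le_of_eq ?_)
  simp only [quad, add_apply, smul_apply, ContinuousLinearMap.id_apply, inner_add_left,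
    real_inner_smul_left, real_inner_self_eq_norm_sq]
  ring

theorem C2At.comp {n : ℕ} {ψ : Euc n → ℝ} {x p : Euc n} {X : Euc n →L[ℝ] Euc n}
    (h : C2At ψ x p X) {F F' : ℝ → ℝ} {F'' : ℝ} (hF : ∀ᶠ t in 𝓝 (ψ x), HasDerivAt F (F' t) t)
    (hF' : HasDerivAt F' F'' (ψ x)) :
    C2At (fun y => F (ψ y)) x (F' (ψ x) • p) (F' (ψ x) • X + F'' • rk p) := by
  obtain ⟨G, hG, hGx, hGd⟩ := h
  have hψx : HasFDerivAt ψ (innerSL ℝ p) x := hGx ▸ hG.self_of_nhds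
  refine ⟨fun y => F' (ψ y) • G y, ?_, by simp [hGx], ?_⟩
  · filter_upwards [hG, hψx.continuousAt.eventually hF] with y h1 h2
    refine (h2.comp_hasFDerivAt y h1).congr_fderiv ?_
    ext v; simp [real_inner_smul_left]
  · have e1 := hF'.comp_hasFDerivAt x hψx
    refine (e1.smul hGd).congr_fderiv ?_
    ext1 v
    simp [hGx, rk_apply, smul_smul]

theorem C2At.add {n : ℕ} {ψ ψ' : Euc n → ℝ} {x p p' : Euc n} {X X' : Euc n →L[ℝ] Euc n}
    (h : C2At ψ x p X) (h' : C2At ψ' x p' X') :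
    C2At (fun y => ψ y + ψ' y) x (p + p') (X + X') := by
  obtain ⟨G, hG, hGx, hGd⟩ := h
  obtain ⟨G', hG', hGx', hGd'⟩ := h'
  refine ⟨fun y => G y + G' y, ?_, by simp [hGx, hGx'], hGd.add hGd'⟩
  filter_upwards [hG, hG'] with y h1 h2
  refine (h1.add h2).congr_fderiv ?_
  ext v; simp [inner_add_left]

theorem C2At.congr {n : ℕ} {ψ ψ' : Euc n → ℝ} {x p p' : Euc n} {X X' : Euc n →L[ℝ] Euc n}
    (h : C2At ψ x p X) (hψ : ∀ y, ψ y = ψ' y) (hp : p = p') (hX : X = X') : C2At ψ' x p' X' := by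
  rw [← hp, ← hX, ← funext hψ]; exact h

theorem C2At.of_contDiff {n : ℕ} {q : Euc n → ℝ} (hq : ContDiff ℝ 2 q) (x : Euc n) :
    ∃ p X, SymT X ∧ C2At q x p X ∧ (∀ v, fderiv ℝ q x v = ⟪p, v⟫_ℝ) ∧
      (∀ v w, fderiv ℝ (fun y => fderiv ℝ q y w) x v = ⟪X v, w⟫_ℝ) := by
  set J : (Euc n →L[ℝ] ℝ) →L[ℝ] Euc n :=
    LinearMap.toContinuousLinearMap
      { toFun := fun L => (InnerProductSpace.toDual ℝ (Euc n)).symm L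
        map_add' := fun a b => by simp
        map_smul' := fun a b => by simp } with hJ
  have hJi : ∀ (L : Euc n →L[ℝ] ℝ) v, ⟪J L, v⟫_ℝ = L v := by
    intro L v
    simp [hJ]
  have hd : Differentiable ℝ q := hq.differentiable (by norm_num)
  have hdd : Differentiable ℝ (fderiv ℝ q) :=
    (hq.fderiv_right (m := 1) (by norm_num)).differentiable (by norm_num)
  have hsecond : ∀ v w, fderiv ℝ (fun y => fderiv ℝ q y w) x v = fderiv ℝ (fderiv ℝ q) x v w := by
    intro v w
    have := (hdd x).hasFDerivAt.clm_apply (hasFDerivAt_const w x)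
    rw [this.fderiv]
    simp
  have hsymm : IsSymmSndFDerivAt ℝ q x :=
    hq.contDiffAt.isSymmSndFDerivAt (by simp)
  refine ⟨J (fderiv ℝ q x), J.comp (fderiv ℝ (fderiv ℝ q) x), ?_, ?_, ?_, ?_⟩
  · intro v w
    rw [real_inner_comm _ v]
    simp only [ContinuousLinearMap.comp_apply, hJi]
    exact hsymm v w
  · refine ⟨fun y => J (fderiv ℝ q y), Eventually.of_forall fun y => ?_, rfl, ?_⟩
    · refine (hd y).hasFDerivAt.congr_fderiv ?_
      ext v; simp only [innerSL_apply_apply, hJi]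
    · exact J.hasFDerivAt.comp x (hdd x).hasFDerivAt
  · intro v; rw [hJi]
  · intro v w
    rw [hsecond]
    simp only [ContinuousLinearMap.comp_apply, hJi]

theorem toEuc_eq {n : ℕ} {M : Matrix (Fin n) (Fin n) ℝ} {T : Euc n →L[ℝ] Euc n}
    (h : ∀ i j, M i j = ⟪T (EuclideanSpace.single j 1), EuclideanSpace.single i 1⟫_ℝ) :
    Matrix.toEuclideanCLM (𝕜 := ℝ) M = T := by
  have : ∀ j, Matrix.toEuclideanCLM (𝕜 := ℝ) M (EuclideanSpace.single j 1)
      = T (EuclideanSpace.single j 1) := by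
    intro j
    ext i
    have := h i j
    rw [EuclideanSpace.inner_single_right] at this
    simp only [Matrix.ofLp_toEuclideanCLM]
    simpa using this
  ext1 v
  have hv := (EuclideanSpace.basisFun (Fin n) ℝ).sum_repr v
  rw [← hv]
  simp only [map_sum, map_smul, EuclideanSpace.basisFun_apply, this]

theorem confHess_eig {n : ℕ} (hn : 3 ≤ n) {q : Euc n → ℝ} (hq : ContDiff ℝ 2 q) {x p : Euc n}
    {X : Euc n →L[ℝ] Euc n} (hX : SymT X) (hp : ∀ v, fderiv ℝ q x v = ⟪p, v⟫_ℝ)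
    (hXX : ∀ v w, fderiv ℝ (fun y => fderiv ℝ q y w) x v = ⟪X v, w⟫_ℝ)
    {S : Set (Fin n → ℝ)} (hS : SymmSet S) :
    EigIn (confHess (fun y => Real.exp (-(((n : ℝ) - 2) / 2) * q y)) x) S ↔
      EigL (Real.exp (2 * q x) • Bop p X) S := by
  set c : ℝ := ((n : ℝ) - 2) / 2 with hc
  have hn2 : (0 : ℝ) < (n : ℝ) - 2 := by
    have : (3 : ℝ) ≤ n := by exact_mod_cast hn
    linarith
  have hd : Differentiable ℝ q := hq.differentiable (by norm_num)
  have hdd : Differentiable ℝ (fderiv ℝ q) :=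
    (hq.fderiv_right (m := 1) (by norm_num)).differentiable (by norm_num)
  have hf1 : ∀ y, HasFDerivAt (fun y => Real.exp (-c * q y))
      ((Real.exp (-c * q y) * -c) • fderiv ℝ q y) y := by
    intro y
    have := ((hd y).hasFDerivAt.const_mul (-c)).exp
    refine this.congr_fderiv ?_
    rw [smul_smul]
  have hpg : ∀ i, pgrad (fun y => Real.exp (-c * q y)) x i
      = (Real.exp (-c * q x) * -c) * ⟪p, EuclideanSpace.single i 1⟫_ℝ := by
    intro i
    rw [pgrad, (hf1 x).fderiv, smul_apply, hp, smul_eq_mul]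
  have hph : ∀ i j, phess (fun y => Real.exp (-c * q y)) x i j
      = Real.exp (-c * q x) * (c ^ 2 * (⟪p, EuclideanSpace.single i 1⟫_ℝ *
        ⟪p, EuclideanSpace.single j 1⟫_ℝ)
        - c * ⟪X (EuclideanSpace.single i 1), EuclideanSpace.single j 1⟫_ℝ) := by
    intro i j
    unfold phess
    have e : (fun y => fderiv ℝ (fun y => Real.exp (-c * q y)) y (EuclideanSpace.single j (1:ℝ)))
        = fun y => (Real.exp (-c * q y) * -c) * fderiv ℝ q y (EuclideanSpace.single j 1) := by
      funext y
      rw [(hf1 y).fderiv, smul_apply, smul_eq_mul]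
    rw [e]
    have e2 : DifferentiableAt ℝ (fun y => fderiv ℝ q y (EuclideanSpace.single j (1:ℝ))) x :=
      (hdd x).clm_apply (differentiableAt_const _)
    have e3 : HasFDerivAt (fun y => (Real.exp (-c * q y) * -c) *
      fderiv ℝ q y (EuclideanSpace.single j 1)) _ x :=
      ((hf1 x).mul_const (-c)).mul e2.hasFDerivAt
    rw [e3.fderiv]
    simp only [add_apply, smul_apply, smul_eq_mul, hXX, hp]
    ring
  have hsum : ∑ k, (pgrad (fun y => Real.exp (-c * q y)) x k) ^ 2
      = (Real.exp (-c * q x) * c) ^ 2 * ‖p‖ ^ 2 := by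
    rw [EuclideanSpace.norm_sq_eq, Finset.mul_sum]
    refine Finset.sum_congr rfl fun k _ => ?_
    rw [hpg, EuclideanSpace.inner_single_right]
    simp; ring
  have hE1 : (Real.exp (-c * q x)) ^ (-(((n : ℝ) + 2) / ((n : ℝ) - 2))) * Real.exp (-c * q x)
      = Real.exp (2 * q x) := by
    rw [← Real.exp_mul, ← Real.exp_add]
    congr 1
    rw [hc]; field_simp; ring
  have hE2 : (Real.exp (-c * q x)) ^ (-(2 * (n : ℝ) / ((n : ℝ) - 2))) * Real.exp (-c * q x) ^ 2
      = Real.exp (2 * q x) := by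
    rw [← Real.exp_mul, ← Real.exp_nat_mul, ← Real.exp_add]
    congr 1
    rw [hc]; push_cast; field_simp; ring
  have hM : ∀ i j, confHess (fun y => Real.exp (-c * q y)) x i j
      = ⟪(Real.exp (2 * q x) • Bop p X) (EuclideanSpace.single j 1),
        EuclideanSpace.single i 1⟫_ℝ := by
    intro i j
    have hl : confHess (fun y => Real.exp (-c * q y)) x i j =
      Real.exp (2 * q x) * (⟪X (EuclideanSpace.single i 1), EuclideanSpace.single j 1⟫_ℝ
        + ⟪p, EuclideanSpace.single i 1⟫_ℝ * ⟪p, EuclideanSpace.single j 1⟫_ℝ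
        - 1 / 2 * ‖p‖ ^ 2 * (if i = j then (1 : ℝ) else 0)) := by
      simp only [confHess, Matrix.of_apply]
      rw [hsum, hph, hpg, hpg]
      set P1 := (Real.exp (-c * q x)) ^ (-(((n : ℝ) + 2) / ((n : ℝ) - 2)))
      set P2 := (Real.exp (-c * q x)) ^ (-(2 * (n : ℝ) / ((n : ℝ) - 2)))
      have t1 : 2 / ((n : ℝ) - 2) = c⁻¹ := by rw [hc]; field_simp
      have t2 : 2 * (n : ℝ) / ((n : ℝ) - 2) ^ 2 = (c + 1) / c ^ 2 := by rw [hc]; field_simp; try ring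
      have t3 : 2 / ((n : ℝ) - 2) ^ 2 = 1 / 2 / c ^ 2 := by rw [hc]; field_simp; try ring
      have hc0 : c ≠ 0 := by rw [hc]; positivity
      rw [t1, t2, t3]
      generalize ⟪X (EuclideanSpace.single i 1), EuclideanSpace.single j 1⟫_ℝ = a1
      generalize ⟪p, EuclideanSpace.single i 1⟫_ℝ = a2
      generalize ⟪p, EuclideanSpace.single j 1⟫_ℝ = a3
      generalize (if i = j then (1 : ℝ) else 0) = d
      generalize Real.exp (-c * q x) = E at *
      trans -c⁻¹ * (P1 * E) * (c ^ 2 * (a2 * a3) - c * a1)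
        + (c + 1) / c ^ 2 * (P2 * E ^ 2) * c ^ 2 * a2 * a3 - 1 / 2 / c ^ 2 * (P2 * E ^ 2) * c ^ 2
          * ‖p‖ ^ 2 * d
      · ring
      · rw [hE1, hE2]; field_simp; ring
    rw [hl]
    have hin : ⟪(EuclideanSpace.single j (1:ℝ) : Euc n), EuclideanSpace.single i 1⟫_ℝ
        = if i = j then (1 : ℝ) else 0 := by
      rw [EuclideanSpace.inner_single_right]
      simp [Pi.single_apply]
    simp only [Bop, smul_apply, sub_apply, add_apply, rk_apply, real_inner_smul_left,
      inner_sub_left, inner_add_left, ContinuousLinearMap.id_apply, hin]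
    rw [hX (EuclideanSpace.single j 1), real_inner_comm _ (EuclideanSpace.single j (1:ℝ))]
    ring
  have hT := toEuc_eq hM
  have hH : (confHess (fun y => Real.exp (-c * q y)) x).IsHermitian := by
    ext i j
    rw [Matrix.conjTranspose_apply, star_trivial, hM, hM, real_inner_comm]
    exact (((Bop_symT hX).smul _) _ _).symm
  rw [eigIn_iff hS hH, hT]

/-! ### Closedness of the viscosity conditions -/

def PClosed {n : ℕ} (Pr : Euc n → (Euc n →L[ℝ] Euc n) → Prop) : Prop :=
  ∀ p X, SymT X → (∀ ε > 0, ∃ p' X', SymT X' ∧ ‖p' - p‖ ≤ ε ∧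
    (∀ v, |⟪X' v, v⟫_ℝ - ⟪X v, v⟫_ℝ| ≤ ε * ‖v‖ ^ 2) ∧ Pr p' X') → Pr p X

theorem grad_diff {n : ℕ} {p p' : Euc n} {ε : ℝ} (hp : ‖p' - p‖ ≤ ε) (v : Euc n) :
    |(⟪p', v⟫_ℝ ^ 2 - 1 / 2 * ‖p'‖ ^ 2 * ‖v‖ ^ 2) - (⟪p, v⟫_ℝ ^ 2 - 1 / 2 * ‖p‖ ^ 2 * ‖v‖ ^ 2)|
      ≤ 3 / 2 * (ε * (2 * ‖p‖ + ε)) * ‖v‖ ^ 2 := by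
  have hε : 0 ≤ ε := (norm_nonneg _).trans hp
  have hp' : ‖p'‖ ≤ ‖p‖ + ε := by
    have := norm_le_norm_add_norm_sub' p' p
    linarith
  have h1 : |⟪p', v⟫_ℝ - ⟪p, v⟫_ℝ| ≤ ε * ‖v‖ := by
    rw [← inner_sub_left]
    exact (abs_real_inner_le_norm _ _).trans (by gcongr)
  have h2 : |⟪p', v⟫_ℝ + ⟪p, v⟫_ℝ| ≤ (2 * ‖p‖ + ε) * ‖v‖ := by
    rw [← inner_add_left]
    refine (abs_real_inner_le_norm _ _).trans ?_
    gcongr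
    exact (norm_add_le _ _).trans (by linarith)
  have h3 : |⟪p', v⟫_ℝ ^ 2 - ⟪p, v⟫_ℝ ^ 2| ≤ ε * (2 * ‖p‖ + ε) * ‖v‖ ^ 2 := by
    rw [sq_sub_sq, abs_mul, mul_comm]
    calc _ ≤ (ε * ‖v‖) * ((2 * ‖p‖ + ε) * ‖v‖) := by gcongr
      _ = _ := by ring
  have h4 : |‖p'‖ ^ 2 - ‖p‖ ^ 2| ≤ ε * (2 * ‖p‖ + ε) := by
    rw [sq_sub_sq, abs_mul, mul_comm]
    have : |‖p'‖ - ‖p‖| ≤ ε := (abs_norm_sub_norm_le _ _).trans hp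
    have h5 : |‖p'‖ + ‖p‖| ≤ 2 * ‖p‖ + ε := by
      rw [abs_of_nonneg (by positivity)]; linarith
    gcongr
  have hv := sq_nonneg ‖v‖
  rw [abs_le] at h3 h4 ⊢
  have h6 := mul_le_mul_of_nonneg_right h4.1 hv
  have h7 := mul_le_mul_of_nonneg_right h4.2 hv
  constructor <;> nlinarith

theorem exists_small (a : ℝ) (ha : 0 ≤ a) {t : ℝ} (ht : 0 < t) :
    ∃ ε > 0, ε + 3 / 2 * (ε * (2 * a + ε)) ≤ t := by
  refine ⟨min 1 (t / (3 * a + 3)), by positivity, ?_⟩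
  set ε := min 1 (t / (3 * a + 3))
  have h0 : 0 < ε := by positivity
  have h1 : ε ≤ 1 := min_le_left _ _
  have h2 : ε * (3 * a + 3) ≤ t := by
    have : ε ≤ t / (3 * a + 3) := min_le_right _ _
    rwa [le_div_iff₀ (by positivity)] at this
  nlinarith

theorem Psup_closed {n : ℕ} {Γ : Set (Fin n → ℝ)} (hΓ : CondC Γ) : PClosed (Psup Γ) := by
  intro p X hX h
  refine EigL.closed_closure hΓ (Bop_symT hX) fun t ht => ?_
  obtain ⟨ε, hε, hs⟩ := exists_small ‖p‖ (norm_nonneg _) ht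
  obtain ⟨p', X', hX', hp, hXX, hP⟩ := h ε hε
  refine EigL.mono_closure hΓ ((Bop_symT hX).add (SymT.id.smul t)) (fun v => ?_) hP
  have e : ⟪(Bop p X + t • ContinuousLinearMap.id ℝ (Euc n)) v, v⟫_ℝ
      = ⟪Bop p X v, v⟫_ℝ + t * ‖v‖ ^ 2 := by
    simp [inner_add_left, real_inner_smul_left]
  rw [e, Bop_inner, Bop_inner]
  have h1 := (abs_le.1 (grad_diff hp v)).2
  have h2 := (abs_le.1 (hXX v)).2
  have h3 := mul_le_mul_of_nonneg_right hs (sq_nonneg ‖v‖)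
  linarith

theorem Psub_closed {n : ℕ} {Γ : Set (Fin n → ℝ)} (hΓ : CondC Γ) : PClosed (Psub Γ) := by
  intro p X hX h
  refine EigL.closed_compl hΓ (Bop_symT hX.neg) fun t ht => ?_
  obtain ⟨ε, hε, hs⟩ := exists_small ‖p‖ (norm_nonneg _) ht
  obtain ⟨p', X', hX', hp, hXX, hP⟩ := h ε hε
  have hsy := (Bop_symT (p := p) hX.neg).sub (SymT.id.smul t)
  refine EigL.compl_of_not hsy fun hcon => ?_
  refine EigL.not_compl hΓ.symmSet ?_ hP
  refine EigL.mono_open hΓ (Bop_symT hX'.neg) (fun v => ?_) hcon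
  have e : ⟪(Bop p (-X) - t • ContinuousLinearMap.id ℝ (Euc n)) v, v⟫_ℝ
      = ⟪Bop p (-X) v, v⟫_ℝ - t * ‖v‖ ^ 2 := by
    simp [inner_sub_left, real_inner_smul_left]
  rw [e, Bop_inner, Bop_inner]
  have h1 := (abs_le.1 (grad_diff hp v)).1
  have h2 := (abs_le.1 (hXX v)).2
  have h3 := mul_le_mul_of_nonneg_right hs (sq_nonneg ‖v‖)
  simp only [neg_apply, inner_neg_left]
  linarith

theorem PClosed.tau {n : ℕ} {Pr : Euc n → (Euc n →L[ℝ] Euc n) → Prop} (h : PClosed Pr)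
    {p : Euc n} {X : Euc n →L[ℝ] Euc n} (hX : SymT X)
    (hτ : ∀ τ : ℝ, 0 < τ → Pr p (X + τ • ContinuousLinearMap.id ℝ (Euc n))) : Pr p X := by
  refine h p X hX fun ε hε => ⟨p, _, hX.add (SymT.id.smul ε), by simpa using hε.le, fun v => ?_,
    hτ ε hε⟩
  simp [inner_add_left, real_inner_smul_left, abs_of_pos hε]

theorem Bop_neg_left {n : ℕ} (p : Euc n) (X : Euc n →L[ℝ] Euc n) : Bop (-p) X = Bop p X := by
  ext1 v
  simp [Bop]

theorem EigL.smul_iff {n : ℕ} {T : Euc n →L[ℝ] Euc n} {S : Set (Fin n → ℝ)} {t : ℝ} (ht : 0 < t)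
    (hS : ∀ d ∈ S, ∀ r : ℝ, 0 < r → r • d ∈ S) : EigL (t • T) S ↔ EigL T S := by
  refine ⟨fun h => ?_, fun h => h.smul fun d hd => hS d hd t ht⟩
  have := h.smul (t := t⁻¹) fun d hd => hS d hd t⁻¹ (inv_pos.2 ht)
  rwa [smul_smul, inv_mul_cancel₀ ht.ne', one_smul] at this

/-! ### Passing between `u` and its logarithm -/

/-- `ℓ = -(2/(n-2)) log u` -/
def lg {n : ℕ} (u : Euc n → ℝ) (x : Euc n) : ℝ := -(2 / ((n : ℝ) - 2)) * Real.log (u x)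

theorem nsub_pos {n : ℕ} (hn : 3 ≤ n) : (0 : ℝ) < (n : ℝ) - 2 := by
  have : (3 : ℝ) ≤ n := by exact_mod_cast hn
  linarith

theorem exp_lg {n : ℕ} (hn : 3 ≤ n) {u : Euc n → ℝ} {x : Euc n} (hu : 0 < u x) :
    Real.exp (-(((n : ℝ) - 2) / 2) * lg u x) = u x := by
  have := nsub_pos hn
  have e : -(((n : ℝ) - 2) / 2) * lg u x = Real.log (u x) := by
    unfold lg; field_simp
  rw [e, Real.exp_log hu]

theorem quad_fderiv1 {n : ℕ} (a : ℝ) (x p : Euc n) {X : Euc n →L[ℝ] Euc n} (hX : SymT X)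
    (v : Euc n) : fderiv ℝ (quad a x p X) x v = ⟪p, v⟫_ℝ := by
  rw [(quad_hasFDerivAt a x p hX x).fderiv]
  simp

theorem quad_fderiv2 {n : ℕ} (a : ℝ) (x p : Euc n) {X : Euc n →L[ℝ] Euc n} (hX : SymT X)
    (v w : Euc n) : fderiv ℝ (fun y => fderiv ℝ (quad a x p X) y w) x v = ⟪X v, w⟫_ℝ := by
  have e : (fun y => fderiv ℝ (quad a x p X) y w) = quad ⟪p, w⟫_ℝ x (X w) 0 := by
    funext y
    rw [(quad_hasFDerivAt a x p hX y).fderiv]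
    simp only [innerSL_apply_apply, quad, inner_add_left, zero_apply, inner_zero_left, mul_zero,
      add_zero]
    rw [hX (y - x) w, real_inner_comm (y - x) (X w)]
  rw [e, quad_fderiv1 _ _ _ (by intro x y; simp), hX, real_inner_comm]

theorem vis_sup {n : ℕ} (hn : 3 ≤ n) {Γ : Set (Fin n → ℝ)} (hΓ : CondC Γ) {Ω : Set (Euc n)}
    (hΩ : IsOpen Ω) {u : Euc n → ℝ} (hpos : ∀ x ∈ Ω, 0 < u x) (hs : SupersolU Γ Ω u) :
    Vis (Psup Γ) Ω (lg u) := by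
  intro x hx p X hX hJ
  refine (Psup_closed hΓ).tau hX fun τ hτ => ?_
  have hX' := hX.add (SymT.id.smul τ)
  have hq := hJ.le_quad hτ
  have hn2 := nsub_pos hn
  have := hs x hx (fun y => Real.exp (-(((n : ℝ) - 2) / 2) *
    quad (lg u x) x p (X + τ • ContinuousLinearMap.id ℝ (Euc n)) y))
    ((contDiff_const.mul (quad_contDiff _ _ _ _)).exp) (fun y => Real.exp_pos _)
    (by simp only [quad_self]; exact exp_lg hn (hpos x hx)) (by
      filter_upwards [nhdsWithin_le_nhds hq, self_mem_nhdsWithin] with y h1 h2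
      rw [← exp_lg hn (hpos y h2)]
      apply Real.exp_le_exp.2
      nlinarith)
  rw [confHess_eig hn (quad_contDiff _ _ _ _) hX' (quad_fderiv1 _ _ _ hX') (quad_fderiv2 _ _ _ hX')
    hΓ.symmSet.closure, EigL.smul_iff (Real.exp_pos _) fun d hd r hr => hΓ.closure_smul hd hr] at this
  exact this

theorem vis_sub {n : ℕ} (hn : 3 ≤ n) {Γ : Set (Fin n → ℝ)} (hΓ : CondC Γ) {Ω : Set (Euc n)}
    (hΩ : IsOpen Ω) {u : Euc n → ℝ} (hpos : ∀ x ∈ Ω, 0 < u x) (hs : SubsolU Γ Ω u) :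
    Vis (Psub Γ) Ω (fun x => -lg u x) := by
  intro x hx p X hX hJ
  refine (Psub_closed hΓ).tau hX fun τ hτ => ?_
  have hX' := (hX.add (SymT.id.smul τ)).neg
  have hq := hJ.le_quad hτ
  have hn2 := nsub_pos hn
  have := hs x hx (fun y => Real.exp (-(((n : ℝ) - 2) / 2) *
    quad (lg u x) x (-p) (-(X + τ • ContinuousLinearMap.id ℝ (Euc n))) y))
    ((contDiff_const.mul (quad_contDiff _ _ _ _)).exp) (fun y => Real.exp_pos _)
    (by simp only [quad_self]; exact exp_lg hn (hpos x hx)) (by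
      filter_upwards [nhdsWithin_le_nhds hq, self_mem_nhdsWithin] with y h1 h2
      rw [← exp_lg hn (hpos y h2)]
      apply Real.exp_le_exp.2
      simp only [quad, neg_apply, inner_neg_left] at h1 ⊢
      nlinarith)
  rw [confHess_eig hn (quad_contDiff _ _ _ _) hX' (quad_fderiv1 _ _ _ hX') (quad_fderiv2 _ _ _ hX')
    hΓ.symmSet.compl, EigL.smul_iff (Real.exp_pos _) fun d hd r hr => hΓ.compl_smul hd hr,
    Bop_neg_left] at this
  exact this

theorem sup_of_vis {n : ℕ} (hn : 3 ≤ n) {Γ : Set (Fin n → ℝ)} (hΓ : CondC Γ)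
    {u : Euc n → ℝ} {x : Euc n} (hu : ∀ᶠ y in 𝓝 x, 0 < u y)
    (hv : ∀ p X, SymT X → Jet (lg u) x p X → Psup Γ p X) {φ : Euc n → ℝ} (hφ : ContDiff ℝ 2 φ)
    (hφp : ∀ y, 0 < φ y) (hx : φ x = u x) (hle : ∀ᶠ y in 𝓝 x, φ y ≤ u y) :
    EigIn (confHess φ x) (closure Γ) := by
  have hn2 := nsub_pos hn
  have hq : ContDiff ℝ 2 (lg φ) := contDiff_const.mul (hφ.log fun y => (hφp y).ne')
  obtain ⟨p, X, hX, hC, h1, h2⟩ := C2At.of_contDiff hq x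
  have hJ : Jet (lg u) x p X := by
    refine Jet.of_touch hC hX (by simp [lg, hx]) ?_
    filter_upwards [hle] with y h
    have := Real.log_le_log (hφp y) h
    have h3 : 0 < 2 / ((n : ℝ) - 2) := by positivity
    unfold lg; nlinarith
  have := hv p X hX hJ
  have e : φ = fun y => Real.exp (-(((n : ℝ) - 2) / 2) * lg φ y) := by
    funext y; rw [exp_lg hn (hφp y)]
  rw [e, confHess_eig hn hq hX h1 h2 hΓ.symmSet.closure, EigL.smul_iff (Real.exp_pos _)
    fun d hd r hr => hΓ.closure_smul hd hr]
  exact this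

theorem C2At.neg {n : ℕ} {ψ : Euc n → ℝ} {x p : Euc n} {X : Euc n →L[ℝ] Euc n}
    (h : C2At ψ x p X) : C2At (fun y => -ψ y) x (-p) (-X) := by
  have := h.comp (F := fun t => -t) (F' := fun _ => -1) (F'' := 0)
    (Eventually.of_forall fun t => hasDerivAt_neg t) (hasDerivAt_const _ _)
  exact this.congr (fun y => rfl) (by simp) (by ext1 v; simp)

theorem sub_of_vis {n : ℕ} (hn : 3 ≤ n) {Γ : Set (Fin n → ℝ)} (hΓ : CondC Γ)
    {u : Euc n → ℝ} {x : Euc n} (hu : ∀ᶠ y in 𝓝 x, 0 < u y)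
    (hv : ∀ p X, SymT X → Jet (fun y => -lg u y) x p X → Psub Γ p X) {φ : Euc n → ℝ}
    (hφ : ContDiff ℝ 2 φ)
    (hφp : ∀ y, 0 < φ y) (hx : φ x = u x) (hle : ∀ᶠ y in 𝓝 x, u y ≤ φ y) :
    EigIn (confHess φ x) Γᶜ := by
  have hn2 := nsub_pos hn
  have hq : ContDiff ℝ 2 (lg φ) := contDiff_const.mul (hφ.log fun y => (hφp y).ne')
  obtain ⟨p, X, hX, hC, h1, h2⟩ := C2At.of_contDiff hq x
  have hJ : Jet (fun y => -lg u y) x (-p) (-X) := by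
    refine Jet.of_touch hC.neg hX.neg (by simp [lg, hx]) ?_
    filter_upwards [hle, hu] with y h hy
    have := Real.log_le_log hy h
    have h3 : 0 < 2 / ((n : ℝ) - 2) := by positivity
    unfold lg; nlinarith
  have := hv _ _ hX.neg hJ
  rw [Psub, Bop_neg_left, neg_neg] at this
  have e : φ = fun y => Real.exp (-(((n : ℝ) - 2) / 2) * lg φ y) := by
    funext y; rw [exp_lg hn (hφp y)]
  rw [e, confHess_eig hn hq hX h1 h2 hΓ.symmSet.compl, EigL.smul_iff (Real.exp_pos _)
    fun d hd r hr => hΓ.compl_smul hd hr]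
  exact this

/-! ### Radial functions -/

theorem normSq_C2At {n : ℕ} (x : Euc n) :
    C2At (fun y : Euc n => ‖y‖ ^ 2) x ((2 : ℝ) • x) ((2 : ℝ) • ContinuousLinearMap.id ℝ (Euc n)) := by
  refine (quad_C2At 0 0 0 (SymT.id.smul 2) x).congr (fun y => ?_) ?_ rfl
  · simp [quad, real_inner_smul_left]
  · simp

theorem radial_C2At {n : ℕ} (x : Euc n) {F F' : ℝ → ℝ} {F'' : ℝ}
    (hF : ∀ᶠ t in 𝓝 (‖x‖ ^ 2), HasDerivAt F (F' t) t) (hF' : HasDerivAt F' F'' (‖x‖ ^ 2)) :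
    C2At (fun y : Euc n => F (‖y‖ ^ 2)) x ((2 * F' (‖x‖ ^ 2)) • x)
      ((2 * F' (‖x‖ ^ 2)) • ContinuousLinearMap.id ℝ (Euc n) + (4 * F'') • rk x) := by
  refine ((normSq_C2At x).comp hF hF').congr (fun y => rfl) ?_ ?_
  · rw [smul_smul]; ring_nf
  · ext1 v
    simp only [add_apply, smul_apply, ContinuousLinearMap.id_apply, rk_apply,
      real_inner_smul_left, smul_smul]
    congr 1
    · ring_nf
    · ring_nf

theorem rk_smul {n : ℕ} (t : ℝ) (x : Euc n) : rk (t • x) = t ^ 2 • rk x := by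
  ext1 v
  simp only [smul_apply, rk_apply, real_inner_smul_left, smul_smul]
  ring_nf

/-- the barrier -/
theorem barrier {n : ℕ} {x : Euc n} (hx : x ≠ 0) {b e : ℝ} (he : e ≠ 0)
    (hb : 0 < 1 + b * (‖x‖ ^ 2) ^ e) :
    ∃ p X, SymT X ∧ C2At (fun y : Euc n => 1 / e * Real.log (1 + b * (‖y‖ ^ 2) ^ e)) x p X ∧
      Bop p X = (2 * (b * (‖x‖ ^ 2) ^ e) / ((1 + b * (‖x‖ ^ 2) ^ e) ^ 2 * ‖x‖ ^ 2)) •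
        (ContinuousLinearMap.id ℝ (Euc n) + (2 * (e - 1)) • rk (‖x‖⁻¹ • x)) := by
  have hxn : 0 < ‖x‖ := norm_pos_iff.2 hx
  set s0 := ‖x‖ ^ 2 with hs0
  have hs : 0 < s0 := by positivity
  have hc : ContinuousAt (fun s : ℝ => 1 + b * s ^ e) s0 := by
    have : ContinuousAt (fun s : ℝ => s ^ e) s0 := Real.continuousAt_rpow_const _ _ (Or.inl hs.ne')
    fun_prop
  set F' : ℝ → ℝ := fun s => b * s ^ (e - 1) / (1 + b * s ^ e) with hF'
  have hF : ∀ᶠ t in 𝓝 s0, HasDerivAt (fun s : ℝ => 1 / e * Real.log (1 + b * s ^ e)) (F' t) t := by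
    filter_upwards [lt_mem_nhds hs, hc.eventually (lt_mem_nhds hb)] with t ht1 ht2
    have h1 : HasDerivAt (fun s : ℝ => 1 + b * s ^ e) (b * (e * t ^ (e - 1))) t :=
      ((Real.hasDerivAt_rpow_const (Or.inl ht1.ne')).const_mul b).const_add 1
    refine ((h1.log ht2.ne').const_mul (1 / e)).congr_deriv ?_
    rw [hF']; field_simp
  have hF'' : HasDerivAt F' ((b * ((e - 1) * s0 ^ (e - 1 - 1)) * (1 + b * s0 ^ e)
      - b * s0 ^ (e - 1) * (b * (e * s0 ^ (e - 1)))) / (1 + b * s0 ^ e) ^ 2) s0 := by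
    have h1 : HasDerivAt (fun s : ℝ => 1 + b * s ^ e) (b * (e * s0 ^ (e - 1))) s0 :=
      ((Real.hasDerivAt_rpow_const (Or.inl hs.ne')).const_mul b).const_add 1
    have h2 : HasDerivAt (fun s : ℝ => b * s ^ (e - 1)) (b * ((e - 1) * s0 ^ (e - 1 - 1))) s0 :=
      (Real.hasDerivAt_rpow_const (Or.inl hs.ne')).const_mul b
    exact h2.div h1 hb.ne'
  refine ⟨_, _, ?_, radial_C2At x hF hF'', ?_⟩
  · exact (SymT.id.smul _).add ((SymT.rk x).smul _)
  rw [← hs0]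
  have e1 : s0 ^ (e - 1) = s0 ^ e / s0 := by rw [Real.rpow_sub_one hs.ne']
  have e2 : s0 ^ (e - 1 - 1) = s0 ^ e / s0 ^ 2 := by
    rw [Real.rpow_sub_one hs.ne', e1]; field_simp
  simp only [hF']
  rw [e1, e2]
  unfold Bop
  have e0 : ∀ t : ℝ, ‖t • x‖ ^ 2 = t ^ 2 * s0 := by
    intro t; rw [norm_smul, mul_pow, Real.norm_eq_abs, sq_abs]
  rw [rk_smul, rk_smul, e0]
  have e3 : ‖x‖⁻¹ ^ 2 = s0⁻¹ := by rw [hs0, inv_pow]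
  rw [e3]
  generalize hg : s0 ^ e = g at *
  have hb' := hb.ne'
  have hs' := hs.ne'
  ext1 v
  simp only [sub_apply, add_apply, smul_apply, ContinuousLinearMap.id_apply, smul_smul, smul_add]
  rw [add_assoc, add_sub_right_comm, ← sub_smul, ← add_smul]
  congr 2
  · field_simp; ring
  · field_simp; ring

/-! ### Comparison on annuli -/

theorem annulus_max {n : ℕ} {Pr : Euc n → (Euc n →L[ℝ] Euc n) → Prop} {m Ψ : Euc n → ℝ}
    {r1 r0 : ℝ} (h1 : 0 < r1) (h0 : r0 < 1)
    (hm : Vis Pr (ball (0 : Euc n) 1 \ {0}) m)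
    (hmc : ContinuousOn m (ball (0 : Euc n) 1 \ {0}))
    (hΨ : ∀ x : Euc n, r1 ≤ ‖x‖ → ‖x‖ ≤ r0 → ∃ p X, SymT X ∧ C2At Ψ x p X ∧ ¬ Pr p X)
    {Mb : ℝ} (hb1 : ∀ x : Euc n, ‖x‖ = r1 → m x - Ψ x ≤ Mb)
    (hb0 : ∀ x : Euc n, ‖x‖ = r0 → m x - Ψ x ≤ Mb) (x : Euc n) (hx1 : r1 ≤ ‖x‖)
    (hx0 : ‖x‖ ≤ r0) : m x - Ψ x ≤ Mb := by
  set D : Set (Euc n) := closedBall 0 r0 ∩ {x | r1 ≤ ‖x‖} with hD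
  have hDc : IsCompact D := (isCompact_closedBall _ _).inter_right
    (isClosed_le continuous_const continuous_norm)
  have hmem : ∀ y, y ∈ D ↔ ‖y‖ ≤ r0 ∧ r1 ≤ ‖y‖ := by intro y; simp [hD]
  have hsub : D ⊆ ball (0 : Euc n) 1 \ {0} := by
    intro y hy
    rw [hmem] at hy
    refine ⟨by simp; linarith, ?_⟩
    intro hc
    rw [mem_singleton_iff] at hc
    rw [hc, norm_zero] at hy; linarith [hy.2]
  have hΨc : ContinuousOn Ψ D := by
    intro y hy
    rw [hmem] at hy
    obtain ⟨p, X, _, ⟨G, hG, _, _⟩, _⟩ := hΨ y hy.2 hy.1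
    exact hG.self_of_nhds.continuousAt.continuousWithinAt
  obtain ⟨z, hz, hmax⟩ := hDc.exists_isMaxOn ⟨x, (hmem x).2 ⟨hx0, hx1⟩⟩
    ((hmc.mono hsub).sub hΨc)
  have hle : ∀ y ∈ D, m y - Ψ y ≤ m z - Ψ z := fun y hy => hmax hy
  have hz' := (hmem z).1 hz
  refine (hle x ((hmem x).2 ⟨hx0, hx1⟩)).trans ?_
  rcases eq_or_lt_of_le hz'.1 with h | h
  · exact hb0 z h
  rcases eq_or_lt_of_le hz'.2 with h' | h'
  · exact hb1 z h'.symm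
  exfalso
  obtain ⟨p, X, hX, hC, hP⟩ := hΨ z hz'.2 hz'.1
  apply hP
  refine hm z (hsub hz) p X hX ?_
  have hC' : C2At (fun y => Ψ y + (m z - Ψ z)) z p X := by
    have := hC.add (quad_C2At (n := n) (m z - Ψ z) 0 0 (X := 0) (by intro x y; simp) z)
    refine this.congr (fun y => by simp [quad]) (by simp) (by simp)
  refine Jet.of_touch hC' hX (by ring) ?_
  filter_upwards [continuous_norm.continuousAt.eventually (lt_mem_nhds h'),
    continuous_norm.continuousAt.eventually (gt_mem_nhds h)] with y hy1 hy2
  have := hle y ((hmem y).2 ⟨hy2.le, hy1.le⟩)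
  linarith

/-! ### Bounds near the singularity -/

theorem exists_delta {n : ℕ} {Γ : Set (Fin n → ℝ)} (hΓ : CondC Γ)
    (hstar : lamStar n ∉ closure Γ) (hstar' : (fun i => -(lamStar n i)) ∈ Γ) :
    ∃ δ : ℝ, 0 < δ ∧ δ < 1 ∧ (fun i : Fin n => if i.val = 0 then 1 + δ else -1 + δ) ∉ closure Γ ∧
      (fun i : Fin n => if i.val = 0 then -1 - δ else 1 - δ) ∈ Γ := by
  have c1 : Continuous fun δ : ℝ => (fun i : Fin n => if i.val = 0 then 1 + δ else -1 + δ) := by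
    refine continuous_pi fun i => ?_
    split_ifs <;> fun_prop
  have c2 : Continuous fun δ : ℝ => (fun i : Fin n => if i.val = 0 then -1 - δ else 1 - δ) := by
    refine continuous_pi fun i => ?_
    split_ifs <;> fun_prop
  have e1 : ∀ᶠ δ in 𝓝 (0 : ℝ),
      (fun i : Fin n => if i.val = 0 then 1 + δ else -1 + δ) ∈ (closure Γ)ᶜ := by
    refine c1.continuousAt.eventually (isClosed_closure.isOpen_compl.mem_nhds ?_)
    simp only [add_zero]; exact hstar
  have e2 : ∀ᶠ δ in 𝓝 (0 : ℝ),
      (fun i : Fin n => if i.val = 0 then -1 - δ else 1 - δ) ∈ Γ := by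
    refine c2.continuousAt.eventually (hΓ.2.2.1.mem_nhds ?_)
    convert hstar' using 2 with i
    simp only [lamStar]; split_ifs <;> simp
  have e3 : ∀ᶠ δ in 𝓝[>] (0 : ℝ), δ < 1 := nhdsWithin_le_nhds (gt_mem_nhds one_pos)
  have e4 : ∀ᶠ δ in 𝓝[>] (0 : ℝ), 0 < δ := self_mem_nhdsWithin
  obtain ⟨δ, h1, h2, h3, h4⟩ := (e4.and (e3.and ((e1.filter_mono nhdsWithin_le_nhds).and
    (e2.filter_mono nhdsWithin_le_nhds)))).exists
  exact ⟨δ, h1, h2, h3, h4⟩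

theorem sphere_bdd {n : ℕ} {m : Euc n → ℝ} {r : ℝ} (h0 : 0 < r) (h1 : r < 1)
    (hmc : ContinuousOn m (ball (0 : Euc n) 1 \ {0})) : ∃ M, ∀ x : Euc n, ‖x‖ = r → m x ≤ M := by
  have hs : sphere (0 : Euc n) r ⊆ ball (0 : Euc n) 1 \ {0} := by
    intro x hx
    rw [mem_sphere_zero_iff_norm] at hx
    refine ⟨by simp [hx, h1], fun h => ?_⟩
    rw [mem_singleton_iff] at h; rw [h, norm_zero] at hx; linarith
  obtain ⟨M, hM⟩ := (isCompact_sphere (0 : Euc n) r).bddAbove_image (hmc.mono hs)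
  exact ⟨M, fun x hx => hM ⟨x, by simpa using hx, rfl⟩⟩

theorem bound_sub {n : ℕ} (hn : 3 ≤ n) {Γ : Set (Fin n → ℝ)} (hΓ : CondC Γ) {δ : ℝ} (hδ : 0 < δ)
    (hG : (fun i : Fin n => if i.val = 0 then -1 - δ else 1 - δ) ∈ Γ) {m : Euc n → ℝ}
    (hm : Vis (Psub Γ) (ball (0 : Euc n) 1 \ {0}) m)
    (hmc : ContinuousOn m (ball (0 : Euc n) 1 \ {0}))
    (hgrow : ∀ C : ℝ, ∀ᶠ y in 𝓝[≠] (0 : Euc n), m y + 2 * Real.log ‖y‖ ≤ C)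
    {r0 M : ℝ} (h1 : r0 < 1) (hM : ∀ x : Euc n, ‖x‖ = r0 → m x ≤ M) (x : Euc n)
    (hx : x ≠ 0) (hx0 : ‖x‖ ≤ r0) : m x ≤ M := by
  have hxn : 0 < ‖x‖ := norm_pos_iff.2 hx
  have hG' : (fun i : Fin n => if i.val = 0 then (1 : ℝ) + (2 * (-(δ / 2) - 1)) else 1) ∈ Γ := by
    exact hΓ.add_nonneg hG (fun i => by split_ifs <;> linarith)
  have key : ∀ b : ℝ, 0 < b → m x ≤ M + 2 / δ * Real.log (1 + b * (‖x‖ ^ 2) ^ (-(δ / 2))) := by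
    intro b hb
    have hev := hgrow (M + 2 / δ * Real.log b)
    rw [eventually_nhdsWithin_iff, Metric.eventually_nhds_iff] at hev
    obtain ⟨ρ, hρ, hev⟩ := hev
    set r1 := min (ρ / 2) ‖x‖ with hr1
    have hr1p : 0 < r1 := by positivity
    have hpos : ∀ y : Euc n, 0 ≤ b * (‖y‖ ^ 2) ^ (-(δ / 2)) := fun y => by positivity
    have := annulus_max (Ψ := fun y : Euc n => -(1 / (-(δ / 2)) *
      Real.log (1 + b * (‖y‖ ^ 2) ^ (-(δ / 2))))) hr1p h1 hm hmc ?_ (Mb := M) ?_ ?_ x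
      (min_le_right _ _) hx0
    · have e : 1 / (-(δ / 2)) = -(2 / δ) := by field_simp
      rw [e] at this; linarith
    · intro y hy1 hy0
      have hy : y ≠ 0 := by rintro rfl; rw [norm_zero] at hy1; linarith
      obtain ⟨p, X, hX, hC, hB⟩ := barrier hy (b := b) (e := -(δ / 2)) (by linarith)
        (by have := hpos y; linarith)
      refine ⟨-p, -X, hX.neg, hC.neg, fun hP => ?_⟩
      rw [Psub, Bop_neg_left, neg_neg, hB] at hP
      refine EigL.not_compl hΓ.symmSet ?_ hP
      have hyn : 0 < ‖y‖ := norm_pos_iff.2 hy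
      refine EigL.smul (fun d hd => hΓ.2.2.2.2.1 d hd _ (by positivity)) ?_
      rw [← one_smul ℝ (ContinuousLinearMap.id ℝ (Euc n))]
      exact eigL_rk (by omega) (by rw [norm_smul, norm_inv, norm_norm, inv_mul_cancel₀ hyn.ne']) _ _ hG'
    · intro y hy
      have hyn : 0 < ‖y‖ := by rw [hy]; exact hr1p
      have h3 := hev (y := y) (by rw [dist_zero_right, hy]; exact (min_le_left _ _).trans_lt (by linarith))
        (norm_pos_iff.1 hyn)
      have h4 : Real.log (b * (‖y‖ ^ 2) ^ (-(δ / 2))) ≤ Real.log (1 + b * (‖y‖ ^ 2) ^ (-(δ / 2))) :=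
        Real.log_le_log (by positivity) (by linarith)
      rw [Real.log_mul hb.ne' (by positivity), Real.log_rpow (by positivity), Real.log_pow] at h4
      have h5 := mul_le_mul_of_nonneg_left h4 (by positivity : 0 ≤ 2 / δ)
      have e : 1 / (-(δ / 2)) = -(2 / δ) := by field_simp
      have e2 : 2 / δ * (Real.log b + -(δ / 2) * ((2 : ℕ) * Real.log ‖y‖))
        = 2 / δ * Real.log b - 2 * Real.log ‖y‖ := by push_cast; field_simp; ring
      rw [e]
      linarith
    · intro y hy
      have h3 := hM y hy
      have h4 := Real.log_nonneg (x := 1 + b * (‖y‖ ^ 2) ^ (-(δ / 2))) (by have := hpos y; linarith)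
      have e : 1 / (-(δ / 2)) = -(2 / δ) := by field_simp
      have h5 : 0 ≤ 2 / δ * Real.log (1 + b * (‖y‖ ^ 2) ^ (-(δ / 2))) := by positivity
      rw [e]; linarith
  have hlim : Tendsto (fun b : ℝ => M + 2 / δ * Real.log (1 + b * (‖x‖ ^ 2) ^ (-(δ / 2))))
      (𝓝[>] 0) (𝓝 M) := by
    have : ContinuousAt (fun b : ℝ => M + 2 / δ * Real.log (1 + b * (‖x‖ ^ 2) ^ (-(δ / 2)))) 0 := by
      refine continuousAt_const.add (continuousAt_const.mul (ContinuousAt.log (by fun_prop) ?_))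
      simp
    have h := this.tendsto
    simp only [zero_mul, add_zero, Real.log_one, mul_zero] at h
    exact h.mono_left nhdsWithin_le_nhds
  refine ge_of_tendsto hlim ?_
  filter_upwards [self_mem_nhdsWithin] with b hb using key b hb

theorem bound_sup {n : ℕ} (hn : 3 ≤ n) {Γ : Set (Fin n → ℝ)} (hΓ : CondC Γ) {δ : ℝ} (hδ : 0 < δ)
    (hG : (fun i : Fin n => if i.val = 0 then 1 + δ else -1 + δ) ∉ closure Γ) {m : Euc n → ℝ}
    (hm : Vis (Psup Γ) (ball (0 : Euc n) 1 \ {0}) m)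
    (hmc : ContinuousOn m (ball (0 : Euc n) 1 \ {0}))
    {r0 M : ℝ} (h1 : r0 < 1) (hM : ∀ x : Euc n, ‖x‖ = r0 → m x ≤ M) (x : Euc n)
    (hx : x ≠ 0) (hx0 : ‖x‖ ≤ r0) : m x ≤ M := by
  have hxn : 0 < ‖x‖ := norm_pos_iff.2 hx
  have e : 1 / (-(δ / 2)) = -(2 / δ) := by field_simp
  have hG' : (fun i : Fin n => if i.val = 0 then (-1 : ℝ) + (-(2 * (-(δ / 2) - 1))) else -1)
      ∈ (closure Γ)ᶜ := by
    intro hcon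
    apply hG
    exact hΓ.closure_add_nonneg hcon (fun i => by split_ifs <;> linarith)
  set g : Euc n → ℝ := fun y => (‖y‖ ^ 2) ^ (-(δ / 2)) with hg
  have hgp : ∀ y : Euc n, y ≠ 0 → 0 < g y := fun y hy => by
    have := norm_pos_iff.2 hy
    simp only [hg]; positivity
  have key : ∀ A : ℝ, g x < A → m x ≤ M - 2 / δ * Real.log (1 - g x / A) := by
    intro A hA
    have hA0 : 0 < A := (hgp x hx).trans hA
    set r1 := A ^ (-(1 / δ)) with hr1
    have hr1p : 0 < r1 := by positivity
    have hr1A : (r1 ^ 2) ^ (-(δ / 2)) = A := by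
      rw [hr1, ← Real.rpow_natCast, ← Real.rpow_mul hA0.le, ← Real.rpow_mul hA0.le]
      have : -(1 / δ) * ((2 : ℕ) : ℝ) * -(δ / 2) = 1 := by push_cast; field_simp
      rw [this, Real.rpow_one]
    have hmono : ∀ y : Euc n, r1 ≤ ‖y‖ → g y ≤ A := by
      intro y hy
      rw [← hr1A]
      exact Real.rpow_le_rpow_of_nonpos (by positivity) (by gcongr) (by linarith)
    have hr1x : r1 ≤ ‖x‖ := by
      by_contra hcon
      push Not at hcon
      have : A ≤ g x := by
        rw [← hr1A]
        exact Real.rpow_le_rpow_of_nonpos (by positivity) (by gcongr) (by linarith)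
      linarith
    obtain ⟨M1, hM1⟩ := sphere_bdd hr1p ((hr1x.trans hx0).trans_lt h1) hmc
    set κ := min (1 / 2) (Real.exp (-(δ / 2) * (M1 - M))) with hκ
    have hκ0 : 0 < κ := by positivity
    have hκ1 : κ ≤ 1 / 2 := min_le_left _ _
    have hκ2 : Real.log κ ≤ -(δ / 2) * (M1 - M) := by
      rw [← Real.log_exp (-(δ / 2) * (M1 - M))]
      exact Real.log_le_log hκ0 (min_le_right _ _)
    set b := -((1 - κ) / A) with hb
    have hb0 : b < 0 := by
      have : 0 < (1 - κ) / A := div_pos (by linarith) hA0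
      linarith
    have hbA : b * A = -(1 - κ) := by rw [hb]; field_simp
    have hpos : ∀ y : Euc n, r1 ≤ ‖y‖ → κ ≤ 1 + b * g y := fun y hy => by
      have := hmono y hy
      nlinarith
    have := annulus_max (Ψ := fun y : Euc n => (1 / (-(δ / 2)) *
      Real.log (1 + b * (‖y‖ ^ 2) ^ (-(δ / 2))))) hr1p h1 hm hmc ?_ (Mb := M) ?_ ?_ x
      hr1x hx0
    · rw [e] at this
      have h2 : Real.log (1 - g x / A) ≤ Real.log (1 + b * g x) := by
        apply Real.log_le_log
        · rw [sub_pos, div_lt_one hA0]; exact hA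
        · rw [hb]
          have := hgp x hx
          have : 0 < κ * g x / A := by positivity
          have e3 : 1 + -((1 - κ) / A) * g x = 1 - g x / A + κ * g x / A := by field_simp; ring
          linarith
      have h5 := mul_le_mul_of_nonneg_left h2 (by positivity : 0 ≤ 2 / δ)
      simp only [hg] at h5 ⊢
      linarith
    · intro y hy1 hy0
      have hy : y ≠ 0 := by rintro rfl; rw [norm_zero] at hy1; linarith
      have hp := hpos y hy1
      obtain ⟨p, X, hX, hC, hB⟩ := barrier hy (b := b) (e := -(δ / 2)) (by linarith)
        (by simp only [hg] at hp; linarith)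
      refine ⟨p, X, hX, hC, fun hP => ?_⟩
      rw [Psup, hB] at hP
      refine EigL.not_compl hΓ.symmSet.closure hP ?_
      have hyn : 0 < ‖y‖ := norm_pos_iff.2 hy
      have hgy := hgp y hy
      have e4 : ∀ (t : ℝ) (θ : Euc n), t • (ContinuousLinearMap.id ℝ (Euc n) + (2 * (-(δ / 2) - 1)) • rk θ)
        = (-t) • ((-1 : ℝ) • ContinuousLinearMap.id ℝ (Euc n) + (-(2 * (-(δ / 2) - 1))) • rk θ) := by
        intro t θ
        module
      rw [e4]
      refine EigL.smul (S := (closure Γ)ᶜ) (fun d hd hcon => hd ?_) ?_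
      rotate_left
      · exact eigL_rk (by omega) (by rw [norm_smul, norm_inv, norm_norm, inv_mul_cancel₀ hyn.ne']) _ _ hG'
      · have ht : 0 < -(2 * (b * (‖y‖ ^ 2) ^ (-(δ / 2))) /
            ((1 + b * (‖y‖ ^ 2) ^ (-(δ / 2))) ^ 2 * ‖y‖ ^ 2)) := by
          simp only [hg] at hgy hp
          rw [← neg_div]
          apply div_pos
          · nlinarith
          · have : 0 < 1 + b * (‖y‖ ^ 2) ^ (-(δ / 2)) := by linarith
            positivity
        have := hΓ.closure_smul hcon (inv_pos.2 ht)
        rwa [smul_smul, inv_mul_cancel₀ ht.ne', one_smul] at this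
    · intro y hy
      have h3 := hM1 y hy
      rw [hy, hr1A, hbA, e]
      have e5 : 1 + -(1 - κ) = κ := by ring
      rw [e5]
      have h5 := mul_le_mul_of_nonneg_left hκ2 (by positivity : 0 ≤ 2 / δ)
      have e6 : 2 / δ * (-(δ / 2) * (M1 - M)) = -(M1 - M) := by field_simp
      linarith
    · intro y hy
      have h3 := hM y hy
      have hp := hpos y (by rw [hy]; exact hr1x.trans hx0)
      have hgy : 0 ≤ g y := by simp only [hg]; positivity
      have h4 := Real.log_nonpos (x := 1 + b * (‖y‖ ^ 2) ^ (-(δ / 2))) (by simp only [hg] at hp; linarith)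
        (by simp only [hg] at hgy; nlinarith)
      have h5 := mul_nonneg (by positivity : 0 ≤ 2 / δ) (neg_nonneg.2 h4)
      rw [e]; linarith
  have hlim : Tendsto (fun A : ℝ => M - 2 / δ * Real.log (1 - g x / A)) atTop (𝓝 M) := by
    have h2 : Tendsto (fun A : ℝ => 1 - g x / A) atTop (𝓝 1) := by
      have := (tendsto_const_nhds (x := (1 : ℝ))).sub (tendsto_const_nhds.div_atTop tendsto_id (a := g x))
      simpa using this
    have h3 := (tendsto_const_nhds (x := M)).sub
      ((tendsto_const_nhds (x := 2 / δ)).mul (h2.log one_ne_zero))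
    simpa using h3
  refine ge_of_tendsto hlim ?_
  filter_upwards [eventually_gt_atTop (g x)] with A hA using key A hA

/-! ### Extending the viscosity property across the origin -/

def Hyp0 {n : ℕ} (Pr : Euc n → (Euc n →L[ℝ] Euc n) → Prop) (δ : ℝ) : Prop :=
  ∀ s : ℝ, 0 < s → ∀ θ : Euc n, ‖θ‖ = 1 → ∀ p X, SymT X →
    (∀ v, ⟪X v, v⟫_ℝ + 1 / 2 * ‖p‖ ^ 2 * ‖v‖ ^ 2
      ≤ s * (2 * ⟪θ, v⟫_ℝ ^ 2 - ‖v‖ ^ 2) + s * δ * ‖v‖ ^ 2) → ¬ Pr p X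

theorem hyp0_sup {n : ℕ} (hn : 3 ≤ n) {Γ : Set (Fin n → ℝ)} (hΓ : CondC Γ) {δ : ℝ}
    (hG : (fun i : Fin n => if i.val = 0 then 1 + δ else -1 + δ) ∉ closure Γ) :
    Hyp0 (Psup Γ) δ := by
  intro s hs θ hθ p X hX hle hP
  have h1 : EigL (s • ((-1 + δ) • ContinuousLinearMap.id ℝ (Euc n) + (2 : ℝ) • rk θ)) (closure Γ) := by
    refine EigL.mono_closure hΓ (((SymT.id.smul _).add ((SymT.rk θ).smul _)).smul _) (fun v => ?_) hP
    rw [Bop_inner]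
    have h2 := hle v
    have h3 : ⟪p, v⟫_ℝ ^ 2 ≤ ‖p‖ ^ 2 * ‖v‖ ^ 2 := by
      rw [← sq_abs, ← mul_pow]
      exact pow_le_pow_left₀ (abs_nonneg _) (abs_real_inner_le_norm p v) 2
    have e : ⟪(s • ((-1 + δ) • ContinuousLinearMap.id ℝ (Euc n) + (2 : ℝ) • rk θ)) v, v⟫_ℝ
        = s * (2 * ⟪θ, v⟫_ℝ ^ 2 - ‖v‖ ^ 2) + s * δ * ‖v‖ ^ 2 := by
      simp only [smul_apply, add_apply, ContinuousLinearMap.id_apply, rk_apply, inner_add_left,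
        real_inner_smul_left, real_inner_self_eq_norm_sq]
      ring
    rw [e]; linarith
  rw [EigL.smul_iff hs fun d hd r hr => hΓ.closure_smul hd hr] at h1
  refine EigL.not_compl hΓ.symmSet.closure h1 (eigL_rk (by omega) hθ _ _ ?_)
  have : (fun i : Fin n => if i.val = 0 then (-1 + δ) + 2 else -1 + δ)
    = fun i : Fin n => if i.val = 0 then 1 + δ else -1 + δ := by
    funext i; split_ifs <;> ring
  rw [this]; exact hG

theorem hyp0_sub {n : ℕ} (hn : 3 ≤ n) {Γ : Set (Fin n → ℝ)} (hΓ : CondC Γ) {δ : ℝ}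
    (hG : (fun i : Fin n => if i.val = 0 then -1 - δ else 1 - δ) ∈ Γ) :
    Hyp0 (Psub Γ) δ := by
  intro s hs θ hθ p X hX hle hP
  refine EigL.not_compl hΓ.symmSet ?_ hP
  have h1 : EigL (s • ((1 - δ) • ContinuousLinearMap.id ℝ (Euc n) + (-2 : ℝ) • rk θ)) Γ := by
    rw [EigL.smul_iff hs fun d hd r hr => hΓ.2.2.2.2.1 d hd r hr]
    refine eigL_rk (by omega) hθ _ _ ?_
    have : (fun i : Fin n => if i.val = 0 then (1 - δ) + -2 else 1 - δ)
      = fun i : Fin n => if i.val = 0 then -1 - δ else 1 - δ := by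
      funext i; split_ifs <;> ring
    rw [this]; exact hG
  refine EigL.mono_open hΓ (Bop_symT hX.neg) (fun v => ?_) h1
  rw [Bop_inner]
  have h2 := hle v
  have e : ⟪(s • ((1 - δ) • ContinuousLinearMap.id ℝ (Euc n) + (-2 : ℝ) • rk θ)) v, v⟫_ℝ
      = -(s * (2 * ⟪θ, v⟫_ℝ ^ 2 - ‖v‖ ^ 2) + s * δ * ‖v‖ ^ 2) := by
    simp only [smul_apply, add_apply, ContinuousLinearMap.id_apply, rk_apply, inner_add_left,
      real_inner_smul_left, real_inner_self_eq_norm_sq]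
    ring
  rw [e]
  simp only [neg_apply, inner_neg_left]
  nlinarith [sq_nonneg ⟪p, v⟫_ℝ]

theorem log_barrier {n : ℕ} {Pr : Euc n → (Euc n →L[ℝ] Euc n) → Prop} {δ : ℝ}
    (hH : Hyp0 Pr δ) (a : ℝ) (p : Euc n) {K ε : ℝ} (hε : 0 < ε) (hK : 3 / 2 * (‖p‖ ^ 2 + 1) ≤ K)
    (hεδ : 3 / 2 * ε ≤ δ) {x : Euc n} (hx : x ≠ 0) (hKx : K ^ 2 * ‖x‖ ^ 2 ≤ 1) :
    ∃ P X, SymT X ∧ C2At (fun y : Euc n => quad a 0 p ((-K) • ContinuousLinearMap.id ℝ (Euc n)) y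
      + (-(ε / 2) * Real.log (‖y‖ ^ 2))) x P X ∧ ¬ Pr P X := by
  have hxn : 0 < ‖x‖ := norm_pos_iff.2 hx
  have hs : 0 < ‖x‖ ^ 2 := by positivity
  have hF : ∀ᶠ t in 𝓝 (‖x‖ ^ 2), HasDerivAt (fun s => -(ε / 2) * Real.log s) (-(ε / 2) * t⁻¹) t := by
    filter_upwards [lt_mem_nhds hs] with t ht
    exact (Real.hasDerivAt_log ht.ne').const_mul _
  have hF' : HasDerivAt (fun t : ℝ => -(ε / 2) * t⁻¹) (-(ε / 2) * (-((‖x‖ ^ 2) ^ 2)⁻¹)) (‖x‖ ^ 2) :=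
    (hasDerivAt_inv hs.ne').const_mul _
  have hC := (quad_C2At a 0 p (SymT.id.smul (-K)) x).add (radial_C2At x hF hF')
  have hSy := ((SymT.id (n := n)).smul (-K)).add (((SymT.id (n := n)).smul (2 * (-(ε / 2) * (‖x‖ ^ 2)⁻¹))).add
    ((SymT.rk x).smul (4 * (-(ε / 2) * (-((‖x‖ ^ 2) ^ 2)⁻¹)))))
  refine ⟨_, _, hSy, hC, ?_⟩
  refine hH (ε / ‖x‖ ^ 2) (by positivity) (‖x‖⁻¹ • x)
    (by rw [norm_smul, norm_inv, norm_norm, inv_mul_cancel₀ hxn.ne']) _ _ hSy fun v => ?_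
  set P := p + ((-K) • ContinuousLinearMap.id ℝ (Euc n)) (x - 0) + (2 * (-(ε / 2) * (‖x‖ ^ 2)⁻¹)) • x with hP
  have hPn : ‖P‖ ≤ ‖p‖ + K * ‖x‖ + ε / ‖x‖ := by
    have hK0 : 0 ≤ K := by have := sq_nonneg ‖p‖; linarith
    refine (norm_add_le _ _).trans (add_le_add ((norm_add_le _ _).trans (add_le_add le_rfl ?_)) ?_)
    · simp [norm_smul, abs_of_nonneg hK0]
    · rw [norm_smul, Real.norm_eq_abs, abs_mul, abs_mul, abs_neg, abs_of_pos (by positivity : 0 < ε / 2),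
        abs_of_pos (by positivity : 0 < (‖x‖ ^ 2)⁻¹), abs_two]
      apply le_of_eq; field_simp
  have hP2 : ‖P‖ ^ 2 ≤ 3 * (‖p‖ ^ 2 + K ^ 2 * ‖x‖ ^ 2 + ε * (ε / ‖x‖ ^ 2)) := by
    have h1 := pow_le_pow_left₀ (norm_nonneg P) hPn 2
    have e : ε * (ε / ‖x‖ ^ 2) = (ε / ‖x‖) ^ 2 := by field_simp
    rw [e]
    nlinarith [sq_nonneg (‖p‖ - K * ‖x‖), sq_nonneg (‖p‖ - ε / ‖x‖), sq_nonneg (K * ‖x‖ - ε / ‖x‖)]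
  have h3 : -K + 1 / 2 * ‖P‖ ^ 2 ≤ ε / ‖x‖ ^ 2 * δ := by
    have h4 : 3 / 2 * ε * (ε / ‖x‖ ^ 2) ≤ δ * (ε / ‖x‖ ^ 2) := by gcongr
    nlinarith
  have h5 := mul_le_mul_of_nonneg_right h3 (sq_nonneg ‖v‖)
  have e1 : ⟪((-K) • ContinuousLinearMap.id ℝ (Euc n) + ((2 * (-(ε / 2) * (‖x‖ ^ 2)⁻¹)) •
      ContinuousLinearMap.id ℝ (Euc n) + (4 * (-(ε / 2) * (-((‖x‖ ^ 2) ^ 2)⁻¹))) • rk x)) v, v⟫_ℝ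
      = -K * ‖v‖ ^ 2 + ε / ‖x‖ ^ 2 * (2 * ⟪‖x‖⁻¹ • x, v⟫_ℝ ^ 2 - ‖v‖ ^ 2) := by
    simp only [smul_apply, add_apply, ContinuousLinearMap.id_apply, rk_apply, inner_add_left,
      real_inner_smul_left, real_inner_self_eq_norm_sq]
    field_simp; ring
  rw [e1]
  linarith

theorem ext_caseA {n : ℕ} {Pr : Euc n → (Euc n →L[ℝ] Euc n) → Prop} {δ : ℝ} (hδ : 0 < δ)
    (hH : Hyp0 Pr δ) {m : Euc n → ℝ} (hm : Vis Pr (ball (0 : Euc n) 1 \ {0}) m)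
    (hmc : ContinuousOn m (ball (0 : Euc n) 1 \ {0}))
    (happ : ∀ ε > 0, ∃ᶠ y in 𝓝[≠] (0 : Euc n), m 0 - ε < m y) {p : Euc n}
    {Z : Euc n →L[ℝ] Euc n} {ρ p0 : ℝ} (hρ : 0 < ρ) (hρ1 : ρ < 1) (hp0 : 0 < p0)
    (hle : ∀ y : Euc n, ‖y‖ ≤ ρ → m y ≤ quad (m 0) 0 p Z y - p0 * ‖y‖) : False := by
  set K := 3 / 2 * (‖p‖ ^ 2 + 1) with hK
  have hK1 : 1 ≤ K := by have := sq_nonneg ‖p‖; linarith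
  have hK0 : 0 < K := by linarith
  set L := ‖Z‖ + K with hL
  have hL0 : 0 < L := by positivity
  set r := min ρ (min (1 / K) (p0 / L)) with hr
  have hr0 : 0 < r := by positivity
  have hrρ : r ≤ ρ := min_le_left _ _
  have hrK : r * K ≤ 1 := by
    have : r ≤ 1 / K := (min_le_right _ _).trans (min_le_left _ _)
    rwa [le_div_iff₀ hK0] at this
  have hrL : r * L ≤ p0 := by
    have : r ≤ p0 / L := (min_le_right _ _).trans (min_le_right _ _)
    rwa [le_div_iff₀ hL0] at this
  have hquad : ∀ y : Euc n, ‖y‖ ≤ r → m y - quad (m 0) 0 p ((-K) • ContinuousLinearMap.id ℝ (Euc n)) y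
      ≤ -(p0 * ‖y‖) / 2 := by
    intro y hy
    have h1 := hle y (hy.trans hrρ)
    have h2 : ⟪Z y, y⟫_ℝ ≤ ‖Z‖ * ‖y‖ ^ 2 := by
      refine (real_inner_le_norm _ _).trans ?_
      have := mul_le_mul_of_nonneg_right (Z.le_opNorm y) (norm_nonneg y)
      linarith
    have h3 : L * ‖y‖ * ‖y‖ ≤ p0 * ‖y‖ := by
      have : L * ‖y‖ ≤ p0 := by nlinarith [norm_nonneg y]
      gcongr
    simp only [quad, sub_zero, smul_apply, ContinuousLinearMap.id_apply, real_inner_smul_left,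
      real_inner_self_eq_norm_sq] at h1 ⊢
    nlinarith
  have key : ∀ x : Euc n, x ≠ 0 → ‖x‖ ≤ r → ∀ ε : ℝ, 0 < ε → 3 / 2 * ε ≤ δ →
      m x - (quad (m 0) 0 p ((-K) • ContinuousLinearMap.id ℝ (Euc n)) x
      + (-(ε / 2) * Real.log (‖x‖ ^ 2))) ≤ -(p0 * r) / 2 := by
    intro x hx hxr ε hε hεδ
    have hxn : 0 < ‖x‖ := norm_pos_iff.2 hx
    set r1 := min ‖x‖ (Real.exp (-(p0 * r) / 2 / ε)) with hr1
    have hr1p : 0 < r1 := by positivity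
    refine annulus_max (Ψ := fun y : Euc n => quad (m 0) 0 p ((-K) • ContinuousLinearMap.id ℝ (Euc n)) y
      + (-(ε / 2) * Real.log (‖y‖ ^ 2))) hr1p (hrρ.trans_lt hρ1) hm hmc (fun y hy1 hy0 => ?_) (fun y hy => ?_)
      (fun y hy => ?_) x (min_le_left _ _) hxr
    · have hy : y ≠ 0 := by rintro rfl; rw [norm_zero] at hy1; linarith
      refine log_barrier hH _ _ hε le_rfl hεδ hy ?_
      rw [← mul_pow]
      have : K * ‖y‖ ≤ 1 := by nlinarith
      exact pow_le_one₀ (by positivity) this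
    · have hyr : ‖y‖ ≤ r := by rw [hy]; exact (min_le_left _ _).trans hxr
      have h1 := hquad y hyr
      have h2 : Real.log r1 ≤ -(p0 * r) / 2 / ε := by
        rw [← Real.log_exp (-(p0 * r) / 2 / ε)]
        exact Real.log_le_log hr1p (min_le_right _ _)
      rw [le_div_iff₀ hε] at h2
      have h3 : 0 ≤ p0 * ‖y‖ := by positivity
      rw [Real.log_pow, hy]
      push_cast
      linarith
    · have h1 := hquad y hy.le
      have h2 : Real.log r ≤ 0 := Real.log_nonpos hr0.le (hrρ.trans hρ1.le)
      rw [Real.log_pow, hy]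
      rw [hy] at h1
      push_cast
      nlinarith
  have key2 : ∀ x : Euc n, x ≠ 0 → ‖x‖ ≤ r → m x ≤ m 0 + ‖p‖ * ‖x‖ - p0 * r / 2 := by
    intro x hx hxr
    have hlim : Tendsto (fun ε : ℝ => m x - (quad (m 0) 0 p ((-K) • ContinuousLinearMap.id ℝ (Euc n)) x
      + (-(ε / 2) * Real.log (‖x‖ ^ 2)))) (𝓝[>] 0)
      (𝓝 (m x - (quad (m 0) 0 p ((-K) • ContinuousLinearMap.id ℝ (Euc n)) x
      + (-(0 / 2) * Real.log (‖x‖ ^ 2))))) := by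
      refine Tendsto.mono_left (Continuous.tendsto ?_ 0) nhdsWithin_le_nhds
      fun_prop
    have h2 := le_of_tendsto hlim (b := -(p0 * r) / 2) (by
      filter_upwards [self_mem_nhdsWithin, nhdsWithin_le_nhds
        (gt_mem_nhds (by positivity : 0 < δ / 2))] with ε h1 h2
      exact key x hx hxr ε h1 (by have : 0 < ε := h1; linarith))
    simp only [quad, sub_zero, smul_apply, ContinuousLinearMap.id_apply, real_inner_smul_left,
      real_inner_self_eq_norm_sq] at h2
    have h3 := real_inner_le_norm p x
    have h4 : 0 ≤ K * ‖x‖ ^ 2 := by positivity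
    linarith
  have hsmall : ∀ᶠ y in 𝓝[≠] (0 : Euc n), ‖y‖ < min r (p0 * r / 4 / (‖p‖ + 1)) := by
    refine nhdsWithin_le_nhds ?_
    have := continuous_norm.continuousAt (x := (0 : Euc n))
    refine this.eventually (gt_mem_nhds ?_)
    dsimp only; rw [norm_zero]; positivity
  have hne : ∀ᶠ y in 𝓝[≠] (0 : Euc n), y ≠ 0 := self_mem_nhdsWithin
  obtain ⟨y, h1, h2, h3⟩ := ((happ (p0 * r / 4) (by positivity)).and_eventually
    (hsmall.and hne)).exists
  have h4 := key2 y h3 (h2.le.trans (min_le_left _ _))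
  have h5 : ‖y‖ ≤ p0 * r / 4 / (‖p‖ + 1) := h2.le.trans (min_le_right _ _)
  rw [le_div_iff₀ (by positivity)] at h5
  nlinarith [norm_nonneg y]

theorem ext_zero {n : ℕ} {Pr : Euc n → (Euc n →L[ℝ] Euc n) → Prop} (hcl : PClosed Pr) {δ : ℝ}
    (hδ : 0 < δ)
    (hH : Hyp0 Pr δ) {m : Euc n → ℝ} (hm : Vis Pr (ball (0 : Euc n) 1 \ {0}) m)
    (hmc : ContinuousOn m (ball (0 : Euc n) 1 \ {0}))
    (happ : ∀ ε > 0, ∃ᶠ y in 𝓝[≠] (0 : Euc n), m 0 - ε < m y) {p : Euc n}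
    {X : Euc n →L[ℝ] Euc n} (hX : SymT X) (hJ : Jet m 0 p X) : Pr p X := by
  refine hcl.tau hX fun τ hτ => ?_
  set Z := X + τ • ContinuousLinearMap.id ℝ (Euc n) with hZ
  have hZs : SymT Z := hX.add (SymT.id.smul τ)
  have hq := hJ (τ / 4) (by positivity)
  obtain ⟨ρ', hρ', hq⟩ := Metric.eventually_nhds_iff.1 hq
  set ρ := min (ρ' / 2) (1 / 2) with hρ
  have hρ0 : 0 < ρ := by positivity
  have hρ1 : ρ < 1 := (min_le_right _ _).trans_lt (by norm_num)
  have hqq : ∀ y : Euc n, ‖y‖ ≤ ρ → m y ≤ quad (m 0) 0 p Z y - τ / 4 * ‖y‖ ^ 2 := by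
    intro y hy
    have := hq (y := y) (by rw [dist_zero_right]; exact (hy.trans (min_le_left _ _)).trans_lt (by linarith))
    simp only [quad, hZ, sub_zero, add_apply, smul_apply, ContinuousLinearMap.id_apply, inner_add_left,
      real_inner_smul_left, real_inner_self_eq_norm_sq] at this ⊢
    linarith
  refine hcl p Z hZs fun ε hε => ?_
  set p0 := min (τ * ρ / 8) (ε / (‖Z‖ * (4 / τ) + 1)) with hp0
  have hp0p : 0 < p0 := by positivity
  have hp0ρ : p0 ≤ τ * ρ / 8 := min_le_left _ _
  have hp0ε : p0 * (‖Z‖ * (4 / τ) + 1) ≤ ε := by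
    have : p0 ≤ ε / (‖Z‖ * (4 / τ) + 1) := min_le_right _ _
    rwa [le_div_iff₀ (by positivity)] at this
  by_cases hA : ∀ y : Euc n, ‖y‖ ≤ ρ → m y ≤ quad (m 0) 0 p Z y - p0 * ‖y‖
  · exact (ext_caseA hδ hH hm hmc happ hρ0 hρ1 hp0p hA).elim
  push Not at hA
  obtain ⟨y1, hy1, hlt⟩ := hA
  set f : Euc n → ℝ := fun y => m y - quad (m 0) 0 p Z y + p0 * ‖y‖ with hf
  have hf1 : 0 < f y1 := by simp only [hf]; linarith
  have hfle : ∀ y : Euc n, ‖y‖ ≤ ρ → f y ≤ p0 * ‖y‖ - τ / 4 * ‖y‖ ^ 2 := fun y hy => by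
    have := hqq y hy
    simp only [hf]; linarith
  set ε1 := f y1 / p0 with hε1
  have hε1p : 0 < ε1 := by positivity
  have hε1y : ε1 ≤ ‖y1‖ := by
    rw [hε1, div_le_iff₀ hp0p]
    have := hfle y1 hy1
    nlinarith [sq_nonneg ‖y1‖]
  set D : Set (Euc n) := closedBall 0 ρ ∩ {x | ε1 ≤ ‖x‖} with hD
  have hDc : IsCompact D := (isCompact_closedBall _ _).inter_right
    (isClosed_le continuous_const continuous_norm)
  have hmem : ∀ y, y ∈ D ↔ ‖y‖ ≤ ρ ∧ ε1 ≤ ‖y‖ := by intro y; simp [hD]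
  have hsub : D ⊆ ball (0 : Euc n) 1 \ {0} := by
    intro y hy
    rw [hmem] at hy
    refine ⟨by simp; linarith, ?_⟩
    intro hc
    rw [mem_singleton_iff] at hc
    rw [hc, norm_zero] at hy; linarith [hy.2]
  have hfc : ContinuousOn f D := by
    have h1 := hmc.mono hsub
    have h2 : Continuous (quad (m 0) 0 p Z) := (quad_contDiff _ _ _ _).continuous
    exact (h1.sub h2.continuousOn).add (by fun_prop)
  obtain ⟨z, hz, hmax⟩ := hDc.exists_isMaxOn ⟨y1, (hmem y1).2 ⟨hy1, hε1y⟩⟩ hfc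
  have hmax' : ∀ y : Euc n, ‖y‖ ≤ ρ → f y ≤ f z := by
    intro y hy
    have h1 : f y1 ≤ f z := hmax ((hmem y1).2 ⟨hy1, hε1y⟩)
    by_cases h : ε1 ≤ ‖y‖
    · exact hmax ((hmem y).2 ⟨hy, h⟩)
    · push Not at h
      have h2 := hfle y hy
      rw [hε1, lt_div_iff₀ hp0p] at h
      nlinarith [sq_nonneg ‖y‖]
  have hz' := (hmem z).1 hz
  have hz0 : 0 < ‖z‖ := hε1p.trans_le hz'.2
  have hz4 : ‖z‖ < 4 / τ * p0 := by
    have h1 := hfle z hz'.1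
    have h2 := hmax' y1 hy1
    have h3 : 0 < ‖z‖ * (p0 - τ / 4 * ‖z‖) := by nlinarith
    have h4 := (pos_iff_pos_of_mul_pos h3).1 hz0
    have : ‖z‖ * τ < 4 * p0 := by nlinarith
    rw [div_mul_eq_mul_div, lt_div_iff₀ hτ]; exact this
  have hzρ : ‖z‖ < ρ := by
    have : 4 / τ * p0 ≤ 4 / τ * (τ * ρ / 8) := by gcongr
    have e : 4 / τ * (τ * ρ / 8) = ρ / 2 := by field_simp; norm_num
    linarith
  set θ := ‖z‖⁻¹ • z with hθ
  have hθ1 : ‖θ‖ = 1 := by rw [hθ, norm_smul, norm_inv, norm_norm, inv_mul_cancel₀ hz0.ne']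
  have hθz : ⟪θ, z⟫_ℝ = ‖z‖ := by
    rw [hθ, real_inner_smul_left, real_inner_self_eq_norm_sq]; field_simp
  refine ⟨p - p0 • θ + Z (z - 0), Z, hZs, ?_, fun v => by simp; positivity, ?_⟩
  · have e : p - p0 • θ + Z (z - 0) - p = Z z - p0 • θ := by rw [sub_zero]; abel
    rw [e]
    refine (norm_sub_le _ _).trans ?_
    rw [norm_smul, hθ1, Real.norm_eq_abs, abs_of_pos hp0p]
    have h1 := Z.le_opNorm z
    have h2 : ‖Z‖ * ‖z‖ ≤ ‖Z‖ * (4 / τ * p0) := by gcongr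
    nlinarith
  · refine hm z (hsub hz) _ _ hZs (Jet.of_touch (quad_C2At (m 0 + f z) 0 (p - p0 • θ) hZs z) hZs ?_ ?_)
    · simp only [hf, quad, sub_zero, inner_sub_left, real_inner_smul_left, hθz]
      ring
    · filter_upwards [continuous_norm.continuousAt.eventually (gt_mem_nhds hzρ)] with y hy
      have h1 := hmax' y hy.le
      have h2 : ⟪θ, y⟫_ℝ ≤ ‖y‖ := by
        have := real_inner_le_norm θ y
        rwa [hθ1, one_mul] at this
      have h3 := mul_le_mul_of_nonneg_left h2 hp0p.le
      simp only [hf, quad, sub_zero, inner_sub_left, real_inner_smul_left] at h1 ⊢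
      linarith

/-! ### Kelvin transform -/

def RL {n : ℕ} (k : Euc n) : Euc n →L[ℝ] Euc n :=
  ContinuousLinearMap.id ℝ (Euc n) - (2 / ‖k‖ ^ 2) • rk k

theorem RL_apply {n : ℕ} (k v : Euc n) : RL k v = v - (2 / ‖k‖ ^ 2 * ⟪k, v⟫_ℝ) • k := by
  simp [RL, rk_apply, smul_smul]

theorem RL_eq {n : ℕ} (k v : Euc n) : (Submodule.span ℝ {k})ᗮ.reflection v = RL k v := by
  rw [Submodule.reflection_orthogonal_apply, Submodule.reflection_singleton_apply, RL_apply]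
  simp only [RCLike.ofReal_real_eq_id, id]
  module

theorem RL_inner {n : ℕ} (k v w : Euc n) : ⟪RL k v, w⟫_ℝ = ⟪v, RL k w⟫_ℝ := by
  rw [RL_apply, RL_apply, inner_sub_left, inner_sub_right, real_inner_smul_left,
    real_inner_smul_right, real_inner_comm k v]
  ring

theorem inversion_deriv {n : ℕ} {c z : Euc n} (hz : z ≠ c) (lam : ℝ) :
    HasFDerivAt (EuclideanGeometry.inversion c lam) ((lam ^ 2 * (‖z - c‖ ^ 2)⁻¹) • RL (z - c)) z := by
  refine (EuclideanGeometry.hasFDerivAt_inversion hz).congr_fderiv ?_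
  ext1 v
  simp only [smul_apply]
  congr 1
  · rw [dist_eq_norm]; field_simp
  · exact RL_eq _ _

theorem kel_alg {n : ℕ} {k : Euc n} (hk : k ≠ 0) (g v : Euc n) (H : Euc n →L[ℝ] Euc n) (μ : ℝ)
    {N : Euc n} (hN : N = (μ * (‖k‖ ^ 2)⁻¹) • g
      - (2 * μ * ((‖k‖ ^ 2)⁻¹ * (‖k‖ ^ 2)⁻¹) * ⟪k, g⟫_ℝ) • k + (2 * (‖k‖ ^ 2)⁻¹) • k) :
    (μ * (‖k‖ ^ 2)⁻¹) ^ 2 • RL k (Bop g H (RL k v)) - ⟪N, v⟫_ℝ • N + (1 / 2 * ‖N‖ ^ 2) • v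
    = (-2 * μ * ⟪k, v⟫_ℝ * ((‖k‖ ^ 2)⁻¹) ^ 2) • g + ((μ * (‖k‖ ^ 2)⁻¹) ^ 2) • H (RL k v)
      + (8 * μ * ⟪k, v⟫_ℝ * ⟪k, g⟫_ℝ * ((‖k‖ ^ 2)⁻¹) ^ 3
        - 2 * μ * ((‖k‖ ^ 2)⁻¹) ^ 2 * (⟪v, g⟫_ℝ + μ * (‖k‖ ^ 2)⁻¹ * ⟪k, H (RL k v)⟫_ℝ)
        - 4 * ⟪k, v⟫_ℝ * ((‖k‖ ^ 2)⁻¹) ^ 2) • k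
      + (2 * (‖k‖ ^ 2)⁻¹ - 2 * μ * ⟪k, g⟫_ℝ * ((‖k‖ ^ 2)⁻¹) ^ 2) • v := by
  have hkn : 0 < ‖k‖ := norm_pos_iff.2 hk
  have hNN : ‖N‖ ^ 2 = (μ * (‖k‖ ^ 2)⁻¹) ^ 2 * ⟪g, g⟫_ℝ + 4 * (‖k‖ ^ 2)⁻¹
      - 4 * μ * ((‖k‖ ^ 2)⁻¹) ^ 2 * ⟪k, g⟫_ℝ := by
    rw [← real_inner_self_eq_norm_sq N, hN]
    simp only [inner_add_left, inner_sub_left, real_inner_smul_left, inner_add_right,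
      inner_sub_right, real_inner_smul_right]
    rw [real_inner_comm k g, real_inner_self_eq_norm_sq k]
    field_simp
    ring
  have hB : Bop g H (RL k v) = H (RL k v) + ⟪g, RL k v⟫_ℝ • g - (1 / 2 * ⟪g, g⟫_ℝ) • RL k v := by
    simp [Bop, rk_apply]
  rw [hNN, hB]
  generalize hh : H (RL k v) = h
  rw [hN, RL_apply, RL_apply]
  simp only [inner_add_left, inner_sub_left, real_inner_smul_left, inner_add_right,
      inner_sub_right, real_inner_smul_right]
  rw [real_inner_comm k g, real_inner_self_eq_norm_sq k, real_inner_comm g v]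
  generalize ⟪k, v⟫_ℝ = a
  generalize ⟪k, g⟫_ℝ = b
  generalize ⟪g, v⟫_ℝ = c
  generalize ⟪g, g⟫_ℝ = d
  generalize ⟪k, h⟫_ℝ = e
  have ht : ‖k‖ ^ 2 ≠ 0 := by positivity
  generalize ‖k‖ ^ 2 = t at *
  match_scalars <;> field_simp <;> ring

theorem kelvin_C2At {n : ℕ} {c z0 : Euc n} (hz : z0 ≠ c) {lam : ℝ} (hl : 0 < lam) {Q : Euc n → ℝ}
    {g : Euc n} {H : Euc n →L[ℝ] Euc n} (hH : SymT H)
    (hQ : C2At Q (EuclideanGeometry.inversion c lam z0) g H) :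
    ∃ N DN, SymT DN ∧ C2At (fun z => Q (EuclideanGeometry.inversion c lam z)
      + Real.log (‖z - c‖ ^ 2 / lam ^ 2)) z0 N DN ∧ Bop N DN =
      (lam ^ 2 * (‖z0 - c‖ ^ 2)⁻¹) ^ 2 • (RL (z0 - c) ∘L Bop g H ∘L RL (z0 - c)) := by
  obtain ⟨G, hG, hGg, hGd⟩ := hQ
  set I := EuclideanGeometry.inversion c lam with hI
  set μ := lam ^ 2 with hμ
  have hμ0 : 0 < μ := by positivity
  set Nf : Euc n → Euc n := fun z => (μ * (‖z - c‖ ^ 2)⁻¹) • G (I z)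
    - (2 * μ * ((‖z - c‖ ^ 2)⁻¹ * (‖z - c‖ ^ 2)⁻¹) * ⟪z - c, G (I z)⟫_ℝ) • (z - c)
    + (2 * (‖z - c‖ ^ 2)⁻¹) • (z - c) with hNf
  set N := Nf z0 with hN
  set DN : Euc n →L[ℝ] Euc n := (μ * (‖z0 - c‖ ^ 2)⁻¹) ^ 2 • (RL (z0 - c) ∘L Bop g H ∘L RL (z0 - c))
    - rk N + (1 / 2 * ‖N‖ ^ 2) • ContinuousLinearMap.id ℝ (Euc n) with hDN
  have hsy : SymT DN := by
    refine SymT.add (SymT.sub (SymT.smul ?_ _) (SymT.rk _)) (SymT.id.smul _)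
    intro v w
    simp only [ContinuousLinearMap.comp_apply]
    rw [RL_inner, Bop_symT hH, RL_inner]
  refine ⟨N, DN, hsy, ⟨Nf, ?_, rfl, ?_⟩, ?_⟩
  · have hIc : ContinuousAt I z0 := (inversion_deriv hz lam).continuousAt
    filter_upwards [hIc.eventually hG, isOpen_ne.mem_nhds hz] with z h1 h2
    have hk : z - c ≠ 0 := sub_ne_zero.2 h2
    have hkn : 0 < ‖z - c‖ := norm_pos_iff.2 hk
    have e1 := h1.comp z (inversion_deriv h2 lam)
    have e2 : HasFDerivAt (fun z : Euc n => ‖z - c‖ ^ 2) (2 • (innerSL ℝ (z - c))) z := by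
      simpa using ((hasFDerivAt_id (𝕜 := ℝ) z).sub_const c).norm_sq
    have e3 := ((Real.hasDerivAt_log (x := ‖z - c‖ ^ 2 / μ) (by positivity)).comp_hasFDerivAt z
      (e2.mul_const μ⁻¹))
    refine (e1.add e3).congr_fderiv ?_
    ext1 v
    simp only [hNf, Function.comp_apply, ← hμ]
    generalize z - c = k at *
    simp only [ add_apply, smul_apply, ContinuousLinearMap.comp_apply, innerSL_apply_apply,
      inner_add_left, inner_sub_left, real_inner_smul_left, RL_apply, inner_sub_right,
      real_inner_smul_right, nsmul_eq_mul, smul_eq_mul]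
    rw [real_inner_comm (G (I z)) k]
    push_cast
    field_simp
  · have hk : z0 - c ≠ 0 := sub_ne_zero.2 hz
    have hkn : 0 < ‖z0 - c‖ := norm_pos_iff.2 hk
    have ek : HasFDerivAt (fun z : Euc n => z - c) (ContinuousLinearMap.id ℝ (Euc n)) z0 :=
      (hasFDerivAt_id (𝕜 := ℝ) z0).sub_const c
    have e2 : HasFDerivAt (fun z : Euc n => ‖z - c‖ ^ 2) (2 • (innerSL ℝ (z0 - c))) z0 := by
      simpa using ek.norm_sq
    have ei : HasFDerivAt (fun z : Euc n => (‖z - c‖ ^ 2)⁻¹) _ z0 :=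
      (hasDerivAt_inv (x := ‖z0 - c‖ ^ 2) (by positivity)).comp_hasFDerivAt z0 e2
    have eA : HasFDerivAt (fun z => G (I z)) _ z0 := hGd.comp z0 (inversion_deriv hz lam)
    have ein := ek.inner ℝ eA
    have e4 := (((ei.const_mul μ).smul eA).sub ((((ei.mul ei).const_mul (2 * μ)).mul ein).smul ek)).add
      ((ei.const_mul 2).smul ek)
    refine e4.congr_fderiv ?_
    ext1 v
    have hNk : N = (μ * (‖z0 - c‖ ^ 2)⁻¹) • g
      - (2 * μ * ((‖z0 - c‖ ^ 2)⁻¹ * (‖z0 - c‖ ^ 2)⁻¹) * ⟪z0 - c, g⟫_ℝ) • (z0 - c)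
        + (2 * (‖z0 - c‖ ^ 2)⁻¹) • (z0 - c) := by
      rw [hN, hNf, ← hGg]
    have hD : DN v = (μ * (‖z0 - c‖ ^ 2)⁻¹) ^ 2 • RL (z0 - c) (Bop g H (RL (z0 - c) v))
        - ⟪N, v⟫_ℝ • N + (1 / 2 * ‖N‖ ^ 2) • v := by
      rw [hDN]; simp only [add_apply, sub_apply, smul_apply, ContinuousLinearMap.comp_apply,
        ContinuousLinearMap.id_apply, rk_apply]
    rw [hD, kel_alg hk g v H μ hNk]
    simp only [← hI, hGg, ← hμ, Pi.mul_apply]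
    generalize z0 - c = k at *
    simp only [add_apply, sub_apply, smul_apply, ContinuousLinearMap.comp_apply,
      ContinuousLinearMap.smulRight_apply, innerSL_apply_apply, ContinuousLinearMap.id_apply,
      map_smul, fderivInnerCLM_apply, nsmul_eq_mul, smul_eq_mul,
      ContinuousLinearMap.prod_apply, real_inner_smul_right]
    generalize H (RL k v) = h
    push_cast
    have ht : ‖k‖ ^ 2 ≠ 0 := by positivity
    generalize ‖k‖ ^ 2 = t at ht ⊢
    clear_value μ
    match_scalars <;> field_simp <;> ring_nf
  · rw [hDN]
    ext1 v
    simp only [Bop, add_apply, sub_apply]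
    abel


theorem kelvin_jet {n : ℕ} {Γ : Set (Fin n → ℝ)} (hΓ : CondC Γ) {c x0 : Euc n} (hx : x0 ≠ c)
    {lam : ℝ} (hl : 0 < lam) {m : Euc n → ℝ}
    (hm : ∀ P Y, SymT Y → Jet m (EuclideanGeometry.inversion c lam x0) P Y → Psub Γ P Y)
    {p : Euc n} {X : Euc n →L[ℝ] Euc n} (hX : SymT X)
    (hJ : Jet (fun y => m (EuclideanGeometry.inversion c lam y) - Real.log (‖y - c‖ ^ 2 / lam ^ 2))
      x0 p X) : Psub Γ p X := by
  refine (Psub_closed hΓ).tau hX fun τ hτ => ?_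
  set X' := X + τ • ContinuousLinearMap.id ℝ (Euc n) with hX'
  have hXs : SymT X' := hX.add (SymT.id.smul τ)
  have hle := hJ.le_quad hτ
  set I := EuclideanGeometry.inversion c lam with hI
  set z0 := I x0 with hz0
  have hII : ∀ z, I (I z) = z := fun z => EuclideanGeometry.inversion_inversion c hl.ne' z
  have hzc : z0 ≠ c := fun h => hx ((EuclideanGeometry.inversion_eq_center hl.ne').1 h)
  have hdist : ∀ z, ‖I z - c‖ = lam ^ 2 / ‖z - c‖ := fun z => by
    have := EuclideanGeometry.dist_inversion_center c z lam
    rwa [dist_eq_norm, dist_eq_norm] at this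
  have hlog : ∀ z, Real.log (‖I z - c‖ ^ 2 / lam ^ 2) = - Real.log (‖z - c‖ ^ 2 / lam ^ 2) := fun z => by
    rw [hdist, ← Real.log_inv]
    congr 1
    by_cases hz : ‖z - c‖ = 0
    · simp [hz]
    field_simp
  have hcont : ContinuousAt I z0 := (inversion_deriv hzc lam).continuousAt
  have hIz0 : I z0 = x0 := hII x0
  set a := m (I x0) - Real.log (‖x0 - c‖ ^ 2 / lam ^ 2) with ha
  have hQ : C2At (fun y => -quad a x0 p X' y) (I z0) (-p) (-X') := by
    rw [hIz0]
    exact (quad_C2At a x0 p hXs x0).neg.congr (fun y => rfl) (by simp) rfl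
  obtain ⟨N, DN, hDN, hC, hB⟩ := kelvin_C2At hzc hl hXs.neg hQ
  have hJ' : Jet m z0 (-N) (-DN) := by
    refine Jet.of_touch hC.neg hDN.neg ?_ ?_
    · have := hlog z0
      rw [hIz0] at this
      simp only [← hI, hIz0, quad_self, ha, this]
      rw [← hz0]; ring
    · have h1 : Tendsto I (𝓝 z0) (𝓝 x0) := by have := hcont.tendsto; rwa [hIz0] at this
      filter_upwards [h1.eventually hle] with z hz
      rw [hII, hlog] at hz
      show _ ≤ -(-quad a x0 p X' (I z) + _)
      linarith
  have h2 := hm _ _ hDN.neg hJ'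
  rw [Psub, Bop_neg_left, neg_neg, hB] at h2
  have hzn : 0 < ‖z0 - c‖ := norm_pos_iff.2 (sub_ne_zero.2 hzc)
  rw [EigL.smul_iff (by positivity) fun d hd r hr => hΓ.compl_smul hd hr, Bop_neg_left] at h2
  refine h2.conj (Submodule.reflection (Submodule.span ℝ {z0 - c})ᗮ) fun v => ?_
  simp only [ContinuousLinearMap.comp_apply]
  rw [← RL_eq (z0 - c) v, ← RL_eq (z0 - c) (Bop p (-X') _), Submodule.reflection_reflection]

theorem doubling_comp {n : ℕ} {Γ : Set (Fin n → ℝ)} (hΓ : CondC Γ) {D U : Set (Euc n)}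
    (hD : IsCompact D) (hU : IsOpen U) (hUD : U ⊆ D) {a b : Euc n → ℝ}
    (ha : UpperSemicontinuousOn a D) (hb : UpperSemicontinuousOn b D) {κ : ℝ} (hκ : 0 < κ)
    (hva : ∀ x ∈ U, ∀ p X, SymT X → Jet a x p X →
      EigL (Bop p X - κ • ContinuousLinearMap.id ℝ (Euc n)) (closure Γ))
    (hvb : ∀ x ∈ U, ∀ p X, SymT X → Jet b x p X → Psub Γ p X)
    {xh : Euc n} (hxh : xh ∈ D) (hbd : ∀ x ∈ D \ U, a x + b x < a xh + b xh) : False := by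
  have hne : D.Nonempty := ⟨xh, hxh⟩
  obtain ⟨Ma, hMa⟩ : ∃ M, ∀ x ∈ D, a x ≤ M := by
    obtain ⟨t, _, h⟩ := ha.exists_isMaxOn hne hD
    exact ⟨a t, fun x hx => h hx⟩
  obtain ⟨Mb, hMb⟩ : ∃ M, ∀ x ∈ D, b x ≤ M := by
    obtain ⟨t, _, h⟩ := hb.exists_isMaxOn hne hD
    exact ⟨b t, fun x hx => h hx⟩
  obtain ⟨K, hK⟩ : ∃ K, ∀ x ∈ D, ‖x‖ ≤ K := hD.isBounded.exists_norm_le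
  set C := Ma + Mb - (a xh + b xh) with hC
  have hC0 : 0 ≤ C := by have := hMa _ hxh; have := hMb _ hxh; rw [hC]; linarith
  have hNpos : ∀ k : ℕ, (0 : ℝ) < (k : ℝ) + 1 := fun k => by positivity
  choose x hx y hy z Xa Xb hXa hXb hmax hgr hXX hja hjb using fun k : ℕ =>
    doubling hD hne ha hb (hNpos k) (by have := hNpos k; positivity : 0 < 1 / ((k : ℝ) + 1) ^ 2)
  -- distances tend to zero
  have hr : ∀ k : ℕ, ((k : ℝ) + 1) / 2 * (‖x k - z k‖ ^ 2 + ‖y k - z k‖ ^ 2) ≤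
      C + 1 / ((k : ℝ) + 1) ^ 2 * ‖xh - z k‖ := fun k => by
    have h1 := hmax k xh hxh
    have h2 := hMa _ (hx k); have h3 := hMb _ (hy k)
    rw [hC]; linarith
  have hr2 : ∀ k : ℕ, ‖x k - z k‖ ^ 2 + ‖y k - z k‖ ^ 2 ≤ (4 * C + 8 * K + 4) / ((k : ℝ) + 1) := fun k => by
    have hN := hNpos k
    have hN1 : (1 : ℝ) ≤ (k : ℝ) + 1 := by have : (0 : ℝ) ≤ k := Nat.cast_nonneg k; linarith
    have h1 : ‖xh - z k‖ ≤ 2 * K + ‖x k - z k‖ := by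
      calc ‖xh - z k‖ = ‖xh - x k + (x k - z k)‖ := by congr 1; abel
        _ ≤ ‖xh‖ + ‖x k‖ + ‖x k - z k‖ := (norm_add_le _ _).trans (by gcongr; exact norm_sub_le _ _)
        _ ≤ _ := by have := hK _ hxh; have := hK _ (hx k); linarith
    have h2 : 1 / ((k : ℝ) + 1) ^ 2 ≤ 1 := by
      rw [div_le_one (by positivity)]; nlinarith
    have h3 : 1 / ((k : ℝ) + 1) ^ 2 * ‖xh - z k‖ ≤ 1 / ((k : ℝ) + 1) ^ 2 * (2 * K) + 1 / ((k : ℝ) + 1) ^ 2 * ‖x k - z k‖ := by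
      rw [← mul_add]; gcongr
    have h4 := hr k
    have hK0 : 0 ≤ K := (norm_nonneg _).trans (hK _ hxh)
    have h5 : 1 / ((k : ℝ) + 1) ^ 2 * (2 * K) ≤ 2 * K := mul_le_of_le_one_left (by linarith) h2
    have h6 : 1 / ((k : ℝ) + 1) ^ 2 * ‖x k - z k‖ ≤ 1 + ((k : ℝ) + 1) / 4 * ‖x k - z k‖ ^ 2 := by
      have : 1 / ((k : ℝ) + 1) ^ 2 * ‖x k - z k‖ ≤ ‖x k - z k‖ := mul_le_of_le_one_left (norm_nonneg _) h2
      have h7 : ‖x k - z k‖ ^ 2 ≤ ((k : ℝ) + 1) * ‖x k - z k‖ ^ 2 := le_mul_of_one_le_left (by positivity) hN1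
      nlinarith [sq_nonneg (‖x k - z k‖ - 2)]
    rw [le_div_iff₀ hN]
    have h8 : 0 ≤ ((k : ℝ) + 1) * ‖y k - z k‖ ^ 2 := by positivity
    linarith
  set c := 4 * C + 8 * K + 4 with hc
  have hK0 : 0 ≤ K := (norm_nonneg _).trans (hK _ hxh)
  have hc0 : 0 ≤ c := by rw [hc]; linarith
  have hlim : Tendsto (fun k : ℕ => c / ((k : ℝ) + 1)) atTop (𝓝 0) := by
    have := (tendsto_one_div_add_atTop_nhds_zero_nat (𝕜 := ℝ)).const_mul c
    simpa [mul_one_div, div_eq_mul_inv] using this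
  have hsq : ∀ w : ℕ → Euc n, (∀ k, ‖w k‖ ^ 2 ≤ c / ((k : ℝ) + 1)) → Tendsto w atTop (𝓝 0) := by
    intro w hw
    rw [tendsto_zero_iff_norm_tendsto_zero]
    have h1 : Tendsto (fun k => ‖w k‖ ^ 2) atTop (𝓝 0) :=
      squeeze_zero (fun k => by positivity) hw hlim
    have h2 := h1.sqrt
    simpa using h2
  have hxz : Tendsto (fun k => x k - z k) atTop (𝓝 0) :=
    hsq _ fun k => le_trans (by have := sq_nonneg ‖y k - z k‖; linarith) (hr2 k)
  have hyz : Tendsto (fun k => y k - z k) atTop (𝓝 0) :=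
    hsq _ fun k => le_trans (by have := sq_nonneg ‖x k - z k‖; linarith) (hr2 k)
  obtain ⟨xs, hxs, φ, hφ, hxφ⟩ := hD.tendsto_subseq hx
  have hφt := hφ.tendsto_atTop
  have hzφ : Tendsto (fun k => z (φ k)) atTop (𝓝 xs) := by
    have := hxφ.sub (hxz.comp hφt)
    simpa [Function.comp_def] using this
  have hyφ : Tendsto (fun k => y (φ k)) atTop (𝓝 xs) := by
    have := hzφ.add (hyz.comp hφt)
    simpa [Function.comp_def] using this
  have hηlim : Tendsto (fun k : ℕ => 1 / ((φ k : ℝ) + 1) ^ 2 * ‖xh - z (φ k)‖) atTop (𝓝 0) := by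
    have h1 : Tendsto (fun k : ℕ => (1 / ((k : ℝ) + 1)) ^ 2) atTop (𝓝 0) := by
      have := (tendsto_one_div_add_atTop_nhds_zero_nat (𝕜 := ℝ)).pow 2
      simpa using this
    have h2 := (h1.comp hφt).mul ((hzφ.const_sub xh).norm)
    simpa [Function.comp_def, one_div] using h2
  have hxsU : xs ∈ U := by
    by_contra hcon
    have hgap := hbd xs ⟨hxs, hcon⟩
    set e := (a xh + b xh - (a xs + b xs)) / 3 with he
    have he0 : 0 < e := by rw [he]; linarith
    have h1 := ha xs hxs (a xs + e) (by linarith)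
    have h2 := hb xs hxs (b xs + e) (by linarith)
    have t1 : Tendsto (fun k => x (φ k)) atTop (𝓝[D] xs) :=
      tendsto_nhdsWithin_iff.2 ⟨hxφ, Eventually.of_forall fun k => hx _⟩
    have t2 : Tendsto (fun k => y (φ k)) atTop (𝓝[D] xs) :=
      tendsto_nhdsWithin_iff.2 ⟨hyφ, Eventually.of_forall fun k => hy _⟩
    obtain ⟨k, k1, k2, k3⟩ := ((t1.eventually h1).and ((t2.eventually h2).and
      (hηlim.eventually (gt_mem_nhds he0)))).exists
    have h3 := hmax (φ k) xh hxh
    have h4 : 0 ≤ ((φ k : ℝ) + 1) / 2 * (‖x (φ k) - z (φ k)‖ ^ 2 + ‖y (φ k) - z (φ k)‖ ^ 2) := by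
      have := hNpos (φ k); positivity
    linarith
  have hUn := hU.mem_nhds hxsU
  have hδ : Tendsto (fun k : ℕ => 3 / 2 * (2 + c) * (1 / ((φ k : ℝ) + 1))) atTop (𝓝 0) := by
    have := ((tendsto_one_div_add_atTop_nhds_zero_nat (𝕜 := ℝ)).comp hφt).const_mul (3 / 2 * (2 + c))
    simpa [Function.comp_def] using this
  obtain ⟨k0, k1, k2, k3⟩ := ((hxφ.eventually hUn).and ((hyφ.eventually hUn).and
      (hδ.eventually (gt_mem_nhds hκ)))).exists
  generalize hk : φ k0 = k at k1 k2 k3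
  simp only [Function.comp_apply, hk] at k1
  have hDx : 𝓝[D] (x k) = 𝓝 (x k) :=
    nhdsWithin_eq_nhds.2 (mem_of_superset (hU.mem_nhds k1) hUD)
  have hDy : 𝓝[D] (y k) = 𝓝 (y k) :=
    nhdsWithin_eq_nhds.2 (mem_of_superset (hU.mem_nhds k2) hUD)
  have e1 := hva (x k) k1 _ _ (hXa k) (fun τ hτ => by have := hja k τ hτ; rwa [hDx] at this)
  have e2 := hvb (y k) k2 _ _ (hXb k) (fun τ hτ => by have := hjb k τ hτ; rwa [hDy] at this)
  set N := (k : ℝ) + 1 with hN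
  have hN0 : 0 < N := hNpos k
  have hN1 : (1 : ℝ) ≤ N := by have : (0 : ℝ) ≤ k := Nat.cast_nonneg k; linarith
  set pa := N • (x k - z k) with hpa
  set pb := N • (y k - z k) with hpb
  have hgd : ‖-pb - pa‖ ≤ 1 / N ^ 2 := by
    rw [show -pb - pa = -(pa + pb) by abel, norm_neg]; exact hgr k
  have hpn : ‖pa‖ ^ 2 ≤ c * N := by
    have h1 : ‖x k - z k‖ ^ 2 ≤ c / N :=
      le_trans (by have := sq_nonneg ‖y k - z k‖; linarith) (hr2 k)
    rw [hpa, norm_smul, mul_pow, Real.norm_of_nonneg hN0.le]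
    calc N ^ 2 * ‖x k - z k‖ ^ 2 ≤ N ^ 2 * (c / N) := by gcongr
      _ = c * N := by field_simp
  have hδ' : 3 / 2 * (1 / N ^ 2 * (2 * ‖pa‖ + 1 / N ^ 2)) < κ := by
    refine lt_of_le_of_lt ?_ k3
    have h2 : 1 / N ^ 2 ≤ 1 := by rw [div_le_one (by positivity)]; nlinarith
    have h3 : 2 * ‖pa‖ + 1 / N ^ 2 ≤ (2 + c) * N := by nlinarith [sq_nonneg (‖pa‖ - 1)]
    calc 3 / 2 * (1 / N ^ 2 * (2 * ‖pa‖ + 1 / N ^ 2)) ≤ 3 / 2 * (1 / N ^ 2 * ((2 + c) * N)) := by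
          gcongr
      _ = 3 / 2 * (2 + c) * (1 / N) := by field_simp
  refine EigL.not_compl hΓ.symmSet (e1.mono_strict hΓ (Bop_symT (p := pb) (hXb k).neg)
    (sub_pos.2 hδ') fun v => ?_) e2
  have h1 := (abs_le.1 (grad_diff hgd v)).1
  have h2 := hXX k v
  rw [Bop_inner, sub_apply, inner_sub_left, Bop_inner]
  simp only [smul_apply, ContinuousLinearMap.id_apply, real_inner_smul_left,
    real_inner_self_eq_norm_sq, neg_apply, inner_neg_left, norm_neg, neg_sq] at h1 ⊢
  nlinarith


theorem strict_pert {n : ℕ} {Γ : Set (Fin n → ℝ)} (hΓ : CondC Γ) {c x : Euc n} (hxc : ‖x - c‖ ≤ 1)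
    {ε M : ℝ} (hε : 0 < ε) {l : Euc n → ℝ} (h1 : ε ≤ Real.exp (l x)) (h2 : Real.exp (l x) ≤ M)
    (hl : ∀ P Y, SymT Y → Jet l x P Y → Psup Γ P Y)
    {p : Euc n} {X : Euc n →L[ℝ] Euc n} (hX : SymT X)
    (hJ : Jet (fun y => Real.log (Real.exp (l y) + ε * (1 + ‖y - c‖ ^ 2 / 8))) x p X) :
    EigL (Bop p X - (ε / (24 * M)) • ContinuousLinearMap.id ℝ (Euc n)) (closure Γ) := by
  have hM : 0 < M := hε.trans_le (h1.trans h2)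
  refine EigL.closed_closure hΓ ((Bop_symT hX).sub (SymT.id.smul _)) fun τ hτ => ?_
  set X' := X + τ • ContinuousLinearMap.id ℝ (Euc n) with hX'
  have hXs : SymT X' := hX.add (SymT.id.smul τ)
  have hle := hJ.le_quad hτ
  set h : Euc n → ℝ := fun y => ε * (1 + ‖y - c‖ ^ 2 / 8) with hh
  have hhp : ∀ y, 0 < h y := fun y => by simp only [hh]; positivity
  set w := Real.exp (l x) with hw
  set W := w + h x with hW
  have hw0 : 0 < w := Real.exp_pos _
  have hW0 : 0 < W := add_pos hw0 (hhp x)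
  have hWM : W ≤ 3 * M := by
    have h3 : h x ≤ 2 * ε := by
      simp only [hh]
      have : ‖x - c‖ ^ 2 ≤ 1 := by nlinarith [norm_nonneg (x - c)]
      nlinarith
    rw [hW]; linarith
  set q := quad (Real.log W) x p X' with hq
  have hq0 : q x = Real.log W := quad_self _ _ _ _
  have cq : C2At q x p X' := (quad_C2At (Real.log W) x p hXs x).congr (fun y => rfl) (by simp) rfl
  have ce := cq.comp (F := Real.exp) (F' := Real.exp) (F'' := Real.exp (q x))
    (Eventually.of_forall fun t => Real.hasDerivAt_exp t) (Real.hasDerivAt_exp _)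
  rw [hq0, Real.exp_log hW0] at ce
  have ch : C2At (fun y => - h y) x (-(ε / 4) • (x - c)) (-(ε / 4) • ContinuousLinearMap.id ℝ (Euc n)) := by
    refine (quad_C2At (-ε) c 0 (SymT.id.smul (-(ε / 4))) x).congr (fun y => ?_) ?_ rfl
    · simp only [quad, hh, inner_zero_left, smul_apply, ContinuousLinearMap.id_apply,
        real_inner_smul_left, real_inner_self_eq_norm_sq]
      ring
    · simp
  have cd := ce.add ch
  set P := W • p + -(ε / 4) • (x - c) with hP
  set Y := (W • X' + W • rk p + -(ε / 4) • ContinuousLinearMap.id ℝ (Euc n)) with hY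
  have hval : Real.exp (q x) + -h x = w := by rw [hq0, Real.exp_log hW0, hW]; ring
  have cl := cd.comp (F := Real.log) (F' := fun t => t⁻¹) (F'' := -(w ^ 2)⁻¹)
    (by rw [hval]; filter_upwards [lt_mem_nhds hw0] with t ht using Real.hasDerivAt_log ht.ne')
    (by rw [hval]; exact hasDerivAt_inv hw0.ne')
  rw [hval] at cl
  have hYs : SymT Y := ((hXs.smul _).add ((SymT.rk p).smul _)).add (SymT.id.smul _)
  have hJ' : Jet l x (w⁻¹ • P) (w⁻¹ • Y + -(w ^ 2)⁻¹ • rk P) := by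
    refine Jet.of_touch cl ((hYs.smul _).add ((SymT.rk _).smul _)) ?_ ?_
    · show Real.log (Real.exp (q x) + -h x) = _
      rw [hval, hw, Real.log_exp]
    · filter_upwards [hle] with y hy
      change Real.log (Real.exp (l y) + h y) ≤ q y at hy
      rw [Real.log_le_iff_le_exp (add_pos (Real.exp_pos _) (hhp y))] at hy
      rw [Real.le_log_iff_exp_le (by have := Real.exp_pos (l y); linarith)]
      linarith
  have hE := hl _ _ ((hYs.smul _).add ((SymT.rk _).smul _)) hJ'
  have hE' := EigL.smul_closure hΓ (t := w / W) (by positivity) hE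
  refine hE'.mono_closure hΓ (((Bop_symT hX).sub (SymT.id.smul _)).add (SymT.id.smul _)) fun v => ?_
  have hPn : ‖P‖ ^ 2 = W ^ 2 * ‖p‖ ^ 2 - 2 * W * (ε / 4) * ⟪p, x - c⟫_ℝ + (ε / 4) ^ 2 * ‖x - c‖ ^ 2 := by
    rw [hP, norm_add_sq_real]
    simp only [real_inner_smul_left, real_inner_smul_right, norm_smul, mul_pow, Real.norm_eq_abs,
      sq_abs]
    ring
  have key : ε / (24 * M) * (w * W) ≤ w * ε / 4 + 1 / 2 * (‖P‖ ^ 2 - w * W * ‖p‖ ^ 2) := by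
    have k1 : ε / (24 * M) * (w * W) ≤ w * ε / 8 := by
      have : ε / (24 * M) * W ≤ ε / 8 := by
        rw [div_mul_eq_mul_div, div_le_div_iff₀ (by positivity) (by norm_num)]
        nlinarith
      nlinarith
    have k2 : ⟪p, x - c⟫_ℝ ≤ ‖p‖ * ‖x - c‖ := real_inner_le_norm _ _
    have k3 : ε ≤ h x := by
      simp only [hh]
      have := sq_nonneg ‖x - c‖
      nlinarith
    rw [hPn]
    have hd0 := norm_nonneg (x - c)
    generalize ‖x - c‖ = d at *
    generalize ⟪p, x - c⟫_ℝ = s at *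
    generalize ‖p‖ = a at *
    have hhx := hhp x
    generalize h x = t at *
    have k4 : 0 ≤ w * ε / 8 + (1 / 2 * W * t * a ^ 2 - W * ε * (a * d) / 4 + ε ^ 2 * d ^ 2 / 32) := by
      have : 0 ≤ t * (w * ε / 8 + (1 / 2 * W * t * a ^ 2 - W * ε * (a * d) / 4 + ε ^ 2 * d ^ 2 / 32)) := by
        have e : t * (w * ε / 8 + (1 / 2 * W * t * a ^ 2 - W * ε * (a * d) / 4 + ε ^ 2 * d ^ 2 / 32))
          = 1 / 2 * W * (t * a - ε * d / 4) ^ 2 + w * ε * (t / 8 - ε * d ^ 2 / 32) := by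
          rw [hW]; ring
        rw [e]
        have : 0 ≤ t / 8 - ε * d ^ 2 / 32 := by
          have : d ^ 2 ≤ 1 := by nlinarith
          nlinarith
        positivity
      exact nonneg_of_mul_nonneg_right this hhx
    have k5 : W * ε * s ≤ W * ε * (a * d) := by gcongr
    have e : 1 / 2 * (W ^ 2 * a ^ 2 - 2 * W * (ε / 4) * s + (ε / 4) ^ 2 * d ^ 2 - w * W * a ^ 2)
      = 1 / 2 * W * t * a ^ 2 - W * ε * s / 4 + ε ^ 2 * d ^ 2 / 32 := by rw [hW]; ring
    linarith
  have hL : ⟪((w / W) • Bop (w⁻¹ • P) (w⁻¹ • Y + -(w ^ 2)⁻¹ • rk P)) v, v⟫_ℝ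
      = ⟪X v, v⟫_ℝ + τ * ‖v‖ ^ 2 + ⟪p, v⟫_ℝ ^ 2 - ε / (4 * W) * ‖v‖ ^ 2
        - 1 / 2 * ‖P‖ ^ 2 / (w * W) * ‖v‖ ^ 2 := by
    rw [smul_apply, real_inner_smul_left, Bop_inner]
    have e1 : ⟪Y v, v⟫_ℝ = W * (⟪X v, v⟫_ℝ + τ * ‖v‖ ^ 2) + W * ⟪p, v⟫_ℝ ^ 2 - ε / 4 * ‖v‖ ^ 2 := by
      simp only [hY, hX', add_apply, smul_apply, ContinuousLinearMap.id_apply, inner_add_left,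
        real_inner_smul_left, rk_apply, real_inner_self_eq_norm_sq, smul_add]
      ring
    simp only [add_apply, smul_apply, inner_add_left, real_inner_smul_left, rk_apply, e1, norm_smul,
      mul_pow, Real.norm_eq_abs, sq_abs]
    field_simp
    ring
  have hR : ⟪(Bop p X - (ε / (24 * M)) • ContinuousLinearMap.id ℝ (Euc n)
      + τ • ContinuousLinearMap.id ℝ (Euc n)) v, v⟫_ℝ
      = ⟪X v, v⟫_ℝ + τ * ‖v‖ ^ 2 + ⟪p, v⟫_ℝ ^ 2 - 1 / 2 * ‖p‖ ^ 2 * ‖v‖ ^ 2 - ε / (24 * M) * ‖v‖ ^ 2 := by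
    rw [add_apply, sub_apply, inner_add_left, inner_sub_left, Bop_inner]
    simp only [smul_apply, ContinuousLinearMap.id_apply, real_inner_smul_left, real_inner_self_eq_norm_sq]
    ring
  rw [hL, hR]
  have key2 : 1 / 2 * ‖p‖ ^ 2 + ε / (24 * M) ≤ ε / (4 * W) + 1 / 2 * ‖P‖ ^ 2 / (w * W) := by
    have e : ε / (4 * W) + 1 / 2 * ‖P‖ ^ 2 / (w * W) = (w * ε / 4 + 1 / 2 * ‖P‖ ^ 2) / (w * W) := by
      field_simp
    rw [e, le_div_iff₀ (by positivity)]
    linarith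
  have := mul_le_mul_of_nonneg_right key2 (sq_nonneg ‖v‖)
  linarith


theorem usc_log_exp {n : ℕ} {D : Set (Euc n)} {l h : Euc n → ℝ} (hl : UpperSemicontinuousOn l D)
    (hh : Continuous h) (hp : ∀ y, 0 < h y) :
    UpperSemicontinuousOn (fun y => Real.log (Real.exp (l y) + h y)) D := by
  have h1 : UpperSemicontinuousOn (fun y => Real.exp (l y) + h y) D :=
    (Real.continuous_exp.comp_upperSemicontinuousOn hl Real.exp_monotone).add
      hh.continuousOn.upperSemicontinuousOn
  intro x hx t ht
  rw [Real.log_lt_iff_lt_exp (add_pos (Real.exp_pos _) (hp x))] at ht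
  filter_upwards [h1 x hx _ ht] with y hy
  rwa [Real.log_lt_iff_lt_exp (add_pos (Real.exp_pos _) (hp y))]

theorem propC {n : ℕ} {Γ : Set (Fin n → ℝ)} (hΓ : CondC Γ) {c : Euc n} {lam R A : ℝ}
    (hl : 0 < lam) (hlR : lam < R) (hR : R ≤ 1) {lp m : Euc n → ℝ}
    (hlu : UpperSemicontinuousOn lp (closedBall c R)) (hmu : UpperSemicontinuousOn m (closedBall c R))
    (hlv : ∀ x ∈ closedBall c R, ∀ P Y, SymT Y → Jet lp x P Y → Psup Γ P Y)
    (hmv : ∀ x ∈ closedBall c R, ∀ P Y, SymT Y → Jet m x P Y → Psub Γ P Y)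
    (hA : ∀ x ∈ closedBall c R, |lp x| ≤ A)
    (hb1 : ∀ y, ‖y - c‖ = lam → lp y + m y ≤ 0)
    (hb2 : ∀ y, ‖y - c‖ = R → lp y + m (EuclideanGeometry.inversion c lam y) ≤ Real.log (R ^ 2 / lam ^ 2))
    {y : Euc n} (hy1 : lam ≤ ‖y - c‖) (hy2 : ‖y - c‖ ≤ R) :
    lp y + m (EuclideanGeometry.inversion c lam y) ≤ Real.log (‖y - c‖ ^ 2 / lam ^ 2) := by
  by_contra hcon
  push Not at hcon
  set I := EuclideanGeometry.inversion c lam with hI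
  set b : Euc n → ℝ := fun y => m (I y) - Real.log (‖y - c‖ ^ 2 / lam ^ 2) with hb
  set s := lp y + b y with hs
  have hs0 : 0 < s := by rw [hs]; simp only [hb]; linarith
  set ε := Real.exp (-A) * min 1 (s / 4) with hε
  have hε0 : 0 < ε := mul_pos (Real.exp_pos _) (lt_min one_pos (by linarith))
  set h : Euc n → ℝ := fun y => ε * (1 + ‖y - c‖ ^ 2 / 8) with hh
  have hhp : ∀ y, 0 < h y := fun y => by simp only [hh]; positivity
  set a : Euc n → ℝ := fun y => Real.log (Real.exp (lp y) + h y) with ha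
  set D : Set (Euc n) := {z | lam ≤ ‖z - c‖ ∧ ‖z - c‖ ≤ R} with hD
  set U : Set (Euc n) := {z | lam < ‖z - c‖ ∧ ‖z - c‖ < R} with hU
  have hDB : D ⊆ closedBall c R := fun z hz => by rw [mem_closedBall, dist_eq_norm]; exact hz.2
  have hnc : Continuous (fun z : Euc n => ‖z - c‖) := by fun_prop
  have hDcl : IsClosed D := (isClosed_le continuous_const hnc).inter (isClosed_le hnc continuous_const)
  have hDc : IsCompact D := (isCompact_closedBall c R).of_isClosed_subset hDcl hDB
  have hUo : IsOpen U := (isOpen_lt continuous_const hnc).inter (isOpen_lt hnc continuous_const)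
  have hUD : U ⊆ D := fun z hz => ⟨hz.1.le, hz.2.le⟩
  have hdist : ∀ z, ‖I z - c‖ = lam ^ 2 / ‖z - c‖ := fun z => by
    have := EuclideanGeometry.dist_inversion_center c z lam
    rwa [dist_eq_norm, dist_eq_norm] at this
  have hDne : ∀ z ∈ D, z ≠ c := fun z hz h => by
    have := hz.1
    rw [h, sub_self, norm_zero] at this; linarith
  have hID : ∀ z ∈ D, I z ∈ closedBall c R := fun z hz => by
    rw [mem_closedBall, dist_eq_norm, hdist, div_le_iff₀ (hl.trans_le hz.1)]
    have := hz.1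
    nlinarith
  have hau : UpperSemicontinuousOn a D := by
    refine usc_log_exp (hlu.mono hDB) ?_ hhp
    simp only [hh]; fun_prop
  have hbu : UpperSemicontinuousOn b D := by
    have h1 : UpperSemicontinuousOn (fun z => m (I z)) D := by
      intro z hz t ht
      have h2 := hmu (I z) (hID z hz) t ht
      have h3 : Tendsto I (𝓝[D] z) (𝓝[closedBall c R] (I z)) := by
        refine tendsto_nhdsWithin_iff.2 ⟨?_, ?_⟩
        · exact ((inversion_deriv (hDne z hz) lam).continuousAt.tendsto).mono_left nhdsWithin_le_nhds
        · filter_upwards [self_mem_nhdsWithin] with w hw using hID w hw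
      exact h3.eventually h2
    have h2 : ContinuousOn (fun z : Euc n => - Real.log (‖z - c‖ ^ 2 / lam ^ 2)) D := by
      refine ContinuousOn.neg (ContinuousOn.log (by fun_prop) fun z hz => ?_)
      have := norm_pos_iff.2 (sub_ne_zero.2 (hDne z hz))
      positivity
    exact (h1.add h2.upperSemicontinuousOn)
  have hale : ∀ z ∈ D, a z ≤ lp z + s / 2 := fun z hz => by
    have h1 : h z ≤ 2 * ε := by
      simp only [hh]
      have : ‖z - c‖ ^ 2 ≤ 1 := by nlinarith [norm_nonneg (z - c), hz.2]
      nlinarith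
    have h2 : ε ≤ Real.exp (lp z) * (s / 4) := by
      have h3 := neg_le_of_abs_le (hA z (hDB hz))
      calc ε ≤ Real.exp (-A) * (s / 4) := by rw [hε]; gcongr; exact min_le_right _ _
        _ ≤ _ := by gcongr
    simp only [ha]
    rw [Real.log_le_iff_le_exp (add_pos (Real.exp_pos _) (hhp z)), Real.exp_add]
    have h3 := Real.add_one_le_exp (s / 2)
    have h4 := Real.exp_pos (lp z)
    nlinarith
  have hage : a y ≥ lp y := by
    simp only [ha, ge_iff_le]
    rw [Real.le_log_iff_exp_le (add_pos (Real.exp_pos _) (hhp y))]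
    have := hhp y; linarith
  have hM : 0 < Real.exp A := Real.exp_pos _
  refine doubling_comp hΓ hDc hUo hUD hau hbu (κ := ε / (24 * Real.exp A)) (by positivity) ?_ ?_
    (xh := y) ⟨hy1, hy2⟩ ?_
  · intro x hx p X hX hJ
    have hxB := hDB (hUD hx)
    refine strict_pert hΓ (c := c) (hx.2.le.trans hR) hε0 (M := Real.exp A) ?_ ?_ (hlv x hxB) hX hJ
    · calc ε ≤ Real.exp (-A) * 1 := by rw [hε]; gcongr; exact min_le_left _ _
        _ ≤ _ := by rw [mul_one]; exact Real.exp_le_exp.2 (neg_le_of_abs_le (hA x hxB))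
    · exact Real.exp_le_exp.2 (le_of_abs_le (hA x hxB))
  · intro x hx p X hX hJ
    exact kelvin_jet hΓ (hDne x (hUD hx)) hl (hmv _ (hID x (hUD hx))) hX hJ
  · rintro x ⟨hxD, hxU⟩
    have h1 := hale x hxD
    have h2 : lp x + b x ≤ 0 := by
      by_cases hx : ‖x - c‖ = lam
      · have e : I x = x := EuclideanGeometry.inversion_of_mem_sphere (by
          rw [mem_sphere, dist_eq_norm, hx])
        have := hb1 x hx
        simp only [hb]
        rw [e, hx, div_self (by positivity), Real.log_one]; linarith
      · have hx' : ‖x - c‖ = R := by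
          by_contra h
          exact hxU ⟨lt_of_le_of_ne hxD.1 (Ne.symm hx), lt_of_le_of_ne hxD.2 h⟩
        have := hb2 x hx'
        simp only [hb]
        rw [hx']; linarith
    linarith


set_option maxHeartbeats 1000000 in
theorem lip_loc {n : ℕ} {Γ : Set (Fin n → ℝ)} (hΓ : CondC Γ) {lp m : Euc n → ℝ}
    (hlu : UpperSemicontinuousOn lp (ball 0 1)) (hmu : UpperSemicontinuousOn m (ball 0 1))
    (hlv : Vis (Psup Γ) (ball 0 1) lp) (hmv : Vis (Psub Γ) (ball 0 1) m)
    (heq : ∀ y ∈ ball (0 : Euc n) 1, y ≠ 0 → lp y + m y = 0) {x0 : Euc n} (hx0 : x0 ∈ ball (0 : Euc n) 1) :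
    ∃ ρ > 0, ∃ L ≥ 0, ∀ a ∈ ball x0 ρ, ∀ b ∈ ball x0 ρ, a ≠ b → lp b + m a ≤ L * ‖b - a‖ := by
  rw [mem_ball_zero_iff] at hx0
  set r2 := (1 - ‖x0‖) / 2 with hr2
  have hr0 : 0 < r2 := by rw [hr2]; linarith
  have hr1 : r2 ≤ 1 := by rw [hr2]; have := norm_nonneg x0; linarith
  have hsub : closedBall x0 r2 ⊆ ball 0 1 := fun z hz => by
    rw [mem_closedBall, dist_eq_norm] at hz
    rw [mem_ball_zero_iff]
    have := norm_le_norm_add_norm_sub' z x0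
    rw [hr2] at hz; linarith
  have hne : (closedBall x0 r2).Nonempty := ⟨x0, mem_closedBall_self hr0.le⟩
  have hcpt : IsCompact (closedBall x0 r2) := isCompact_closedBall _ _
  obtain ⟨A1, hA1⟩ : ∃ M, ∀ x ∈ closedBall x0 r2, lp x ≤ M := by
    obtain ⟨t, _, h⟩ := (hlu.mono hsub).exists_isMaxOn hne hcpt
    exact ⟨lp t, fun x hx => h hx⟩
  obtain ⟨A2, hA2⟩ : ∃ M, ∀ x ∈ closedBall x0 r2, m x ≤ M := by
    obtain ⟨t, _, h⟩ := (hmu.mono hsub).exists_isMaxOn hne hcpt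
    exact ⟨m t, fun x hx => h hx⟩
  set A := |A1| + |A2| + |lp 0| + 1 with hAd
  have hA0 : 0 < A := by positivity
  have hAm : ∀ x ∈ closedBall x0 r2, m x ≤ A := fun x hx => by
    have := hA2 x hx
    have := le_abs_self A2
    have := abs_nonneg A1; have := abs_nonneg (lp 0)
    rw [hAd]; linarith
  have hAl : ∀ x ∈ closedBall x0 r2, |lp x| ≤ A := fun x hx => by
    have h1 := hA1 x hx
    have h2 := le_abs_self A1; have h3 := le_abs_self A2
    have h4 := abs_nonneg A1; have h5 := abs_nonneg (lp 0); have h6 := abs_nonneg A2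
    rw [abs_le]
    refine ⟨?_, by rw [hAd]; linarith⟩
    by_cases hx : x = 0
    · have := neg_abs_le (lp 0)
      rw [hx, hAd]; linarith
    · have h7 := heq x (hsub ‹_›) hx
      have h8 := hA2 x ‹_›
      rw [hAd]; linarith
  set R := r2 / 4 with hRd
  have hR0 : 0 < R := by positivity
  have hR1 : R ≤ 1 := by rw [hRd]; linarith
  set ρ1 := R * Real.exp (-A) / 2 with hρ1
  have hρ0 : 0 < ρ1 := by positivity
  have hexp : Real.exp (-A) < 1 := by rw [← Real.exp_zero]; exact Real.exp_lt_exp.2 (by linarith)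
  have hρR : 2 * ρ1 < R := by rw [hρ1]; nlinarith
  have main : ∀ a ∈ ball x0 (ρ1 / 4), ∀ b ∈ ball x0 (ρ1 / 4), a ≠ b → ∀ ρ, ρ1 / 2 ≤ ρ → ρ ≤ ρ1 →
      ‖a - (ρ / ‖b - a‖) • (b - a)‖ ^ 2 ≠ ρ * (ρ + ‖b - a‖) →
      lp b + m a ≤ 2 / ρ1 * ‖b - a‖ := by
    intro a ha b hb hab ρ h1 h2 hc
    rw [mem_ball, dist_eq_norm] at ha hb
    have hd0 : 0 < ‖b - a‖ := norm_pos_iff.2 (sub_ne_zero.2 (Ne.symm hab))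
    have hd1 : ‖b - a‖ < ρ1 / 2 := by
      have : ‖b - a‖ ≤ ‖b - x0‖ + ‖a - x0‖ := by
        rw [show b - a = (b - x0) - (a - x0) by abel]; exact norm_sub_le _ _
      linarith
    set d := ‖b - a‖ with hd
    set c := a - (ρ / d) • (b - a) with hcd
    have hρp : 0 < ρ := by linarith
    set lam := Real.sqrt (ρ * (ρ + d)) with hlam
    have hlam2 : lam ^ 2 = ρ * (ρ + d) := Real.sq_sqrt (by positivity)
    have hlam0 : 0 < lam := Real.sqrt_pos.2 (by positivity)
    have hbc : b - c = ((ρ + d) / d) • (b - a) := by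
      rw [hcd]
      have : ((ρ + d) / d) = ρ / d + 1 := by field_simp
      rw [this]; module
    have hbcn : ‖b - c‖ = ρ + d := by
      rw [hbc, norm_smul, ← hd, Real.norm_of_nonneg (by positivity)]; field_simp
    have hlamR2 : lam ^ 2 ≤ R ^ 2 * Real.exp (-A) ^ 2 := by
      rw [hlam2]
      have : R ^ 2 * Real.exp (-A) ^ 2 = 4 * ρ1 ^ 2 := by rw [hρ1]; ring
      rw [this]; nlinarith
    have hlamR : lam < R := by
      have h3 : lam ≤ R * Real.exp (-A) := by
        refine (pow_le_pow_iff_left₀ hlam0.le (by positivity) two_ne_zero).1 ?_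
        rw [mul_pow]; exact hlamR2
      nlinarith
    have hcx : ‖c - x0‖ ≤ 2 * R := by
      have e : c - x0 = (a - x0) - (ρ / d) • (b - a) := by rw [hcd]; abel
      rw [e]
      refine (norm_sub_le _ _).trans ?_
      rw [norm_smul, ← hd, Real.norm_of_nonneg (by positivity)]
      have : ρ / d * d = ρ := by field_simp
      linarith
    have hcB : closedBall c R ⊆ closedBall x0 r2 := fun z hz => by
      rw [mem_closedBall, dist_eq_norm] at hz ⊢
      have : ‖z - x0‖ ≤ ‖z - c‖ + ‖c - x0‖ := norm_sub_le_norm_sub_add_norm_sub _ _ _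
      rw [hRd] at *; linarith
    have hIb : EuclideanGeometry.inversion c lam b = a := by
      rw [EuclideanGeometry.inversion, dist_eq_norm, hbcn, div_pow, hlam2, vsub_eq_sub, hbc,
        vadd_eq_add, smul_smul, hcd]
      have : ρ * (ρ + d) / (ρ + d) ^ 2 * ((ρ + d) / d) = ρ / d := by field_simp
      rw [this]; abel
    have hdist : ∀ z, ‖EuclideanGeometry.inversion c lam z - c‖ = lam ^ 2 / ‖z - c‖ := fun z => by
      have := EuclideanGeometry.dist_inversion_center c z lam
      rwa [dist_eq_norm, dist_eq_norm] at this
    have := propC hΓ (c := c) (A := A) hlam0 hlamR hR1 (hlu.mono (hcB.trans hsub))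
      (hmu.mono (hcB.trans hsub)) (fun x hx => hlv x (hsub (hcB hx))) (fun x hx => hmv x (hsub (hcB hx)))
      (fun x hx => hAl x (hcB hx)) (fun y hy => ?_) (fun y hy => ?_) (y := b) ?_ ?_
    · rw [hIb, hbcn, hlam2] at this
      refine this.trans ?_
      have e : (ρ + d) ^ 2 / (ρ * (ρ + d)) = 1 + d / ρ := by field_simp
      rw [e]
      have h3 := Real.log_le_sub_one_of_pos (show 0 < 1 + d / ρ by positivity)
      have h4 : d / ρ ≤ 2 / ρ1 * d := by
        rw [div_mul_eq_mul_div, div_le_div_iff₀ hρp hρ0]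
        nlinarith
      linarith
    · have hyB : y ∈ closedBall c R := by rw [mem_closedBall, dist_eq_norm, hy]; exact hlamR.le
      refine (heq y (hsub (hcB hyB)) fun h0 => hc ?_).le
      rw [← hlam2, ← hy, h0, zero_sub, norm_neg]
    · have hyB : y ∈ closedBall c R := by rw [mem_closedBall, dist_eq_norm, hy]
      have hIB : EuclideanGeometry.inversion c lam y ∈ closedBall c R := by
        rw [mem_closedBall, dist_eq_norm, hdist, hy, div_le_iff₀ hR0]
        nlinarith
      have h3 := le_of_abs_le (hAl y (hcB hyB))
      have h4 := hAm _ (hcB hIB)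
      rw [Real.le_log_iff_exp_le (by positivity), le_div_iff₀ (by positivity)]
      have h5 : Real.exp (lp y + m (EuclideanGeometry.inversion c lam y)) ≤ Real.exp (A + A) :=
        Real.exp_le_exp.2 (by linarith)
      calc _ ≤ Real.exp (A + A) * (R ^ 2 * Real.exp (-A) ^ 2) := by gcongr
        _ = R ^ 2 := by
          rw [Real.exp_add, Real.exp_neg]
          have := Real.exp_pos A
          field_simp
    · rw [hbcn]
      refine (pow_le_pow_iff_left₀ hlam0.le (by positivity) two_ne_zero).1 ?_
      rw [hlam2]; nlinarith
    · rw [hbcn]; linarith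
  refine ⟨ρ1 / 4, by positivity, 2 / ρ1, by positivity, fun a ha b hb hab => ?_⟩
  by_cases hc1 : ‖a - (ρ1 / ‖b - a‖) • (b - a)‖ ^ 2 = ρ1 * (ρ1 + ‖b - a‖)
  · refine main a ha b hb hab (ρ1 / 2) le_rfl (by linarith) fun hc2 => ?_
    have hd0 : 0 < ‖b - a‖ := norm_pos_iff.2 (sub_ne_zero.2 (Ne.symm hab))
    rw [norm_sub_sq_real, norm_smul, real_inner_smul_right, mul_pow, Real.norm_eq_abs, sq_abs] at hc1 hc2
    set d := ‖b - a‖ with hd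
    have e1 : (ρ1 / d) ^ 2 * d ^ 2 = ρ1 ^ 2 := by field_simp
    have e2 : (ρ1 / 2 / d) ^ 2 * d ^ 2 = ρ1 ^ 2 / 4 := by field_simp; norm_num
    have e3 : ρ1 / 2 / d * ⟪a, b - a⟫_ℝ = (ρ1 / d * ⟪a, b - a⟫_ℝ) / 2 := by ring
    rw [e1] at hc1
    rw [e2, e3] at hc2
    have h3 : ‖a‖ ^ 2 = 0 := by nlinarith
    have h4 : a = 0 := by simpa using h3
    rw [h4] at hc1
    simp at hc1
    nlinarith
  · exact main a ha b hb hab ρ1 (by linarith) le_rfl hc1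


theorem Jet.congr {n : ℕ} {m m' : Euc n → ℝ} {x p : Euc n} {X : Euc n →L[ℝ] Euc n}
    (h : m =ᶠ[𝓝 x] m') (hJ : Jet m x p X) : Jet m' x p X := by
  intro τ hτ
  filter_upwards [hJ τ hτ, h] with y h1 h2
  rw [← h2, ← h.self_of_nhds]; exact h1

theorem vis_ext {n : ℕ} {Pr : Euc n → (Euc n →L[ℝ] Euc n) → Prop} (hcl : PClosed Pr) {δ : ℝ}
    (hδ : 0 < δ) (hH : Hyp0 Pr δ) {m m' : Euc n → ℝ} (hm : Vis Pr (ball (0 : Euc n) 1 \ {0}) m)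
    (hmc : ContinuousOn m (ball (0 : Euc n) 1 \ {0})) (he : ∀ y, y ≠ 0 → m' y = m y)
    (happ : ∀ ε > 0, ∃ᶠ y in 𝓝[≠] (0 : Euc n), m' 0 - ε < m' y) :
    Vis Pr (ball (0 : Euc n) 1) m' := by
  have h1 : Vis Pr (ball (0 : Euc n) 1 \ {0}) m' := fun x hx p X hX hJ => by
    refine hm x hx p X hX (hJ.congr ?_)
    filter_upwards [isOpen_ne.mem_nhds hx.2] with y hy using he y hy
  intro x hx p X hX hJ
  by_cases h0 : x = 0
  · subst h0
    exact ext_zero hcl hδ hH h1 (hmc.congr fun y hy => he y hy.2) happ hX hJ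
  · exact h1 x ⟨hx, h0⟩ p X hX hJ

theorem ext_usc {n : ℕ} [(𝓝[≠] (0 : Euc n)).NeBot] {Pr : Euc n → (Euc n →L[ℝ] Euc n) → Prop}
    (hcl : PClosed Pr) {δ : ℝ}
    (hδ : 0 < δ) (hH : Hyp0 Pr δ) {m : Euc n → ℝ} (hm : Vis Pr (ball (0 : Euc n) 1 \ {0}) m)
    (hmc : ContinuousOn m (ball (0 : Euc n) 1 \ {0}))
    {M M' : ℝ} (hb : ∀ᶠ y in 𝓝[≠] (0 : Euc n), m y ≤ M) (hb' : ∀ᶠ y in 𝓝[≠] (0 : Euc n), M' ≤ m y) :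
    ∃ m' : Euc n → ℝ, (∀ y, y ≠ 0 → m' y = m y) ∧ UpperSemicontinuousOn m' (ball (0 : Euc n) 1) ∧
      Vis Pr (ball (0 : Euc n) 1) m' := by
  classical
  set L := limsup m (𝓝[≠] (0 : Euc n)) with hL
  have hbd : IsBoundedUnder (· ≤ ·) (𝓝[≠] (0 : Euc n)) m := ⟨M, by simpa using hb⟩
  have hbd' : IsBoundedUnder (· ≥ ·) (𝓝[≠] (0 : Euc n)) m := ⟨M', by simpa using hb'⟩
  have hcob : IsCoboundedUnder (· ≤ ·) (𝓝[≠] (0 : Euc n)) m := hbd'.isCoboundedUnder_le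
  have he : ∀ y, y ≠ 0 → Function.update m 0 L y = m y := fun y hy => Function.update_of_ne hy _ _
  refine ⟨Function.update m 0 L, he, ?_, ?_⟩
  · intro x hx t ht
    by_cases h0 : x = 0
    · subst h0
      rw [Function.update_self] at ht
      have h1 := eventually_lt_of_limsup_lt ht hbd
      refine nhdsWithin_le_nhds ?_
      have h2 := eventually_nhdsWithin_iff.1 h1
      filter_upwards [h2] with y hy
      by_cases hy0 : y = 0
      · subst hy0; rwa [Function.update_self]
      · rw [he y hy0]; exact hy hy0
    · rw [he x h0] at ht
      have hx' : x ∈ ball (0 : Euc n) 1 \ {0} := ⟨hx, h0⟩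
      have hop : IsOpen (ball (0 : Euc n) 1 \ {0}) := isOpen_ball.sdiff isClosed_singleton
      have h1 := (hmc.continuousAt (hop.mem_nhds hx')).eventually (gt_mem_nhds ht)
      refine nhdsWithin_le_nhds ?_
      filter_upwards [h1, isOpen_ne.mem_nhds h0] with y hy hy0
      rw [he y hy0]; exact hy
  · refine vis_ext hcl hδ hH hm hmc he fun ε hε => ?_
    have h1 := frequently_lt_of_lt_limsup hcob (show L - ε < limsup m (𝓝[≠] (0 : Euc n)) by linarith)
    rw [Function.update_self]
    refine (h1.and_eventually self_mem_nhdsWithin).mono fun y hy => ?_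
    rw [he y hy.2]; exact hy.1

theorem removable_main {n : ℕ} (hn : 3 ≤ n) (Γ : Set (Fin n → ℝ)) (hΓ : CondC Γ)
    (hstar : lamStar n ∉ closure Γ) (hstar' : (fun i => -(lamStar n i)) ∈ Γ)
    (u : Euc n → ℝ) (hpos : ∀ x ∈ ball (0 : Euc n) 1 \ {0}, 0 < u x)
    (hcont : ContinuousOn u (ball (0 : Euc n) 1 \ {0}))
    (hsup : SupersolU Γ (ball (0 : Euc n) 1 \ {0}) u) (hsub : SubsolU Γ (ball (0 : Euc n) 1 \ {0}) u)
    (hlittleo : u =o[𝓝[ball (0 : Euc n) 1 \ {0}] (0 : Euc n)] fun x => ‖x‖ ^ ((2 : ℝ) - n)) :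
    ∃ w : Euc n → ℝ, Set.EqOn w u (ball (0 : Euc n) 1 \ {0}) ∧ (∀ x ∈ ball (0 : Euc n) 1, 0 < w x) ∧
      (∀ x ∈ ball (0 : Euc n) 1, ∃ K : ℝ≥0, ∃ s ∈ 𝓝[ball (0 : Euc n) 1] x, LipschitzOnWith K w s) ∧
      SupersolU Γ (ball (0 : Euc n) 1) w ∧ SubsolU Γ (ball (0 : Euc n) 1) w := by
  classical
  have hn2 := nsub_pos hn
  have : Nonempty (Fin n) := ⟨⟨0, by omega⟩⟩
  have : Nontrivial (Euc n) := by unfold Euc; infer_instance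
  have : (𝓝[≠] (0 : Euc n)).NeBot := Module.punctured_nhds_neBot ℝ (Euc n) 0
  obtain ⟨δ, hδ, hδ1, hG1, hG2⟩ := exists_delta hΓ hstar hstar'
  have hop : IsOpen (ball (0 : Euc n) 1 \ {0}) := isOpen_ball.sdiff isClosed_singleton
  have hV1 := vis_sup hn hΓ hop hpos hsup
  have hV2 := vis_sub hn hΓ hop hpos hsub
  have hc1 : ContinuousOn (lg u) (ball (0 : Euc n) 1 \ {0}) := by
    unfold lg
    exact continuousOn_const.mul (hcont.log fun x hx => (hpos x hx).ne')
  have hc2 : ContinuousOn (fun x => -lg u x) (ball (0 : Euc n) 1 \ {0}) := hc1.neg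
  have hgrow : ∀ C : ℝ, ∀ᶠ y in 𝓝[≠] (0 : Euc n), -lg u y + 2 * Real.log ‖y‖ ≤ C := by
    intro C
    have hmem : ball (0 : Euc n) 1 \ {0} ∈ 𝓝[≠] (0 : Euc n) := by
      rw [Set.sdiff_eq]
      exact inter_mem (nhdsWithin_le_nhds (ball_mem_nhds _ one_pos)) self_mem_nhdsWithin
    have h1 := (hlittleo.mono (nhdsWithin_le_of_mem hmem)).bound
      (Real.exp_pos (C * (((n : ℝ) - 2) / 2)))
    filter_upwards [h1, hmem] with y hy hyB
    have hu := hpos y hyB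
    have hy0 : 0 < ‖y‖ := norm_pos_iff.2 hyB.2
    rw [Real.norm_of_nonneg hu.le, Real.norm_of_nonneg (by positivity)] at hy
    have h2 := Real.log_le_log hu hy
    rw [Real.log_mul (by positivity) (by positivity), Real.log_exp, Real.log_rpow hy0] at h2
    have h3 := mul_le_mul_of_nonneg_left h2 (show 0 ≤ 2 / ((n : ℝ) - 2) by positivity)
    have e : 2 / ((n : ℝ) - 2) * (C * (((n : ℝ) - 2) / 2) + (2 - (n : ℝ)) * Real.log ‖y‖)
      = C - 2 * Real.log ‖y‖ := by field_simp; ring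
    rw [e] at h3
    unfold lg
    linarith
  obtain ⟨M1, hM1⟩ := sphere_bdd (r := 1 / 2) (by norm_num) (by norm_num) hc1
  obtain ⟨M2, hM2⟩ := sphere_bdd (r := 1 / 2) (by norm_num) (by norm_num) hc2
  have hnear : ∀ᶠ y in 𝓝[≠] (0 : Euc n), y ≠ 0 ∧ ‖y‖ ≤ 1 / 2 := by
    refine inter_mem self_mem_nhdsWithin (nhdsWithin_le_nhds ?_)
    filter_upwards [ball_mem_nhds (0 : Euc n) (show (0 : ℝ) < 1 / 2 by norm_num)] with y hy
    exact (mem_ball_zero_iff.1 hy).le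
  have hB1 : ∀ᶠ y in 𝓝[≠] (0 : Euc n), lg u y ≤ M1 := by
    filter_upwards [hnear] with y hy
    exact bound_sup hn hΓ hδ hG1 hV1 hc1 (by norm_num) hM1 y hy.1 hy.2
  have hB2 : ∀ᶠ y in 𝓝[≠] (0 : Euc n), -lg u y ≤ M2 := by
    filter_upwards [hnear] with y hy
    exact bound_sub hn hΓ hδ hG2 hV2 hc2 hgrow (by norm_num) hM2 y hy.1 hy.2
  have hH1 := hyp0_sup hn hΓ hG1
  have hH2 := hyp0_sub hn hΓ hG2
  have hcl1 := Psup_closed hΓ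
  have hcl2 := Psub_closed hΓ
  obtain ⟨lp, hlp, hlu, hlv⟩ := ext_usc hcl1 hδ hH1 hV1 hc1 hB1
    (hB2.mono fun y hy => show -M2 ≤ _ by linarith)
  obtain ⟨mm, hmm, hmu, hmv⟩ := ext_usc hcl2 hδ hH2 hV2 hc2 hB2
    (hB1.mono fun y hy => show -M1 ≤ _ by linarith)
  have hlip : ∀ x0 ∈ ball (0 : Euc n) 1, ∃ ρ > 0, ∃ K : ℝ≥0,
      LipschitzOnWith K (lg u) (ball x0 ρ \ {0}) := by
    intro x0 hx0
    obtain ⟨ρ, hρ, L, hL, h⟩ := lip_loc hΓ hlu hmu hlv hmv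
      (fun y hy hy0 => by rw [hlp y hy0, hmm y hy0]; ring) hx0
    refine ⟨ρ, hρ, ⟨L, hL⟩, LipschitzOnWith.of_dist_le_mul fun a ha b hb => ?_⟩
    have key : ∀ a ∈ ball x0 ρ \ {0}, ∀ b ∈ ball x0 ρ \ {0}, lg u b - lg u a ≤ L * ‖b - a‖ := by
      intro a ha b hb
      by_cases hab : a = b
      · subst hab; simp
      have := h a ha.1 b hb.1 hab
      rw [hlp b hb.2, hmm a ha.2] at this
      linarith
    rw [Real.dist_eq, dist_eq_norm, abs_le]
    have h1 := key a ha b hb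
    have h2 := key b hb a ha
    rw [norm_sub_rev] at h1
    constructor
    · show -(L * ‖a - b‖) ≤ _
      linarith
    · exact h2
  obtain ⟨ρ0, hρ0, K0, hK0⟩ := hlip 0 (mem_ball_self one_pos)
  obtain ⟨g, hg, hge⟩ := hK0.extend_real
  set v : Euc n → ℝ := Function.update (lg u) 0 (g 0) with hv
  have hve : ∀ y, y ≠ 0 → v y = lg u y := fun y hy => Function.update_of_ne hy _ _
  have hv0 : ∀ y ∈ ball (0 : Euc n) ρ0, v y = g y := fun y hy => by
    by_cases h0 : y = 0
    · subst h0; rw [hv, Function.update_self]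
    · rw [hve y h0]; exact hge ⟨hy, h0⟩
  have hvl : ∀ x0 ∈ ball (0 : Euc n) 1, ∃ s ∈ 𝓝 x0, ∃ K : ℝ≥0, LipschitzOnWith K v s := by
    intro x0 hx0
    by_cases h0 : x0 = 0
    · subst h0
      refine ⟨ball 0 ρ0, ball_mem_nhds _ hρ0, K0, ?_⟩
      intro a ha b hb
      rw [hv0 a ha, hv0 b hb]; exact hg a b
    · obtain ⟨ρ, hρ, K, hK⟩ := hlip x0 hx0
      refine ⟨ball x0 ρ \ {0}, (isOpen_ball.sdiff isClosed_singleton).mem_nhds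
        ⟨mem_ball_self hρ, h0⟩, K, ?_⟩
      intro a ha b hb
      rw [hve a ha.2, hve b hb.2]; exact hK ha hb
  have hvc : ∀ x0 ∈ ball (0 : Euc n) 1, ContinuousAt v x0 := fun x0 hx0 => by
    obtain ⟨s, hs, K, hK⟩ := hvl x0 hx0
    exact hK.continuousOn.continuousAt hs
  have hvc0 := hvc 0 (mem_ball_self one_pos)
  have hW1 : Vis (Psup Γ) (ball (0 : Euc n) 1) v := by
    refine vis_ext hcl1 hδ hH1 hV1 hc1 hve fun ε hε => Eventually.frequently ?_
    exact nhdsWithin_le_nhds (hvc0.eventually (lt_mem_nhds (by linarith)))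
  have hW2 : Vis (Psub Γ) (ball (0 : Euc n) 1) (fun y => -v y) := by
    refine vis_ext hcl2 hδ hH2 hV2 hc2 (fun y hy => by rw [hve y hy])
      fun ε hε => Eventually.frequently ?_
    exact nhdsWithin_le_nhds (hvc0.neg.eventually (lt_mem_nhds (by show _ < -v 0; linarith)))
  set F : ℝ → ℝ := fun t => Real.exp (-(((n : ℝ) - 2) / 2) * t) with hF
  have hlgw : lg (fun x => F (v x)) = v := by
    funext x
    simp only [lg, hF, Real.log_exp]
    field_simp
  have hwp : ∀ x, 0 < F (v x) := fun x => Real.exp_pos _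
  refine ⟨fun x => F (v x), ?_, fun x _ => hwp x, ?_, ?_, ?_⟩
  · intro x hx
    simp only [hF]
    rw [hve x hx.2, exp_lg hn (hpos x hx)]
  · intro x hx
    have hFc : ContDiff ℝ 1 F := by simp only [hF]; fun_prop
    obtain ⟨K', t, ht, hK'⟩ := hFc.locallyLipschitz (v x)
    obtain ⟨s, hs, K, hK⟩ := hvl x hx
    refine ⟨K' * K, s ∩ v ⁻¹' t, nhdsWithin_le_nhds (inter_mem hs (hvc x hx ht)), ?_⟩
    exact hK'.comp (hK.mono inter_subset_left) fun y hy => hy.2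
  · intro x hx φ hφ hφp hφx hle
    rw [isOpen_ball.nhdsWithin_eq hx] at hle
    refine sup_of_vis hn hΓ (Eventually.of_forall hwp) (fun p X hX hJ => ?_) hφ hφp hφx hle
    rw [hlgw] at hJ
    exact hW1 x hx p X hX hJ
  · intro x hx φ hφ hφp hφx hle
    rw [isOpen_ball.nhdsWithin_eq hx] at hle
    refine sub_of_vis hn hΓ (Eventually.of_forall hwp) (fun p X hX hJ => ?_) hφ hφp hφx hle
    rw [hlgw] at hJ
    exact hW2 x hx p X hX hJ

end Helpers

/-- **Removability of isolated singularities** (Theorem 1.18): for `n ≥ 3` and a cone `Γ`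
satisfying condition (C) with `λ* ∉ closure Γ` and `-λ* ∈ Γ`, every positive continuous
viscosity solution `u` of `λ(A^u) ∈ ∂Γ` in `B ∖ {0}` with `u(x) = o(|x|^{2-n})` as `x → 0`
extends to a positive locally Lipschitz viscosity solution on all of `B`. -/
theorem removable_singularity
    {n : ℕ} (hn : 3 ≤ n) (Γ : Set (Fin n → ℝ)) (hΓ : CondC Γ)
    (hstar : lamStar n ∉ closure Γ) (hstar' : (fun i => -(lamStar n i)) ∈ Γ)
    (B : Set (Euc n)) (hB : B = Metric.ball (0 : Euc n) 1)
    (u : Euc n → ℝ) (hpos : ∀ x ∈ B \ {0}, 0 < u x)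
    (hcont : ContinuousOn u (B \ {0}))
    (hsup : SupersolU Γ (B \ {0}) u) (hsub : SubsolU Γ (B \ {0}) u)
    (hlittleo : u =o[𝓝[B \ {0}] (0 : Euc n)] fun x => ‖x‖ ^ ((2 : ℝ) - n)) :
    ∃ w : Euc n → ℝ, Set.EqOn w u (B \ {0}) ∧ (∀ x ∈ B, 0 < w x) ∧
      (∀ x ∈ B, ∃ K : ℝ≥0, ∃ s ∈ 𝓝[B] x, LipschitzOnWith K w s) ∧
      SupersolU Γ B w ∧ SubsolU Γ B w := by
  subst hB
  exact removable_main hn Γ hΓ hstar hstar' u hpos hcont hsup hsub hlittleo
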